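/- Let Q be a finite acyclic quiver, 𝒬• = (Q¹,…,Q^ℓ) an admissible, ordered, Dynkin subquiver partition, β₁,…,β_r a Reineke order on Φ₊(𝒬•) with chosen vertices i(u) satisfying β_u(i(u)) = 1, γ a dimension vector, and m = (m₁,…,m_r) a 𝒬•-partition of γ. Then for all f_u ∈ 𝒜_{β_u,m_u} (u = 1,…,r), writing f_u = f_u(ω_{i(u),1},…,ω_{i(u),m_u}), one has ι*_m(f₁ * f₂ * ⋯ * f_r) = f₁(t_{1,1},…,t_{1,m₁}) · f₂(t_{2,1},…,t_{2,m₂}) ⋯ f_r(t_{r,1},…,t_{r,m_r}) · g_m, where g_m := ι*_m((1 ∈ ℋ_{m₁β₁}) * ⋯ * (1 ∈ ℋ_{m_rβ_r})) is a nonzero polynomial in the variables t_{u,v}, independent of f₁,…,f_r. -/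

import Mathlib

open MvPolynomial
open scoped Classical

/-- A finite quiver with vertex set `Fin n`: a finite type of arrows together with
head and tail maps. -/
structure FinQuiver (n : ℕ) where
  Arr : Type
  [fintypeArr : Fintype Arr]
  hd : Arr → Fin n
  tl : Arr → Fin n

attribute [instance] FinQuiver.fintypeArr

variable {n : ℕ}

/-- `Q` is acyclic: there is no oriented cycle, i.e. no path
`a₁, …, a_{k+1}` (with `hd aₘ = tl aₘ₊₁`) whose final head equals its initial tail. -/
def FinQuiver.Acyclic (Q : FinQuiver n) : Prop :=
  ∀ (k : ℕ) (c : Fin (k + 1) → Q.Arr),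
    (∀ m : Fin k, Q.hd (c m.castSucc) = Q.tl (c m.succ)) →
    Q.hd (c (Fin.last k)) ≠ Q.tl (c 0)

/-- The Euler form `χ_Q` of the quiver `Q`. -/
def FinQuiver.euler (Q : FinQuiver n) (α β : Fin n → ℕ) : ℤ :=
  ∑ i : Fin n, (α i : ℤ) * β i - ∑ a : Q.Arr, (α (Q.tl a) : ℤ) * β (Q.hd a)

/-- The opposite antisymmetrization `⟨α,β⟩ = χ_Q(β,α) − χ_Q(α,β)`. -/
def FinQuiver.lam (Q : FinQuiver n) (α β : Fin n → ℕ) : ℤ :=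
  Q.euler β α - Q.euler α β

/-- The polynomial ring in the variables `ω_{i,j}`, `i ∈ Q₀`, `j ∈ ℕ` (0-indexed). -/
abbrev PolyQ (n : ℕ) := MvPolynomial (Fin n × ℕ) ℚ

/-- The permutation of the variables at vertex `i` induced by a permutation of `ℕ`. -/
def vertexPerm (i : Fin n) (σ : Equiv.Perm ℕ) : Fin n × ℕ → Fin n × ℕ :=
  fun p => if p.1 = i then (i, σ p.2) else p

/-- `f` is, for each vertex `i`, symmetric in the variables `ω_{i,0},…,ω_{i,γ i − 1}`. -/
def SymmIn (γ : Fin n → ℕ) (f : PolyQ n) : Prop :=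
  ∀ (i : Fin n) (σ : Equiv.Perm ℕ),
    (∀ j : ℕ, σ j ≠ j → j < γ i) → rename (vertexPerm i σ) f = f

lemma vars_smul_subset (c : ℚ) (f : PolyQ n) : (c • f).vars ⊆ f.vars := by
  rw [MvPolynomial.smul_eq_C_mul]
  refine (MvPolynomial.vars_mul _ _).trans ?_
  simp [MvPolynomial.vars_C]

/-- `ℋ_γ`: polynomials using only the variables `ω_{i,j}`, `j < γ i`, which are
symmetric at each vertex.  A `ℚ`-submodule of `PolyQ n`. -/
noncomputable def Hspace (γ : Fin n → ℕ) : Submodule ℚ (PolyQ n) where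
  carrier := {f | (∀ p ∈ f.vars, p.2 < γ p.1) ∧ SymmIn γ f}
  add_mem' := by
    rintro f g ⟨hf1, hf2⟩ ⟨hg1, hg2⟩
    refine ⟨fun p hp => ?_, fun i σ hσ => ?_⟩
    · rcases Finset.mem_union.mp (MvPolynomial.vars_add_subset f g hp) with h | h
      exacts [hf1 p h, hg1 p h]
    · rw [map_add, hf2 i σ hσ, hg2 i σ hσ]
  zero_mem' := by
    refine ⟨fun p hp => ?_, fun i σ hσ => map_zero _⟩
    simp [MvPolynomial.vars_0] at hp
  smul_mem' := by
    rintro c f ⟨hf1, hf2⟩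
    refine ⟨fun p hp => hf1 p (vars_smul_subset c f hp), fun i σ hσ => ?_⟩
    rw [map_smul, hf2 i σ hσ]

/-- Polynomials all of whose variables sit at vertex `i`. -/
noncomputable def onlyVertex (i : Fin n) : Submodule ℚ (PolyQ n) where
  carrier := {f | ∀ p ∈ f.vars, p.1 = i}
  add_mem' := by
    intro f g hf hg p hp
    rcases Finset.mem_union.mp (MvPolynomial.vars_add_subset f g hp) with h | h
    exacts [hf p h, hg p h]
  zero_mem' := by
    intro p hp
    simp [MvPolynomial.vars_0] at hp
  smul_mem' := by
    intro c f hf p hp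
    exact hf p (vars_smul_subset c f hp)

/-- `𝒜_{β,m}`: the subspace of `ℋ_{m·β}` of polynomials depending only on the
variables `ω_{i,0},…,ω_{i,m−1}` at the distinguished vertex `i`. -/
noncomputable def Aspace (β : Fin n → ℕ) (i : Fin n) (m : ℕ) : Submodule ℚ (PolyQ n) :=
  Hspace (fun v => m * β v) ⊓ onlyVertex i

/-- Substitute for the `j`-th variable at vertex `i` the variable `ω_{i,s}` where `s`
is the `j`-th element of `T i` in increasing order. -/
noncomputable def substAlong (T : Fin n → Finset ℕ) : PolyQ n →ₐ[ℚ] PolyQ n :=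
  aeval fun p : Fin n × ℕ => X (p.1, ((T p.1).sort (· ≤ ·)).getD p.2 0)

/-- The index set of the Kontsevich–Soibelman localization sum:
for each vertex, a `γ₁ i`-element subset of `{0,…,γ₁ i + γ₂ i − 1}`. -/
def shuffles (γ₁ γ₂ : Fin n → ℕ) : Finset (Fin n → Finset ℕ) :=
  Fintype.piFinset fun i => (Finset.range (γ₁ i + γ₂ i)).powerset.filter fun s => s.card = γ₁ i

def shuffleCompl (γ₁ γ₂ : Fin n → ℕ) (S : Fin n → Finset ℕ) : Fin n → Finset ℕ :=
  fun i => Finset.range (γ₁ i + γ₂ i) \ S i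

/-- The numerator factor attached to the arrow `a`:
`∏_{j' ∈ S̄_{h a}} ∏_{j ∈ S_{t a}} (ω_{h a, j'} − ω_{t a, j})`. -/
noncomputable def arrowFactor (Q : FinQuiver n) (γ₁ γ₂ : Fin n → ℕ)
    (S : Fin n → Finset ℕ) (a : Q.Arr) : PolyQ n :=
  ∏ j' ∈ shuffleCompl γ₁ γ₂ S (Q.hd a), ∏ j ∈ S (Q.tl a),
    (X (Q.hd a, j') - X (Q.tl a, j))

noncomputable def interactionNum (Q : FinQuiver n) (γ₁ γ₂ : Fin n → ℕ)
    (S : Fin n → Finset ℕ) : PolyQ n :=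
  ∏ a : Q.Arr, arrowFactor Q γ₁ γ₂ S a

noncomputable def interactionDen (γ₁ γ₂ : Fin n → ℕ) (S : Fin n → Finset ℕ) : PolyQ n :=
  ∏ i : Fin n, ∏ j' ∈ shuffleCompl γ₁ γ₂ S i, ∏ j ∈ S i, (X (i, j') - X (i, j))

/-- The Kontsevich–Soibelman localization sum, an element of the field of rational
functions (the fraction field of `PolyQ n`). -/
noncomputable def cohaMulRat (Q : FinQuiver n) (γ₁ γ₂ : Fin n → ℕ) (f₁ f₂ : PolyQ n) :
    FractionRing (PolyQ n) :=
  ∑ S ∈ shuffles γ₁ γ₂,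
    algebraMap (PolyQ n) (FractionRing (PolyQ n))
        (substAlong S f₁ * substAlong (shuffleCompl γ₁ γ₂ S) f₂ * interactionNum Q γ₁ γ₂ S) /
      algebraMap (PolyQ n) (FractionRing (PolyQ n)) (interactionDen γ₁ γ₂ S)

/-- The CoHA product `f₁ * f₂`: the unique polynomial representing the localization
sum (and `0` if the sum were not a polynomial, which never happens). -/
noncomputable def cohaMul (Q : FinQuiver n) (γ₁ γ₂ : Fin n → ℕ) (f₁ f₂ : PolyQ n) : PolyQ n :=
  if h : ∃ P : PolyQ n,
      algebraMap (PolyQ n) (FractionRing (PolyQ n)) P = cohaMulRat Q γ₁ γ₂ f₁ f₂ then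
    h.choose
  else 0

/-- Iterated, left-to-right, CoHA product of a list of dimension-vector/polynomial pairs.
Returns the total dimension vector together with the product. -/
noncomputable def cohaProd (Q : FinQuiver n) :
    List ((Fin n → ℕ) × PolyQ n) → (Fin n → ℕ) × PolyQ n
  | [] => (fun _ => 0, 1)
  | x :: xs => xs.foldl (fun acc y => (acc.1 + y.1, cohaMul Q acc.1 y.1 acc.2 y.2)) x

/-- Left-to-right CoHA product `f 0 * f 1 * ⋯ * f (r−1)` with `f u ∈ ℋ_{γ u}`. -/
noncomputable def cohaProdFin (Q : FinQuiver n) {r : ℕ} (γ : Fin r → Fin n → ℕ)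
    (f : Fin r → PolyQ n) : PolyQ n :=
  (cohaProd Q (List.ofFn fun u => (γ u, f u))).2

/-- The quiver with one vertex and no arrows. -/
def A1 : FinQuiver 1 := { Arr := Empty, hd := Empty.elim, tl := Empty.elim }

/-- `ψ_p = x₁ ^ p ∈ ℋ₁(A₁)`. -/
noncomputable def psi (p : ℕ) : PolyQ 1 := X ((0 : Fin 1), 0) ^ p

def oneDim : Fin 1 → ℕ := fun _ => 1

/-- The simple dimension vector `e_i`. -/
def simpleDim (i : Fin n) : Fin n → ℕ := fun v => if v = i then 1 else 0

/-- A subquiver of `Q`. -/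
structure Subquiver (Q : FinQuiver n) where
  verts : Finset (Fin n)
  arrows : Finset Q.Arr
  hd_mem : ∀ a ∈ arrows, Q.hd a ∈ verts
  tl_mem : ∀ a ∈ arrows, Q.tl a ∈ verts

def Subquiver.Full {Q : FinQuiver n} (Q' : Subquiver Q) : Prop :=
  ∀ a : Q.Arr, Q.hd a ∈ Q'.verts → Q.tl a ∈ Q'.verts → a ∈ Q'.arrows

/-- Adjacency in the underlying undirected graph of a subquiver. -/
def Subquiver.Adj {Q : FinQuiver n} (Q' : Subquiver Q) (x y : Fin n) : Prop :=
  ∃ a ∈ Q'.arrows, (Q.hd a = x ∧ Q.tl a = y) ∨ (Q.hd a = y ∧ Q.tl a = x)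

def Subquiver.Connected {Q : FinQuiver n} (Q' : Subquiver Q) : Prop :=
  ∀ x ∈ Q'.verts, ∀ y ∈ Q'.verts, Relation.ReflTransGen Q'.Adj x y

/-- The Euler form of the subquiver `Q'` (on `ℤ`-valued vectors). -/
def Subquiver.eulerZ {Q : FinQuiver n} (Q' : Subquiver Q) (α β : Fin n → ℤ) : ℤ :=
  ∑ i ∈ Q'.verts, α i * β i - ∑ a ∈ Q'.arrows, α (Q.tl a) * β (Q.hd a)

/-- Positive definiteness of the Tits form of `Q'` on vectors supported on `Q'`. -/
def Subquiver.PosDefTits {Q : FinQuiver n} (Q' : Subquiver Q) : Prop :=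
  ∀ β : Fin n → ℤ, (∀ i, i ∉ Q'.verts → β i = 0) → β ≠ 0 → 0 < Q'.eulerZ β β

/-- A connected full subquiver with positive definite Tits form. -/
def Subquiver.IsDynkin {Q : FinQuiver n} (Q' : Subquiver Q) : Prop :=
  Q'.Connected ∧ Q'.Full ∧ Q'.PosDefTits

/-- A positive root of `Q'`: a nonzero dimension vector supported on `Q'` with
Tits form equal to `1`. -/
def Subquiver.IsPosRoot {Q : FinQuiver n} (Q' : Subquiver Q) (β : Fin n → ℕ) : Prop :=
  (∀ i, i ∉ Q'.verts → β i = 0) ∧ β ≠ 0 ∧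
    Q'.eulerZ (fun i => (β i : ℤ)) (fun i => (β i : ℤ)) = 1

/-- A subquiver regarded as a quiver in its own right (on the ambient vertex set). -/
def Subquiver.toQuiver {Q : FinQuiver n} (Q' : Subquiver Q) : FinQuiver n :=
  { Arr := {a : Q.Arr // a ∈ Q'.arrows}, hd := fun a => Q.hd a.1, tl := fun a => Q.tl a.1 }

/-- An (ordered list) subquiver partition `𝒬• = (Q¹,…,Q^ℓ)`: nonempty connected
subquivers whose vertex sets partition `Q₀`. -/
structure SubqPartition (Q : FinQuiver n) (ℓ : ℕ) where
  part : Fin ℓ → Subquiver Q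
  nonempty' : ∀ j, (part j).verts.Nonempty
  connected' : ∀ j, (part j).Connected
  cover : ∀ i : Fin n, ∃! j, i ∈ (part j).verts

/-- The set `𝒬•₁` of arrows belonging to one of the parts. -/
noncomputable def SubqPartition.arrs {Q : FinQuiver n} {ℓ : ℕ} (P : SubqPartition Q ℓ) : Finset Q.Arr :=
  Finset.univ.biUnion fun j => (P.part j).arrows

/-- The partition is admissible and ordered: every arrow not inside a part goes from a
later part to an earlier part (head before tail). -/
def SubqPartition.Ordered {Q : FinQuiver n} {ℓ : ℕ} (P : SubqPartition Q ℓ) : Prop :=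
  ∀ a : Q.Arr, a ∉ P.arrs → ∀ i j : Fin ℓ,
    Q.hd a ∈ (P.part i).verts → Q.tl a ∈ (P.part j).verts → i < j

/-- Every part is a Dynkin subquiver. -/
def SubqPartition.Dynkin {Q : FinQuiver n} {ℓ : ℕ} (P : SubqPartition Q ℓ) : Prop :=
  ∀ j, (P.part j).IsDynkin

/-- `β : Fin r → (Fin n → ℕ)` is a Reineke-ordered enumeration of `Φ₊(𝒬•)`, with
`blk u` the part to which `β u` belongs: block-monotone, enumerating all positive roots
without repetition, and within each block `u < v → ⟨β u, β v⟩ ≥ 0`. -/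
def IsReinekeOrder {Q : FinQuiver n} {ℓ : ℕ} (P : SubqPartition Q ℓ) {r : ℕ}
    (β : Fin r → Fin n → ℕ) (blk : Fin r → Fin ℓ) : Prop :=
  Monotone blk ∧
  (∀ u, (P.part (blk u)).IsPosRoot (β u)) ∧
  Function.Injective β ∧
  (∀ j (b : Fin n → ℕ), (P.part j).IsPosRoot b → ∃ u, β u = b) ∧
  (∀ u v : Fin r, u < v → blk u = blk v → 0 ≤ Q.lam (β u) (β v))

/-!
The localization sum is evaluated not at the diagonal point `ω_{i,k} ↦ t_{u,v}`, where its
denominators vanish, but at a nilpotent thickening `t_{u,v} + ξ_{i,k}`, the `ξ` being Chern roots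
of trivial bundles on flag varieties. A symmetric polynomial takes the same value at both points,
and multiplication by the Vandermonde product of the `ξ`, the class of a point of the flag
variety, loses no information modulo torsion and clears the denominators. Consider one product
`F * f_k`, with `F` the product of the preceding factors. In the term of a shuffle, the arrows
joining variables with the same label `(u,v)` contribute the Euler class of a bundle
`⨁_a Hom(K_{t(a)}, δ_{h(a)})` on a product of Grassmannians, where `K + δ = β_u` and `δ` counts the
positions with label `(u,v)` that the shuffle gives to `f_k`. This class vanishes if
`χ(δ, β_k) > 0`, unless `u = k` and `K = 0`: reflection functors transfer the vanishing from one
quiver to another until it holds for degree reasons. The numbers `χ(δ, β_k)` add up to `m_k`, while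
`χ(β_k, β_k) = 1`, so some label has a vanishing Euler class unless the shuffle is the initial one,
whose term is the product of the values of `F` and `f_k` with a nonzero factor independent of them.
-/

open scoped Polynomial
open Lagrange (nodal)

universe u

/-! ### Splitting a monic polynomial -/

section Splitting

lemma map_nodal {ι A B : Type*} [CommRing A] [CommRing B] (f : A →+* B) (s : Finset ι)
    (x : ι → A) : (nodal s x).map f = nodal s fun k => f (x k) := by
  simp [nodal, Polynomial.map_prod]

lemma nodal_congr {ι A : Type*} [CommRing A] {s : Finset ι} {x y : ι → A}
    (h : ∀ k ∈ s, x k = y k) : nodal s x = nodal s y :=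
  Finset.prod_congr rfl fun k hk => by rw [h k hk]

lemma nodal_mul_nodal {ι A : Type*} [DecidableEq ι] [CommRing A] {s t : Finset ι}
    (h : Disjoint s t) (x : ι → A) :
    nodal s x * nodal t x = nodal (s ∪ t) x :=
  (Finset.prod_union h).symm

/-- The Vandermonde product `∏_{k < l} (x l - x k)` over pairs of elements of the finite set `s`. -/
noncomputable def vandermondeProd {ι A : Type*} [LinearOrder ι] [CommRing A] (s : Finset ι)
    (x : ι → A) : A :=
  ∏ k ∈ s, ∏ l ∈ s with k < l, (x l - x k)

lemma vandermondeProd_congr {ι A : Type*} [LinearOrder ι] [CommRing A] {s : Finset ι}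
    {x y : ι → A} (h : ∀ k ∈ s, x k = y k) : vandermondeProd s x = vandermondeProd s y :=
  Finset.prod_congr rfl fun k hk => Finset.prod_congr rfl fun l hl => by
    rw [h k hk, h l (Finset.mem_filter.1 hl).1]

lemma map_vandermondeProd {ι A B : Type*} [LinearOrder ι] [CommRing A] [CommRing B] (f : A →+* B)
    (s : Finset ι) (x : ι → A) :
    f (vandermondeProd s x) = vandermondeProd s fun k => f (x k) := by
  simp [vandermondeProd, map_prod]

lemma vandermondeProd_insert_of_lt {ι A : Type*} [LinearOrder ι] [CommRing A] {s : Finset ι}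
    {k₀ : ι} (hk₀ : ∀ k ∈ s, k₀ < k) (x : ι → A) :
    vandermondeProd (insert k₀ s) x = (∏ l ∈ s, (x l - x k₀)) * vandermondeProd s x := by
  have above_min : {l ∈ insert k₀ s | k₀ < l} = s := by
    rw [Finset.filter_insert, if_neg (lt_irrefl k₀), Finset.filter_true_of_mem hk₀]
  have above_of_mem : ∀ k ∈ s, {l ∈ insert k₀ s | k < l} = {l ∈ s | k < l} := fun k hk => by
    rw [Finset.filter_insert, if_neg (hk₀ k hk).not_gt]
  rw [vandermondeProd, Finset.prod_insert fun h => lt_irrefl _ (hk₀ k₀ h), above_min]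
  exact congrArg _ (Finset.prod_congr rfl fun k hk => by rw [above_of_mem k hk])

lemma prod_sub_eq_neg_one_pow_mul_eval_nodal {ι A : Type*} [CommRing A] (s : Finset ι) (x : ι → A)
    (a : A) : ∏ k ∈ s, (x k - a) = (-1) ^ s.card * (nodal s x).eval a := by
  rw [Lagrange.eval_nodal, ← Finset.prod_const, ← Finset.prod_mul_distrib]
  exact Finset.prod_congr rfl fun k _ => by ring

variable {A : Type u} [CommRing A] {p : A[X]}

lemma eq_zero_of_adjoinRoot_mk_eq_zero (hp : p.Monic) {q : A[X]} (hq : q.natDegree < p.natDegree)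
    (h : AdjoinRoot.mk p q = 0) : q = 0 :=
  of_not_not fun hne => hp.not_dvd_of_natDegree_lt hne hq (AdjoinRoot.mk_eq_zero.1 h)

lemma algebraMap_adjoinRoot_injective (hp : p.Monic) (hpos : 0 < p.natDegree) :
    Function.Injective (algebraMap A (AdjoinRoot p)) := by
  rw [injective_iff_map_eq_zero]
  intro a ha
  exact Polynomial.C_eq_zero.1 (eq_zero_of_adjoinRoot_mk_eq_zero hp (by simpa using hpos) ha)

lemma natDegree_mul_eq_zero_of_mul_mk_derivative_eq_zero (hp : p.Monic) (hpos : 0 < p.natDegree)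
    {a : A} (h : algebraMap A (AdjoinRoot p) a * AdjoinRoot.mk p (Polynomial.derivative p) = 0) :
    (p.natDegree : A) * a = 0 := by
  obtain ⟨d, hd⟩ := Nat.exists_eq_succ_of_ne_zero hpos.ne'
  have mk_eq_zero : AdjoinRoot.mk p (Polynomial.C a * Polynomial.derivative p) = 0 := by
    rw [map_mul]; exact h
  have poly_eq_zero : Polynomial.C a * Polynomial.derivative p = 0 :=
    eq_zero_of_adjoinRoot_mk_eq_zero hp ((Polynomial.natDegree_C_mul_le _ _).trans_lt
      (Polynomial.natDegree_derivative_lt hpos.ne')) mk_eq_zero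
  have coeff_eq_zero := congrArg (Polynomial.coeff · d) poly_eq_zero
  simp only [Polynomial.coeff_C_mul, Polynomial.coeff_derivative, Polynomial.coeff_zero,
    ← Nat.succ_eq_add_one, ← hd, hp.coeff_natDegree, one_mul] at coeff_eq_zero
  rw [hd, mul_comm]
  exact_mod_cast coeff_eq_zero

lemma exists_adjoinRoot_cofactor (hp : p.Monic) {d : ℕ} (hd : p.natDegree = d + 1) :
    ∃ h : (AdjoinRoot p)[X], h.Monic ∧ h.natDegree = d ∧
      (Polynomial.X - Polynomial.C (AdjoinRoot.root p)) * h = p.map (algebraMap A (AdjoinRoot p)) ∧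
      h.eval (AdjoinRoot.root p) = AdjoinRoot.mk p (Polynomial.derivative p) := by
  have : Nontrivial A := by
    by_contra hA
    rw [not_nontrivial_iff_subsingleton] at hA
    simp [Subsingleton.elim p 0] at hd
  have : Nontrivial (AdjoinRoot p) :=
    (algebraMap_adjoinRoot_injective hp (by omega)).nontrivial
  set y := AdjoinRoot.root p
  obtain ⟨h, factor⟩ : ∃ h, (Polynomial.X - Polynomial.C y) * h =
      p.map (algebraMap A (AdjoinRoot p)) :=
    ⟨_, Polynomial.mul_divByMonic_eq_iff_isRoot.2 (AdjoinRoot.isRoot_root p)⟩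
  have monic : h.Monic :=
    (Polynomial.monic_X_sub_C y).of_mul_monic_left (by rw [factor]; exact hp.map _)
  refine ⟨h, monic, ?_, factor, ?_⟩
  · have := hp.natDegree_map (algebraMap A (AdjoinRoot p))
    rw [← factor, (Polynomial.monic_X_sub_C y).natDegree_mul monic,
      Polynomial.natDegree_X_sub_C, hd] at this
    omega
  · have eval_derivative : (Polynomial.derivative (p.map (algebraMap A (AdjoinRoot p)))).eval y =
        AdjoinRoot.mk p (Polynomial.derivative p) := by
      rw [Polynomial.derivative_map, Polynomial.eval_map_algebraMap, AdjoinRoot.aeval_eq]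
    rw [← eval_derivative, ← factor]
    simp

-- The injectivity modulo torsion is the statement that the class of a point of the flag variety
-- is not zero; at each adjunction of a root `y`, the factor contributed is `h(y) = p'(y)`.
theorem exists_extension_map_eq_nodal {ι : Type*} [LinearOrder ι] (s : Finset ι) :
    ∀ (A : Type u) [CommRing A] (p : A[X]), p.Monic → p.natDegree = s.card →
      ∃ (B : Type u) (_ : CommRing B) (_ : Algebra A B) (x : ι → B),
        nodal s x = p.map (algebraMap A B) ∧ Function.Injective (algebraMap A B) ∧
        ∀ a : A, algebraMap A B a * vandermondeProd s x = 0 → (s.card.factorial : A) * a = 0 := by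
  induction s using Finset.induction_on_min with
  | empty =>
    intro A _ p hp hd
    have : p = 1 := hp.natDegree_eq_zero.1 (by simpa using hd)
    exact ⟨A, inferInstance, Algebra.id A, fun _ => 0, by simp [this], fun _ _ h => h,
      fun a ha => by simpa [vandermondeProd] using ha⟩
  | insert k₀ s hk₀ ih =>
    intro A _ p hp hd
    have hmem : k₀ ∉ s := fun h => lt_irrefl _ (hk₀ k₀ h)
    rw [Finset.card_insert_of_notMem hmem] at hd ⊢
    obtain ⟨h, h_monic, h_deg, h_factor, h_eval⟩ := exists_adjoinRoot_cofactor hp hd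
    obtain ⟨B, _, _, x, hx, hinj, htors⟩ := ih (AdjoinRoot p) h h_monic h_deg
    let _ : Algebra A B := Algebra.compHom B (algebraMap A (AdjoinRoot p))
    set y := algebraMap (AdjoinRoot p) B (AdjoinRoot.root p)
    have hx' : ∀ k ∈ s, Function.update x k₀ y k = x k := fun k hk =>
      Function.update_of_ne (hk₀ k hk).ne' _ _
    refine ⟨B, inferInstance, inferInstance, Function.update x k₀ y, ?_,
      hinj.comp (algebraMap_adjoinRoot_injective hp (by omega)), fun a ha => ?_⟩
    · have map_comp : p.map (algebraMap A B) =
          (p.map (algebraMap A (AdjoinRoot p))).map (algebraMap (AdjoinRoot p) B) := by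
        rw [Polynomial.map_map]; rfl
      rw [map_comp, ← h_factor, Polynomial.map_mul, ← hx, Lagrange.nodal_insert_eq_nodal hmem,
        nodal_congr hx', Function.update_self]
      simp [y]
    · have prod_eq : ∏ l ∈ s, (Function.update x k₀ y l - Function.update x k₀ y k₀) =
          (-1) ^ s.card * algebraMap (AdjoinRoot p) B (h.eval (AdjoinRoot.root p)) := by
        rw [Function.update_self, Finset.prod_congr rfl fun l hl => by rw [hx' l hl],
          prod_sub_eq_neg_one_pow_mul_eval_nodal, hx, Polynomial.eval_map_apply]
      rw [vandermondeProd_insert_of_lt hk₀, vandermondeProd_congr hx', prod_eq, h_eval] at ha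
      have torsion := htors (algebraMap A (AdjoinRoot p) a * AdjoinRoot.mk p p.derivative) (by
        rw [← (isUnit_one.neg.pow s.card).mul_right_eq_zero, map_mul]
        linear_combination ha)
      have := natDegree_mul_eq_zero_of_mul_mk_derivative_eq_zero hp (by omega)
        (a := (s.card.factorial : A) * a) (by rw [map_mul, map_natCast, mul_assoc, torsion])
      rw [Nat.factorial_succ, Nat.cast_mul, mul_assoc, ← hd, this]

end Splitting

/-! ### Transferring the vanishing of a product of values -/

section ValueProducts

lemma exists_prod_sub_eq {ι R : Type*} [CommRing R] (s : Finset ι) (f : ι → R) (T : R) :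
    ∃ g, ∏ l ∈ s, (f l - T) = ∏ l ∈ s, f l + T * g := by
  induction s using Finset.cons_induction with
  | empty => exact ⟨0, by simp⟩
  | cons l s hl ih =>
    obtain ⟨g, hg⟩ := ih
    refine ⟨f l * g - ∏ k ∈ s, f k - T * g, ?_⟩
    rw [Finset.prod_cons, Finset.prod_cons, hg]
    ring

variable {ι : Type*} {A : Type u} [CommRing A] {s : Finset ι} {θ : ι → A}

lemma eq_zero_of_monic_dvd_C_mul {P U : A[X]} (hP : P.Monic) (hU : U.Monic)
    (hlt : U.natDegree < P.natDegree) {a : A} (h : P ∣ Polynomial.C a * U) : a = 0 := by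
  have mul_eq_zero : Polynomial.C a * U = 0 := of_not_not fun hne =>
    hP.not_dvd_of_natDegree_lt hne ((Polynomial.natDegree_C_mul_le _ _).trans_lt hlt) h
  exact Polynomial.C_eq_zero.1 (hU.mul_left_eq_zero_iff.1 mul_eq_zero)

lemma prod_eval_eq_zero_of_nodal_dvd_mul {T U : A[X]} (hU : U.Monic) (hlt : U.natDegree < s.card)
    (h : nodal s θ ∣ T * U) : ∏ l ∈ s, T.eval (θ l) = 0 := by
  nontriviality A
  obtain ⟨g, hg⟩ := exists_prod_sub_eq s (fun l => Polynomial.C (T.eval (θ l))) T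
  have nodal_dvd_prod : nodal s θ ∣ ∏ l ∈ s, (Polynomial.C (T.eval (θ l)) - T) :=
    Finset.prod_dvd_prod_of_dvd _ _ fun l _ => by
      rw [← dvd_neg, neg_sub]
      exact Polynomial.X_sub_C_dvd_sub_C_eval
  refine eq_zero_of_monic_dvd_C_mul Lagrange.nodal_monic hU
    (hlt.trans_eq (Lagrange.natDegree_nodal (v := θ)).symm) ?_
  have split : Polynomial.C (∏ l ∈ s, T.eval (θ l)) * U =
      (∏ l ∈ s, (Polynomial.C (T.eval (θ l)) - T)) * U - T * U * g := by
    rw [hg, map_prod]; ring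
  rw [split]
  exact dvd_sub (nodal_dvd_prod.mul_right _) (h.mul_right _)

/-- `D` is the divided difference `(T(X) - T(Y)) / (X - Y)` of `T`, where the inner variable of
`A[X][X]` plays the role of `Y`. -/
def IsDividedDifference (T : A[X]) (D : A[X][X]) : Prop :=
  T.map Polynomial.C - Polynomial.C T = (Polynomial.X - Polynomial.C Polynomial.X) * D

lemma exists_isDividedDifference (T : A[X]) : ∃ D, IsDividedDifference T D := by
  have := Polynomial.X_sub_C_dvd_sub_C_eval (a := (Polynomial.X : A[X])) (p := T.map Polynomial.C)
  rwa [Polynomial.eval_map, Polynomial.eval₂_C_X] at this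

lemma IsDividedDifference.C_eval_sub {T : A[X]} {D : A[X][X]} (hD : IsDividedDifference T D)
    (a : A) : Polynomial.C (T.eval a) - T =
      -1 * (Polynomial.X - Polynomial.C a) * D.eval (Polynomial.C a) := by
  have := congrArg (Polynomial.eval (Polynomial.C a)) hD
  rw [Polynomial.eval_sub, Polynomial.eval_mul, Polynomial.eval_sub, Polynomial.eval_map,
    Polynomial.eval₂_at_apply, Polynomial.eval_C, Polynomial.eval_X, Polynomial.eval_C] at this
  rw [this]; ring

lemma nodal_mul_dvd_of_dvd_dividedDifference {T U S P : A[X]} {D : A[X][X]}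
    (hD : IsDividedDifference T D) {c : A}
    (hTU : Polynomial.C c * T * U = Polynomial.C c * S * nodal s θ * P)
    (hdvd : P ∣ Polynomial.C c * U * ∏ l ∈ s, D.eval (Polynomial.C (θ l))) :
    nodal s θ * P ∣ Polynomial.C (c * ∏ l ∈ s, T.eval (θ l)) * U := by
  obtain ⟨g, hg⟩ := exists_prod_sub_eq s (fun l => Polynomial.C (T.eval (θ l))) T
  simp only [hD.C_eval_sub, Finset.prod_mul_distrib, Finset.prod_const, ← map_prod,
    ← Lagrange.nodal_eq] at hg
  have split : Polynomial.C (c * ∏ l ∈ s, T.eval (θ l)) * U =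
      (-1) ^ s.card * (nodal s θ * (Polynomial.C c * U * ∏ l ∈ s, D.eval (Polynomial.C (θ l)))) -
        nodal s θ * P * (Polynomial.C c * S * g) := by
    rw [map_mul]
    linear_combination (-Polynomial.C c * U) * hg - g * hTU
  rw [split]
  exact dvd_sub ((mul_dvd_mul_left _ hdvd).mul_left _) (dvd_mul_right _ _)

lemma mk_mul_eq_of_isDividedDifference {T U S P V : A[X]} {D : A[X][X]}
    (hD : IsDividedDifference T D) {c : A}
    (hTU : Polynomial.C c * T * U = Polynomial.C c * S * V * P) {h : (AdjoinRoot P)[X]}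
    (hfactor : (Polynomial.X - Polynomial.C (AdjoinRoot.root P)) * h =
      P.map (algebraMap A (AdjoinRoot P))) :
    Polynomial.C (AdjoinRoot.mk P (Polynomial.C c * U)) * D.map (AdjoinRoot.mk P) *
        U.map (algebraMap A (AdjoinRoot P)) =
      Polynomial.C (AdjoinRoot.mk P (Polynomial.C c * U)) * S.map (algebraMap A (AdjoinRoot P)) *
        V.map (algebraMap A (AdjoinRoot P)) * h := by
  set φ := algebraMap A (AdjoinRoot P)
  have quotient : T.map φ - Polynomial.C (AdjoinRoot.mk P T) =
      (Polynomial.X - Polynomial.C (AdjoinRoot.root P)) * D.map (AdjoinRoot.mk P) := by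
    have := congrArg (Polynomial.map (AdjoinRoot.mk P)) hD
    rw [Polynomial.map_sub, Polynomial.map_mul, Polynomial.map_sub, Polynomial.map_map,
      Polynomial.map_C, Polynomial.map_X, Polynomial.map_C] at this
    exact this
  have mk_mul_mk_eq_zero : Polynomial.C (AdjoinRoot.mk P (Polynomial.C c * U)) *
      Polynomial.C (AdjoinRoot.mk P T) = 0 := by
    rw [← map_mul, ← map_mul, mul_right_comm, hTU, map_mul, AdjoinRoot.mk_self, mul_zero, map_zero]
  have mapped : Polynomial.C (φ c) * T.map φ * U.map φ =
      Polynomial.C (φ c) * S.map φ * V.map φ *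
        ((Polynomial.X - Polynomial.C (AdjoinRoot.root P)) * h) := by
    simpa only [Polynomial.map_mul, Polynomial.map_C, ← hfactor] using
      congrArg (Polynomial.map φ) hTU
  have mk_mul : Polynomial.C (AdjoinRoot.mk P (Polynomial.C c * U)) =
      Polynomial.C (φ c) * Polynomial.C (AdjoinRoot.mk P U) := by
    rw [← map_mul, map_mul]; rfl
  apply (Polynomial.monic_X_sub_C (AdjoinRoot.root P)).isRegular.left
  change (Polynomial.X - Polynomial.C _) * _ = (Polynomial.X - Polynomial.C _) * _
  linear_combination Polynomial.C (AdjoinRoot.mk P U) * mapped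
    - Polynomial.C (AdjoinRoot.mk P (Polynomial.C c * U)) * U.map φ * quotient
    - U.map φ * mk_mul_mk_eq_zero
    + (T.map φ * U.map φ - S.map φ * V.map φ *
        ((Polynomial.X - Polynomial.C (AdjoinRoot.root P)) * h)) * mk_mul

/-- The universal vanishing of `c * ∏_j U(y j)`, where `y` runs over `p` of the `p + e` roots of `P`
in an arbitrary extension. -/
def ValueProdVanishes (p e : ℕ) (c : A) (U P : A[X]) : Prop :=
  ∀ (B : Type u) [CommRing B] [Algebra A B] (y w : ℕ → B),
    nodal (Finset.range p) y * nodal (Finset.range e) w = P.map (algebraMap A B) →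
    algebraMap A B c * ∏ j ∈ Finset.range p, (U.map (algebraMap A B)).eval (y j) = 0

lemma ValueProdVanishes.eq_zero {e : ℕ} {c : A} {U P : A[X]} (hP : P.Monic) (hd : P.natDegree = e)
    (h : ValueProdVanishes 0 e c U P) : c = 0 := by
  obtain ⟨B, _, _, w, hw, hinj, -⟩ :=
    exists_extension_map_eq_nodal (Finset.range e) A P hP (by simpa using hd)
  have := h B w w (by simpa using hw)
  rw [Finset.range_zero, Finset.prod_empty, mul_one] at this
  exact hinj (by rw [this, map_zero])

lemma ValueProdVanishes.adjoinRoot {p e : ℕ} {c : A} {U P : A[X]} {h : (AdjoinRoot P)[X]}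
    (hvanish : ValueProdVanishes (p + 1) e c U P)
    (hfactor : (Polynomial.X - Polynomial.C (AdjoinRoot.root P)) * h =
      P.map (algebraMap A (AdjoinRoot P))) :
    ValueProdVanishes p e (AdjoinRoot.mk P (Polynomial.C c * U))
      (U.map (algebraMap A (AdjoinRoot P))) h := by
  intro B _ _ y w hyw
  let _ : Algebra A B := Algebra.compHom B (algebraMap A (AdjoinRoot P))
  have map_comp : ∀ F : A[X], F.map (algebraMap A B) =
      (F.map (algebraMap A (AdjoinRoot P))).map (algebraMap (AdjoinRoot P) B) := fun F =>
    (Polynomial.map_map _ _ _).symm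
  set y₀ := algebraMap (AdjoinRoot P) B (AdjoinRoot.root P)
  have update_eq : ∀ j ∈ Finset.range p, Function.update y p y₀ j = y j := fun j hj =>
    Function.update_of_ne (Finset.mem_range.1 hj).ne _ _
  have eval_root : (U.map (algebraMap A B)).eval y₀ =
      algebraMap (AdjoinRoot P) B (AdjoinRoot.mk P U) := by
    rw [map_comp, Polynomial.eval_map_apply, Polynomial.eval_map_algebraMap, AdjoinRoot.aeval_eq]
  have := hvanish B (Function.update y p y₀) w (by
    rw [Finset.range_add_one, Lagrange.nodal_insert_eq_nodal Finset.notMem_range_self,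
      nodal_congr update_eq, Function.update_self, mul_assoc, hyw, map_comp, ← hfactor]
    simp [y₀])
  rw [Finset.prod_range_succ, Function.update_self, eval_root,
    Finset.prod_congr rfl fun j hj => by rw [update_eq j hj], map_comp] at this
  rw [map_mul, map_mul, mul_right_comm, mul_assoc]
  exact this

-- Adjoin one root of `P` at a time, replacing `T` by its divided difference at that root and
-- absorbing the value of `U` there into `c`.
theorem ValueProdVanishes.mul_prod_eval_eq_zero (e : ℕ) :
    ∀ (p : ℕ) (A : Type u) [CommRing A] (c : A) (T U S P : A[X]) (θ : ι → A),
      U.Monic → P.Monic → P.natDegree = p + e → (p = 0 ∨ U.natDegree ≤ s.card + e) →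
      Polynomial.C c * T * U = Polynomial.C c * S * nodal s θ * P → ValueProdVanishes p e c U P →
      c * ∏ l ∈ s, T.eval (θ l) = 0 := by
  intro p
  induction p with
  | zero =>
    intro A _ c T U S P θ _ hP hdeg _ _ hvanish
    rw [hvanish.eq_zero hP (by simpa using hdeg), zero_mul]
  | succ p ih =>
    intro A _ c T U S P θ hU hP hdeg hdegU hTU hvanish
    rcases subsingleton_or_nontrivial A with _ | _
    · exact Subsingleton.elim _ _
    have hdegU := hdegU.resolve_left p.succ_ne_zero
    obtain ⟨h, h_monic, h_deg, h_factor, -⟩ := exists_adjoinRoot_cofactor hP (d := p + e) (by omega)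
    obtain ⟨D, hD⟩ := exists_isDividedDifference T
    have hrec := ih (AdjoinRoot P) (AdjoinRoot.mk P (Polynomial.C c * U)) (D.map (AdjoinRoot.mk P))
      (U.map (algebraMap A (AdjoinRoot P))) (S.map (algebraMap A (AdjoinRoot P))) h
      (fun l => algebraMap A _ (θ l)) (hU.map _) h_monic h_deg
      (Or.inr ((Polynomial.natDegree_map_le).trans hdegU))
      (by rw [← map_nodal, mk_mul_eq_of_isDividedDifference hD hTU h_factor])
      (hvanish.adjoinRoot h_factor)
    have eval_map_mk : ∀ l, (D.map (AdjoinRoot.mk P)).eval (algebraMap A (AdjoinRoot P) (θ l)) =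
        AdjoinRoot.mk P (D.eval (Polynomial.C (θ l))) := fun l =>
      Polynomial.eval_map_apply (AdjoinRoot.mk P) (Polynomial.C (θ l))
    simp only [eval_map_mk, ← map_prod, ← map_mul, AdjoinRoot.mk_eq_zero] at hrec
    refine eq_zero_of_monic_dvd_C_mul (Lagrange.nodal_monic.mul hP) hU ?_
      (nodal_mul_dvd_of_dvd_dividedDifference hD hTU hrec)
    rw [Lagrange.nodal_monic.natDegree_mul hP, Lagrange.natDegree_nodal, hdeg]
    omega

end ValueProducts

/-! ### Vanishing of Euler classes -/

section EulerClass

/-- The universal vanishing of the Euler class of `⨁_a Hom(K_{t(a)}, δ_{h(a)})` on a product of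
Grassmannians of quotients of dimensions `δ j` of spaces of dimension `K j + δ j`: the `θ j l` are
Chern roots of the tautological quotients, and `S j` is the Chern polynomial of the kernel. -/
def FinQuiver.EulerClassVanishes (Q : FinQuiver n) (K δ : Fin n → ℕ) : Prop :=
  ∀ (A : Type u) [CommRing A] (S : Fin n → A[X]) (θ : Fin n → ℕ → A),
    (∀ j, S j * nodal (Finset.range (δ j)) (θ j) = Polynomial.X ^ (K j + δ j)) →
    ∏ a, ∏ l ∈ Finset.range (δ (Q.hd a)), (S (Q.tl a)).eval (θ (Q.hd a) l) = 0

namespace FinQuiver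

variable (Q : FinQuiver n) (i : Fin n)

/-- The arrows of `Q` with head `i`. -/
noncomputable def arrowsInto : Finset Q.Arr := {a | Q.hd a = i}

lemma mem_arrowsInto {a : Q.Arr} : a ∈ Q.arrowsInto i ↔ Q.hd a = i := by
  simp [arrowsInto]

lemma mem_compl_arrowsInto {a : Q.Arr} : a ∈ (Q.arrowsInto i)ᶜ ↔ Q.hd a ≠ i := by
  simp [arrowsInto]

/-- The quiver obtained from `Q` by reversing the arrows with head `i`. -/
noncomputable def reverseInto : FinQuiver n where
  Arr := Q.Arr
  hd a := if Q.hd a = i then Q.tl a else Q.hd a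
  tl a := if Q.hd a = i then i else Q.tl a

section

variable {A : Type u} [CommRing A] (S : Fin n → A[X]) (θ : Fin n → ℕ → A) (δ : Fin n → ℕ)

lemma prod_eval_eq_prod_compl_mul_prod :
    ∏ a, ∏ l ∈ Finset.range (δ (Q.hd a)), (S (Q.tl a)).eval (θ (Q.hd a) l) =
    (∏ a ∈ (Q.arrowsInto i)ᶜ,
      ∏ l ∈ Finset.range (δ (Q.hd a)), (S (Q.tl a)).eval (θ (Q.hd a) l)) *
    ∏ l ∈ Finset.range (δ i), (∏ a ∈ Q.arrowsInto i, S (Q.tl a)).eval (θ i l) := by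
  rw [← Finset.prod_compl_mul_prod (Q.arrowsInto i)]
  simp only [Polynomial.eval_prod]
  rw [Finset.prod_comm (s := Finset.range (δ i))]
  exact congrArg _ (Finset.prod_congr rfl fun a ha => by rw [(Q.mem_arrowsInto i).1 ha])

/-- The Chern polynomial of the direct sum of the quotients at the tails of the arrows into `i`. -/
noncomputable def tailNodal : A[X] :=
  ∏ a ∈ Q.arrowsInto i, nodal (Finset.range (δ (Q.tl a))) (θ (Q.tl a))

lemma tailNodal_monic : (Q.tailNodal i θ δ).Monic :=
  Polynomial.monic_prod_of_monic _ _ fun _ _ => Lagrange.nodal_monic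

lemma natDegree_tailNodal [Nontrivial A] :
    (Q.tailNodal i θ δ).natDegree = ∑ a ∈ Q.arrowsInto i, δ (Q.tl a) := by
  rw [tailNodal, Polynomial.natDegree_prod_of_monic _ _ fun _ _ => Lagrange.nodal_monic]
  exact Finset.sum_congr rfl fun a _ => by rw [Lagrange.natDegree_nodal, Finset.card_range]

variable {S θ δ} in
lemma prod_mul_tailNodal {K : Fin n → ℕ}
    (h : ∀ j, S j * nodal (Finset.range (δ j)) (θ j) = Polynomial.X ^ (K j + δ j)) :
    (∏ a ∈ Q.arrowsInto i, S (Q.tl a)) * Q.tailNodal i θ δ =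
      Polynomial.X ^ ∑ a ∈ Q.arrowsInto i, (K (Q.tl a) + δ (Q.tl a)) := by
  rw [tailNodal, ← Finset.prod_mul_distrib, ← Finset.prod_pow_eq_pow_sum]
  exact Finset.prod_congr rfl fun a _ => h _

lemma prod_eval_tailNodal {B : Type*} [CommRing B] (f : A →+* B) (p : ℕ) (y : ℕ → B) :
    ∏ j ∈ Finset.range p, ((Q.tailNodal i θ δ).map f).eval (y j) =
      (∏ a ∈ Q.arrowsInto i, ∏ _l ∈ Finset.range (δ (Q.tl a)), ∏ _j ∈ Finset.range p, (-1)) *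
        ∏ a ∈ Q.arrowsInto i, ∏ l ∈ Finset.range (δ (Q.tl a)),
          (nodal (Finset.range p) y).eval (f (θ (Q.tl a) l)) := by
  simp only [tailNodal, Polynomial.map_prod, map_nodal, Polynomial.eval_prod, Lagrange.eval_nodal]
  rw [Finset.prod_comm, ← Finset.prod_mul_distrib]
  refine Finset.prod_congr rfl fun a _ => ?_
  rw [Finset.prod_comm, ← Finset.prod_mul_distrib]
  refine Finset.prod_congr rfl fun l _ => ?_
  rw [← Finset.prod_mul_distrib]
  exact Finset.prod_congr rfl fun j _ => by ring

end

variable {Q i} {K δ : Fin n → ℕ}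

theorem eulerClassVanishes_of_sum_lt (hδ : ∑ a ∈ Q.arrowsInto i, δ (Q.tl a) < δ i)
    (hKδ : K i + δ i ≤ ∑ a ∈ Q.arrowsInto i, (K (Q.tl a) + δ (Q.tl a))) :
    Q.EulerClassVanishes K δ := by
  intro A _ S θ h
  rcases subsingleton_or_nontrivial A with _ | _
  · exact Subsingleton.elim _ _
  rw [prod_eval_eq_prod_compl_mul_prod Q i]
  refine mul_eq_zero_of_right _ (prod_eval_eq_zero_of_nodal_dvd_mul (Q.tailNodal_monic i θ δ) ?_ ?_)
  · rwa [natDegree_tailNodal, Finset.card_range]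
  · rw [Q.prod_mul_tailNodal i h]
    exact (Dvd.intro_left _ (h i)).trans (pow_dvd_pow _ hKδ)

lemma prod_reverseInto (hsink : ∀ a, Q.tl a ≠ i) {A B : Type u} [CommRing A] [CommRing B]
    (f : A →+* B) (S : Fin n → A[X]) (θ : Fin n → ℕ → A) (p : B[X]) (w : ℕ → B)
    {δ' : Fin n → ℕ} (hδ : ∀ j, j ≠ i → δ' j = δ j) :
    ∏ a : (Q.reverseInto i).Arr, ∏ l ∈ Finset.range (δ' ((Q.reverseInto i).hd a)),
      (Function.update (fun j => (S j).map f) i p ((Q.reverseInto i).tl a)).eval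
        (Function.update (fun j l => f (θ j l)) i w ((Q.reverseInto i).hd a) l) =
    f (∏ a ∈ (Q.arrowsInto i)ᶜ, ∏ l ∈ Finset.range (δ (Q.hd a)),
        (S (Q.tl a)).eval (θ (Q.hd a) l)) *
      ∏ a ∈ Q.arrowsInto i, ∏ l ∈ Finset.range (δ (Q.tl a)), p.eval (f (θ (Q.tl a) l)) := by
  refine (Finset.prod_compl_mul_prod (Q.arrowsInto i) _).symm.trans ?_
  rw [map_prod]
  congr 1
  · refine Finset.prod_congr rfl fun a ha => ?_
    have ha := (Q.mem_compl_arrowsInto i).1 ha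
    simp only [reverseInto, if_neg ha, Function.update_of_ne ha, Function.update_of_ne (hsink a),
      hδ _ ha, map_prod, Polynomial.eval_map_apply]
  · refine Finset.prod_congr rfl fun a ha => ?_
    simp only [reverseInto, if_pos ((Q.mem_arrowsInto i).1 ha), Function.update_self,
      Function.update_of_ne (hsink a), hδ _ (hsink a)]

-- The reflection functor at the sink `i`; the subtraction in `hKi` is truncated, so that `K' i = 0`
-- when `⨁_a K_{t(a)} → K_i` cannot be surjective.
theorem EulerClassVanishes.of_reverseInto {K' δ' : Fin n → ℕ} (hsink : ∀ a, Q.tl a ≠ i)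
    (hK : ∀ j, j ≠ i → K' j = K j) (hδ : ∀ j, j ≠ i → δ' j = δ j)
    (hKi : K' i = (∑ a ∈ Q.arrowsInto i, K (Q.tl a)) - K i)
    (hsum : K' i + δ' i + (K i + δ i) = ∑ a ∈ Q.arrowsInto i, (K (Q.tl a) + δ (Q.tl a)))
    (hvanish : (Q.reverseInto i).EulerClassVanishes.{u} K' δ') :
    Q.EulerClassVanishes.{u} K δ := by
  intro A _ S θ h
  rcases subsingleton_or_nontrivial A with _ | _
  · exact Subsingleton.elim _ _
  rw [prod_eval_eq_prod_compl_mul_prod Q i]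
  refine ValueProdVanishes.mul_prod_eval_eq_zero (δ' i) (K' i) A _ _ _ (S i)
    (Polynomial.X ^ (K' i + δ' i)) (θ i) (Q.tailNodal_monic i θ δ) (Polynomial.monic_X_pow _)
    (Polynomial.natDegree_X_pow _) ?_ ?_ fun B _ _ y w hyw => ?_
  · rw [natDegree_tailNodal, Finset.card_range]
    rw [Finset.sum_add_distrib] at hsum
    omega
  · rw [mul_assoc, Q.prod_mul_tailNodal i h, mul_assoc (Polynomial.C _) (S i), h i, mul_assoc,
      ← pow_add, ← hsum, add_comm]
  · rw [Polynomial.map_pow, Polynomial.map_X] at hyw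
    have := hvanish B
      (Function.update (fun j => (S j).map (algebraMap A B)) i (nodal (Finset.range (K' i)) y))
      (Function.update (fun j l => algebraMap A B (θ j l)) i w) fun j => by
        rcases eq_or_ne j i with rfl | hj
        · rw [Function.update_self, Function.update_self, hyw]
        · rw [Function.update_of_ne hj, Function.update_of_ne hj, hK j hj, hδ j hj]
          simpa [map_nodal] using congrArg (Polynomial.map (algebraMap A B)) (h j)
    rw [prod_reverseInto hsink _ _ _ _ _ hδ] at this
    rw [prod_eval_tailNodal, mul_left_comm, this, mul_zero]

end FinQuiver

end EulerClass

/-! ### Euler forms, reflections and ordered lists of positive roots -/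

namespace FinQuiver

section EulerForm

/-- The Euler form of `Q` as a bilinear form on `ℤ`-valued vectors. -/
noncomputable def eulerForm (Q : FinQuiver n) : LinearMap.BilinForm ℤ (Fin n → ℤ) :=
  LinearMap.mk₂ ℤ (fun α β => ∑ i, α i * β i - ∑ a, α (Q.tl a) * β (Q.hd a))
    (fun α α' β => by simp only [Pi.add_apply, add_mul, Finset.sum_add_distrib]; ring)
    (fun c α β => by
      simp only [Pi.smul_apply, smul_eq_mul, mul_sub, Finset.mul_sum, mul_assoc])
    (fun α β β' => by simp only [Pi.add_apply, mul_add, Finset.sum_add_distrib]; ring)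
    (fun c α β => by
      simp only [Pi.smul_apply, smul_eq_mul, mul_sub, Finset.mul_sum, mul_left_comm c])

variable (Q : FinQuiver n) (i : Fin n)

lemma eulerForm_apply (α β : Fin n → ℤ) :
    Q.eulerForm α β = ∑ i, α i * β i - ∑ a, α (Q.tl a) * β (Q.hd a) :=
  rfl

lemma eulerForm_single_right (v : Fin n → ℤ) :
    Q.eulerForm v (Pi.single i 1) = v i - ∑ a ∈ Q.arrowsInto i, v (Q.tl a) := by
  simp [eulerForm_apply, Pi.single_apply, arrowsInto, Finset.sum_filter]

lemma eulerForm_single_left (v : Fin n → ℤ) :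
    Q.eulerForm (Pi.single i 1) v = v i - ∑ a with Q.tl a = i, v (Q.hd a) := by
  simp [eulerForm_apply, Pi.single_apply, Finset.sum_filter]

lemma eulerForm_eq_sum_single (x y : Fin n → ℤ) :
    Q.eulerForm x y = ∑ j, x j * Q.eulerForm (Pi.single j 1) y := by
  have expand : x = ∑ j, x j • Pi.single j 1 := by
    ext k; simp [Finset.sum_apply, Pi.single_apply]
  conv_lhs => rw [expand]
  simp only [map_sum, LinearMap.sum_apply, map_smul, LinearMap.smul_apply, smul_eq_mul]

lemma eulerForm_eq_sum_compl_arrowsInto (α β : Fin n → ℤ) :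
    Q.eulerForm α β = ∑ j ∈ Finset.univ.erase i, α j * β j + α i * β i
      - ∑ a ∈ (Q.arrowsInto i)ᶜ, α (Q.tl a) * β (Q.hd a)
      - (∑ a ∈ Q.arrowsInto i, α (Q.tl a)) * β i := by
  rw [eulerForm_apply, ← Finset.sum_compl_add_sum (Q.arrowsInto i), Finset.sum_mul,
    Finset.sum_erase_add _ _ (Finset.mem_univ i), sub_sub]
  congr 2
  exact Finset.sum_congr rfl fun a ha => by rw [(Q.mem_arrowsInto i).1 ha]

lemma eulerForm_reverseInto (α β : Fin n → ℤ) :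
    (Q.reverseInto i).eulerForm α β = ∑ j ∈ Finset.univ.erase i, α j * β j + α i * β i
      - ∑ a ∈ (Q.arrowsInto i)ᶜ, α (Q.tl a) * β (Q.hd a)
      - α i * ∑ a ∈ Q.arrowsInto i, β (Q.tl a) := by
  have sum_arrows : ∑ a : (Q.reverseInto i).Arr,
      α ((Q.reverseInto i).tl a) * β ((Q.reverseInto i).hd a) =
      ∑ a ∈ (Q.arrowsInto i)ᶜ, α (Q.tl a) * β (Q.hd a) +
        ∑ a ∈ Q.arrowsInto i, α i * β (Q.tl a) := by
    refine (Finset.sum_compl_add_sum (Q.arrowsInto i) _).symm.trans ?_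
    congr 1
    · exact Finset.sum_congr rfl fun a ha => by
        simp only [reverseInto, if_neg ((Q.mem_compl_arrowsInto i).1 ha)]
    · exact Finset.sum_congr rfl fun a ha => by
        simp only [reverseInto, if_pos ((Q.mem_arrowsInto i).1 ha)]
  rw [eulerForm_apply, sum_arrows, Finset.mul_sum, Finset.sum_erase_add _ _ (Finset.mem_univ i),
    sub_sub]

/-- The simple reflection at the vertex `i`, in the form valid when `i` is a sink. -/
noncomputable def reflection (v : Fin n → ℤ) : Fin n → ℤ :=
  Function.update v i (∑ a ∈ Q.arrowsInto i, v (Q.tl a) - v i)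

variable {Q i}

lemma reflection_of_ne (v : Fin n → ℤ) {j : Fin n} (h : j ≠ i) : Q.reflection i v j = v j :=
  Function.update_of_ne h _ _

lemma reflection_self (v : Fin n → ℤ) :
    Q.reflection i v i = ∑ a ∈ Q.arrowsInto i, v (Q.tl a) - v i :=
  Function.update_self ..

lemma reflection_self_eq_neg_eulerForm (v : Fin n → ℤ) :
    Q.reflection i v i = -Q.eulerForm v (Pi.single i 1) := by
  rw [reflection_self, eulerForm_single_right]; ring

section Sink

variable (hsink : ∀ a, Q.tl a ≠ i)
include hsink

lemma sum_reflection_tl (s : Finset Q.Arr) (v : Fin n → ℤ) :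
    ∑ a ∈ s, Q.reflection i v (Q.tl a) = ∑ a ∈ s, v (Q.tl a) :=
  Finset.sum_congr rfl fun a _ => reflection_of_ne v (hsink a)

lemma reflection_involutive : Function.Involutive (Q.reflection i) := by
  intro v
  ext j
  rcases eq_or_ne j i with rfl | hj
  · rw [reflection_self, sum_reflection_tl hsink, reflection_self]; ring
  · rw [reflection_of_ne _ hj, reflection_of_ne _ hj]

lemma reflection_single : Q.reflection i (Pi.single i 1) = -Pi.single i 1 := by
  ext j
  rcases eq_or_ne j i with rfl | hj
  · simp [reflection_self, Pi.single_eq_of_ne (hsink _)]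
  · rw [reflection_of_ne _ hj]; simp [hj]

lemma reflection_neg_single : Q.reflection i (-Pi.single i 1) = Pi.single i 1 := by
  rw [← reflection_single hsink, reflection_involutive hsink]

lemma eulerForm_reflection (α β : Fin n → ℤ) :
    (Q.reverseInto i).eulerForm (Q.reflection i α) (Q.reflection i β) = Q.eulerForm α β := by
  have sum_verts : ∑ j ∈ Finset.univ.erase i, Q.reflection i α j * Q.reflection i β j =
      ∑ j ∈ Finset.univ.erase i, α j * β j := Finset.sum_congr rfl fun j hj => by
    rw [reflection_of_ne _ (Finset.ne_of_mem_erase hj),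
      reflection_of_ne _ (Finset.ne_of_mem_erase hj)]
  have sum_arrows : ∑ a ∈ (Q.arrowsInto i)ᶜ,
        Q.reflection i α (Q.tl a) * Q.reflection i β (Q.hd a) =
      ∑ a ∈ (Q.arrowsInto i)ᶜ, α (Q.tl a) * β (Q.hd a) := Finset.sum_congr rfl fun a ha => by
    rw [reflection_of_ne _ (hsink a), reflection_of_ne _ ((Q.mem_compl_arrowsInto i).1 ha)]
  rw [eulerForm_reverseInto, eulerForm_eq_sum_compl_arrowsInto Q i, sum_reflection_tl hsink,
    reflection_self, reflection_self, sum_verts, sum_arrows]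
  ring

lemma eulerForm_single_left_of_sink (v : Fin n → ℤ) : Q.eulerForm (Pi.single i 1) v = v i := by
  simp [eulerForm_single_left, hsink]

end Sink

end EulerForm

section RootLists

/-- `L` lists the positive roots of a quiver with positive definite Tits form, in an order such that
`χ(x, y) ≤ 0 ≤ χ(y, x)` whenever `x` precedes `y`. -/
structure IsRootList (Q : FinQuiver n) (L : List (Fin n → ℤ)) : Prop where
  pos : ∀ v, v ≠ 0 → 0 < Q.eulerForm v v
  nodup : L.Nodup
  pairwise : L.Pairwise fun x y => Q.eulerForm x y ≤ 0 ∧ 0 ≤ Q.eulerForm y x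
  mem_iff : ∀ v, v ∈ L ↔ (∀ i, 0 ≤ v i) ∧ Q.eulerForm v v = 1

namespace IsRootList

variable {Q : FinQuiver n} {L : List (Fin n → ℤ)} {i : Fin n}

lemma sum_single_hd_pos {a : Q.Arr} {j k : Fin n} (htl : Q.tl a = j) (hhd : Q.hd a = k) :
    0 < ∑ b with Q.tl b = j, (Pi.single k 1 : Fin n → ℤ) (Q.hd b) := by
  have nonneg : (0 : Fin n → ℤ) ≤ Pi.single k 1 := Pi.single_nonneg.2 zero_le_one
  refine Finset.sum_pos' (fun b _ => nonneg _) ⟨a, by simpa using htl, ?_⟩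
  simp [hhd]

lemma hd_ne_tl (h : Q.IsRootList L) (a : Q.Arr) : Q.hd a ≠ Q.tl a := by
  intro hloop
  have tits_pos := h.pos (Pi.single (Q.tl a) 1) (by simp)
  rw [eulerForm_single_left, Pi.single_eq_same] at tits_pos
  have := sum_single_hd_pos rfl hloop
  omega

lemma single_mem (h : Q.IsRootList L) (j : Fin n) : Pi.single j 1 ∈ L := by
  refine (h.mem_iff _).2 ⟨(Pi.single_nonneg (α := fun _ => ℤ)).2 zero_le_one, ?_⟩
  rw [eulerForm_single_left, Finset.sum_eq_zero, Pi.single_eq_same, sub_zero]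
  intro a ha
  exact Pi.single_eq_of_ne ((h.hd_ne_tl a).trans_eq (Finset.mem_filter.1 ha).2) _

lemma eulerForm_nonpos_of_mem {x y : Fin n → ℤ} (h : Q.IsRootList (L ++ [x])) (hy : y ∈ L) :
    Q.eulerForm y x ≤ 0 ∧ 0 ≤ Q.eulerForm x y :=
  (List.pairwise_append.1 h.pairwise).2.2 y hy x (List.mem_singleton_self x)

lemma last_eq_single {x : Fin n → ℤ} (h : Q.IsRootList (L ++ [x])) :
    ∃ i, x = Pi.single i 1 := by
  by_contra! hne
  obtain ⟨x_nonneg, x_tits⟩ := (h.mem_iff x).1 (by simp)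
  have tits_nonpos : Q.eulerForm x x ≤ 0 := by
    rw [eulerForm_eq_sum_single]
    refine Finset.sum_nonpos fun j _ =>
      mul_nonpos_of_nonneg_of_nonpos (x_nonneg j) (h.eulerForm_nonpos_of_mem ?_).1
    exact (List.mem_append.1 (h.single_mem j)).resolve_right fun hj =>
      hne j (List.mem_singleton.1 hj).symm
  omega

lemma tl_ne_of_last (h : Q.IsRootList (L ++ [Pi.single i 1])) (a : Q.Arr) : Q.tl a ≠ i := by
  rintro rfl
  have hne := h.hd_ne_tl a
  have hd_mem : Pi.single (Q.hd a) 1 ∈ L :=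
    (List.mem_append.1 (h.single_mem (Q.hd a))).resolve_right fun hmem => by
      simpa [hne] using congrFun (List.mem_singleton.1 hmem) (Q.hd a)
  have euler_nonneg := (h.eulerForm_nonpos_of_mem hd_mem).2
  rw [eulerForm_single_left, Pi.single_eq_of_ne hne.symm] at euler_nonneg
  have := sum_single_hd_pos (Q := Q) (a := a) rfl rfl
  omega

variable (h : Q.IsRootList (L ++ [Pi.single i 1]))
include h

lemma reflection_nonneg {w : Fin n → ℤ} (hw : w ∈ L) (j : Fin n) : 0 ≤ Q.reflection i w j := by
  rcases eq_or_ne j i with rfl | hj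
  · rw [reflection_self_eq_neg_eulerForm, neg_nonneg]
    exact (h.eulerForm_nonpos_of_mem hw).1
  · rw [reflection_of_ne _ hj]
    exact ((h.mem_iff w).1 (by simp [hw])).1 j

-- The Tits form of `w + e_i` is `2 + 2 * w i - ∑_{h(a) = i} w (t(a))`, which is not positive.
lemma eq_neg_single_of_apply_neg {w : Fin n → ℤ} (hne : ∀ j, j ≠ i → 0 ≤ w j)
    (htits : Q.eulerForm w w = 1) (hneg : w i < 0) : w = -Pi.single i 1 := by
  refine eq_neg_of_add_eq_zero_left (of_not_not fun hsum => ?_)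
  have single_tits := ((h.mem_iff (Pi.single i 1)).1 (by simp)).2
  have tits_pos := h.pos _ hsum
  rw [map_add, map_add, LinearMap.add_apply, LinearMap.add_apply, htits, single_tits,
    eulerForm_single_left_of_sink h.tl_ne_of_last, eulerForm_single_right] at tits_pos
  have : 0 ≤ ∑ a ∈ Q.arrowsInto i, w (Q.tl a) :=
    Finset.sum_nonneg fun a _ => hne _ (h.tl_ne_of_last a)
  omega

lemma mem_reverseInto_iff (v : Fin n → ℤ) :
    v ∈ Pi.single i 1 :: L.map (Q.reflection i) ↔
      (∀ j, 0 ≤ v j) ∧ (Q.reverseInto i).eulerForm v v = 1 := by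
  have hsink := h.tl_ne_of_last
  have single_tits := ((h.mem_iff (Pi.single i 1)).1 (by simp)).2
  rw [List.mem_cons, List.mem_map]
  constructor
  · rintro (rfl | ⟨w, hw, rfl⟩)
    · refine ⟨(Pi.single_nonneg (α := fun _ => ℤ)).2 zero_le_one, ?_⟩
      rw [← reflection_neg_single hsink, eulerForm_reflection hsink]
      simpa using single_tits
    · rw [eulerForm_reflection hsink]
      exact ⟨h.reflection_nonneg hw, ((h.mem_iff w).1 (by simp [hw])).2⟩
  · rintro ⟨v_nonneg, v_tits⟩
    obtain ⟨w, rfl⟩ := (reflection_involutive hsink).surjective v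
    rw [eulerForm_reflection hsink] at v_tits
    have w_nonneg : ∀ j, j ≠ i → 0 ≤ w j := fun j hj => by
      simpa [reflection_of_ne _ hj] using v_nonneg j
    rcases lt_or_ge (w i) 0 with hneg | hi
    · left
      rw [h.eq_neg_single_of_apply_neg w_nonneg v_tits hneg, reflection_neg_single hsink]
    · have w_mem : w ∈ L ++ [Pi.single i 1] := (h.mem_iff w).2 ⟨fun j => by
        rcases eq_or_ne j i with rfl | hj
        exacts [hi, w_nonneg j hj], v_tits⟩
      refine Or.inr ⟨w, (List.mem_append.1 w_mem).resolve_right fun hw => ?_, rfl⟩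
      have := v_nonneg i
      rw [List.mem_singleton.1 hw, reflection_single hsink] at this
      simp at this

theorem reverseInto : (Q.reverseInto i).IsRootList (Pi.single i 1 :: L.map (Q.reflection i)) := by
  have hsink := h.tl_ne_of_last
  have hinj := (reflection_involutive hsink).injective
  refine ⟨fun v hv => ?_, List.nodup_cons.2 ⟨fun hmem => ?_, ?_⟩,
    List.pairwise_cons.2 ⟨fun x hx => ?_, ?_⟩, h.mem_reverseInto_iff⟩
  · obtain ⟨w, rfl⟩ := (reflection_involutive hsink).surjective v
    rw [eulerForm_reflection hsink]
    refine h.pos w ?_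
    rintro rfl
    simp [reflection] at hv
  · obtain ⟨w, hw, hw_eq⟩ := List.mem_map.1 hmem
    rw [← reflection_neg_single hsink] at hw_eq
    have := ((h.mem_iff w).1 (by simp [hw])).1 i
    simp [hinj hw_eq] at this
  · exact (List.nodup_append.1 h.nodup).1.map hinj
  · obtain ⟨w, hw, rfl⟩ := List.mem_map.1 hx
    rw [← reflection_neg_single hsink, eulerForm_reflection hsink, eulerForm_reflection hsink]
    simpa using (h.eulerForm_nonpos_of_mem hw).symm
  · refine List.pairwise_map.2 ((List.pairwise_append.1 h.pairwise).1.imp fun hxy => ?_)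
    rwa [eulerForm_reflection hsink, eulerForm_reflection hsink]

end IsRootList

end RootLists

end FinQuiver

/-! ### Euler classes attached to roots -/

namespace FinQuiver

section RootVanishing

variable (Q : FinQuiver n) (i : Fin n) (K δ : Fin n → ℕ)

/-- The dimension vector of the kernel after reflecting, at the sink `i`, a generic surjection with
kernel of dimension vector `K`. The subtraction is truncated. -/
noncomputable def reflectKernel : Fin n → ℕ :=
  Function.update K i ((∑ a ∈ Q.arrowsInto i, K (Q.tl a)) - K i)

/-- The dimension vector of the quotient that together with `Q.reflectKernel i K` adds up to the
reflection of `K + δ` at `i`. -/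
noncomputable def reflectQuotient : Fin n → ℕ :=
  Function.update δ i ((∑ a ∈ Q.arrowsInto i, (K (Q.tl a) + δ (Q.tl a))) - (K i + δ i) -
    Q.reflectKernel i K i)

variable {Q i K δ}

lemma reflectKernel_self :
    Q.reflectKernel i K i = (∑ a ∈ Q.arrowsInto i, K (Q.tl a)) - K i :=
  Function.update_self ..

lemma reflectKernel_of_ne {j : Fin n} (hj : j ≠ i) : Q.reflectKernel i K j = K j :=
  Function.update_of_ne hj _ _

lemma reflectQuotient_self : Q.reflectQuotient i K δ i =
    (∑ a ∈ Q.arrowsInto i, (K (Q.tl a) + δ (Q.tl a))) - (K i + δ i) - Q.reflectKernel i K i :=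
  Function.update_self ..

lemma reflectQuotient_of_ne {j : Fin n} (hj : j ≠ i) : Q.reflectQuotient i K δ j = δ j :=
  Function.update_of_ne hj _ _

section Reflected

variable (hδ : δ i ≤ ∑ a ∈ Q.arrowsInto i, δ (Q.tl a))
  (hKδ : K i + δ i ≤ ∑ a ∈ Q.arrowsInto i, (K (Q.tl a) + δ (Q.tl a)))
include hδ hKδ

lemma reflectKernel_add_reflectQuotient :
    Q.reflectKernel i K i + Q.reflectQuotient i K δ i + (K i + δ i) =
      ∑ a ∈ Q.arrowsInto i, (K (Q.tl a) + δ (Q.tl a)) := by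
  rw [reflectQuotient_self, reflectKernel_self]
  rw [Finset.sum_add_distrib] at hKδ ⊢
  omega

lemma reflectKernel_add_reflectQuotient_eq_reflection {β : Fin n → ℤ}
    (hβ : ∀ j, (K j : ℤ) + δ j = β j) (j : Fin n) :
    (Q.reflectKernel i K j : ℤ) + Q.reflectQuotient i K δ j = Q.reflection i β j := by
  rcases eq_or_ne j i with rfl | hj
  · have sum_eq := congrArg (Nat.cast (R := ℤ)) (reflectKernel_add_reflectQuotient hδ hKδ)
    push_cast [hβ] at sum_eq
    rw [reflection_self, ← sum_eq, add_sub_cancel_right]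
  · rw [reflectKernel_of_ne hj, reflectQuotient_of_ne hj, reflection_of_ne _ hj, hβ]

lemma coe_reflectQuotient (hsink : ∀ a, Q.tl a ≠ i) :
    (fun j => (Q.reflectQuotient i K δ j : ℤ)) =
      Q.reflection i ((fun j => (δ j : ℤ)) +
        ((K i - ∑ a ∈ Q.arrowsInto i, K (Q.tl a) : ℕ) : ℤ) • Pi.single i 1) := by
  ext j
  rcases eq_or_ne j i with rfl | hj
  · rw [reflection_self, reflectQuotient_self, reflectKernel_self]
    rw [Finset.sum_add_distrib] at hKδ ⊢
    simp only [Pi.add_apply, Pi.smul_apply, Pi.single_eq_of_ne (hsink _), Pi.single_eq_same,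
      smul_eq_mul, mul_zero, mul_one, add_zero, ← Nat.cast_sum]
    omega
  · rw [reflection_of_ne _ hj, reflectQuotient_of_ne hj]
    simp [hj]

lemma eulerForm_reflectQuotient_pos (hsink : ∀ a, Q.tl a ≠ i) {b : Fin n → ℤ} (hb : 0 ≤ b i)
    (hpos : 0 < Q.eulerForm (fun j => (δ j : ℤ)) b) :
    0 < (Q.reverseInto i).eulerForm (fun j => (Q.reflectQuotient i K δ j : ℤ))
      (Q.reflection i b) := by
  rw [coe_reflectQuotient hδ hKδ hsink, eulerForm_reflection hsink, map_add, map_smul,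
    LinearMap.add_apply, LinearMap.smul_apply, eulerForm_single_left_of_sink hsink, smul_eq_mul]
  positivity

end Reflected

lemma reflectKernel_ne_zero (hsink : ∀ a, Q.tl a ≠ i) {b : Fin n → ℤ}
    (hb : Q.eulerForm b b = 1) (hKδ : ∀ j, (K j : ℤ) + δ j = b j) (hK : K ≠ 0)
    (hpos : 0 < Q.eulerForm (fun j => (δ j : ℤ)) b) : Q.reflectKernel i K ≠ 0 := by
  intro hzero
  have K_of_ne : ∀ j, j ≠ i → K j = 0 := fun j hj => by
    rw [← reflectKernel_of_ne (Q := Q) (K := K) hj, hzero, Pi.zero_apply]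
  have K_self_ne : K i ≠ 0 := fun hi => hK <| funext fun j => by
    rcases eq_or_ne j i with rfl | hj
    exacts [hi, K_of_ne j hj]
  have δ_eq : (fun j => (δ j : ℤ)) = b - (K i : ℤ) • Pi.single i 1 := by
    ext j
    rcases eq_or_ne j i with rfl | hj
    · simp [← hKδ]
    · simp [← hKδ, hj, K_of_ne j hj]
  rw [δ_eq, map_sub, map_smul, LinearMap.sub_apply, LinearMap.smul_apply, hb,
    eulerForm_single_left_of_sink hsink, smul_eq_mul, ← hKδ i] at hpos
  have : (1 : ℤ) ≤ K i := by omega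
  nlinarith

namespace IsRootList

lemma eulerClassVanishes_of_last {L : List (Fin n → ℤ)} {b : Fin n → ℤ}
    (h : Q.IsRootList (L ++ [b])) {β : Fin n → ℤ} (hβ : β ∈ L ∨ β = b ∧ K ≠ 0)
    (hKδ : ∀ j, (K j : ℤ) + δ j = β j) (hpos : 0 < Q.eulerForm (fun j => (δ j : ℤ)) b) :
    Q.EulerClassVanishes.{u} K δ := by
  obtain ⟨i, rfl⟩ := h.last_eq_single
  rw [eulerForm_single_right] at hpos
  rcases hβ with hβ | ⟨rfl, hK⟩
  · have euler_nonpos := (h.eulerForm_nonpos_of_mem hβ).1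
    simp only [eulerForm_single_right, ← hKδ] at euler_nonpos
    refine eulerClassVanishes_of_sum_lt (i := i) ?_ ?_ <;> zify <;> omega
  · refine absurd (funext fun j => ?_) hK
    have sum_nonneg : 0 ≤ ∑ a ∈ Q.arrowsInto i, (δ (Q.tl a) : ℤ) := by positivity
    have hj := hKδ j
    rcases eq_or_ne j i with rfl | hne
    · rw [Pi.single_eq_same] at hj
      exact Nat.eq_zero_of_le_zero (by omega)
    · rw [Pi.single_eq_of_ne hne] at hj
      exact Nat.eq_zero_of_le_zero (by omega)

-- The last root is simple at a sink. Unless it is `b` itself, either the Euler class vanishes for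
-- degree reasons at that sink, or reflecting there moves that root to the front of the list.
theorem eulerClassVanishes (L₂ : List (Fin n → ℤ)) :
    ∀ (Q : FinQuiver n) (L₁ : List (Fin n → ℤ)) (b : Fin n → ℤ) (K δ : Fin n → ℕ) (β : Fin n → ℤ),
      Q.IsRootList (L₁ ++ b :: L₂) → (β ∈ L₁ ∨ β = b ∧ K ≠ 0) → (∀ j, (K j : ℤ) + δ j = β j) →
      0 < Q.eulerForm (fun j => (δ j : ℤ)) b → Q.EulerClassVanishes.{u} K δ := by
  induction hlen : L₂.length generalizing L₂ with
  | zero =>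
    intro Q L₁ b K δ β h hβ hKδ hpos
    rw [List.length_eq_zero_iff.1 hlen] at h
    exact h.eulerClassVanishes_of_last hβ hKδ hpos
  | succ N ih =>
    intro Q L₁ b K δ β h hβ hKδ hpos
    obtain ⟨L₃, x, rfl⟩ := L₂.eq_nil_or_concat.resolve_left (by rintro rfl; simp at hlen)
    have h' : Q.IsRootList ((L₁ ++ b :: L₃) ++ [x]) := by simpa using h
    obtain ⟨i, rfl⟩ := h'.last_eq_single
    have hsink := h'.tl_ne_of_last
    have euler_nonpos := (h'.eulerForm_nonpos_of_mem (y := β) (by aesop)).1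
    obtain ⟨b_nonneg, b_tits⟩ := (h.mem_iff b).1 (by simp)
    have hle : K i + δ i ≤ ∑ a ∈ Q.arrowsInto i, (K (Q.tl a) + δ (Q.tl a)) := by
      simp only [eulerForm_single_right, ← hKδ] at euler_nonpos
      zify; omega
    rcases lt_or_ge (∑ a ∈ Q.arrowsInto i, δ (Q.tl a)) (δ i) with hlt | hge
    · exact eulerClassVanishes_of_sum_lt hlt hle
    refine EulerClassVanishes.of_reverseInto hsink (fun _ => reflectKernel_of_ne)
      (fun _ => reflectQuotient_of_ne) reflectKernel_self
      (reflectKernel_add_reflectQuotient hge hle) ?_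
    refine ih (L₃.map (Q.reflection i)) (by simpa using hlen) _
      (Pi.single i 1 :: L₁.map (Q.reflection i)) (Q.reflection i b) _ _ (Q.reflection i β)
      (by simpa using h'.reverseInto) ?_
      (reflectKernel_add_reflectQuotient_eq_reflection hge hle hKδ)
      (eulerForm_reflectQuotient_pos hge hle hsink (b_nonneg i) hpos)
    rcases hβ with hmem | ⟨rfl, hK⟩
    · exact Or.inl (List.mem_cons_of_mem _ (List.mem_map_of_mem hmem))
    · exact Or.inr ⟨rfl, reflectKernel_ne_zero hsink b_tits hKδ hK hpos⟩

end IsRootList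

end RootVanishing

end FinQuiver

/-! ### Root lists from Reineke orders -/

namespace SubqPartition

section EulerFormOfParts

variable {Q : FinQuiver n} {ℓ : ℕ} (P : SubqPartition Q ℓ)

/-- The quiver on the vertices of `Q` whose arrows are those lying inside a part, i.e. the disjoint
union of the parts. -/
noncomputable def innerQuiver : FinQuiver n where
  Arr := {a : Q.Arr // a ∈ P.arrs}
  hd a := Q.hd a
  tl a := Q.tl a

@[to_additive]
lemma prod_innerQuiver {M : Type*} [CommMonoid M] (f : Q.Arr → M) :
    ∏ a : P.innerQuiver.Arr, f a.1 = ∏ a ∈ P.arrs, f a :=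
  Finset.prod_coe_sort P.arrs f

lemma eulerForm_innerQuiver (α β : Fin n → ℤ) :
    P.innerQuiver.eulerForm α β = ∑ j, (P.part j).eulerZ α β := by
  have univ_eq :
      (Finset.univ : Finset (Fin n)) = Finset.univ.biUnion fun j => (P.part j).verts := by
    ext i
    simpa using (P.cover i).exists
  have arrows_disjoint : (Set.univ : Set (Fin ℓ)).PairwiseDisjoint fun j => (P.part j).arrows :=
    fun j _ j' _ hne => Finset.disjoint_left.2 fun a ha ha' => hne <|
      (P.cover _).unique ((P.part j).hd_mem a ha) ((P.part j').hd_mem a ha')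
  have verts_disjoint : (Set.univ : Set (Fin ℓ)).PairwiseDisjoint fun j => (P.part j).verts :=
    fun j _ j' _ hne => Finset.disjoint_left.2 fun i hi hi' => hne <| (P.cover i).unique hi hi'
  simp only [Subquiver.eulerZ, Finset.sum_sub_distrib]
  rw [FinQuiver.eulerForm_apply, univ_eq, Finset.sum_biUnion (by simpa using verts_disjoint)]
  congr 1
  refine (P.sum_innerQuiver fun a => α (Q.tl a) * β (Q.hd a)).trans ?_
  rw [arrs, Finset.sum_biUnion (by simpa using arrows_disjoint)]

end EulerFormOfParts

end SubqPartition

namespace Subquiver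

section EulerForm

variable {Q : FinQuiver n} (Q' : Subquiver Q)

lemma eulerZ_congr {v v' w w' : Fin n → ℤ} (hv : ∀ i ∈ Q'.verts, v i = v' i)
    (hw : ∀ i ∈ Q'.verts, w i = w' i) : Q'.eulerZ v w = Q'.eulerZ v' w' := by
  unfold eulerZ
  congr 1
  · exact Finset.sum_congr rfl fun i hi => by rw [hv i hi, hw i hi]
  · exact Finset.sum_congr rfl fun a ha => by rw [hv _ (Q'.tl_mem a ha), hw _ (Q'.hd_mem a ha)]

lemma eulerZ_eq_zero_left {v : Fin n → ℤ} (w : Fin n → ℤ) (hv : ∀ i ∈ Q'.verts, v i = 0) :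
    Q'.eulerZ v w = 0 := by
  rw [Q'.eulerZ_congr (v' := 0) (w' := w) hv fun _ _ => rfl]
  simp [eulerZ]

lemma eulerZ_eq_zero_right (v : Fin n → ℤ) {w : Fin n → ℤ} (hw : ∀ i ∈ Q'.verts, w i = 0) :
    Q'.eulerZ v w = 0 := by
  rw [Q'.eulerZ_congr (v' := v) (w' := 0) (fun _ _ => rfl) hw]
  simp [eulerZ]

variable {Q'}

lemma PosDefTits.eulerZ_pos (h : Q'.PosDefTits) {v : Fin n → ℤ} {i : Fin n} (hi : i ∈ Q'.verts)
    (hv : v i ≠ 0) : 0 < Q'.eulerZ v v := by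
  let w : Fin n → ℤ := fun k => if k ∈ Q'.verts then v k else 0
  have hw : ∀ k ∈ Q'.verts, v k = w k := fun k hk => (if_pos hk).symm
  rw [Q'.eulerZ_congr hw hw]
  refine h w (fun k hk => if_neg hk) fun hzero => hv ?_
  rw [hw i hi, hzero, Pi.zero_apply]

lemma PosDefTits.eulerZ_nonneg (h : Q'.PosDefTits) (v : Fin n → ℤ) : 0 ≤ Q'.eulerZ v v := by
  by_cases hv : ∀ i ∈ Q'.verts, v i = 0
  · rw [Q'.eulerZ_eq_zero_left v hv]
  · push Not at hv
    obtain ⟨i, hi, hvi⟩ := hv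
    exact (h.eulerZ_pos hi hvi).le

end EulerForm

end Subquiver

namespace SubqPartition

section DynkinParts

variable {Q : FinQuiver n} {ℓ : ℕ} {P : SubqPartition Q ℓ}

lemma eulerForm_innerQuiver_of_support {j : Fin ℓ} {v : Fin n → ℤ} (w : Fin n → ℤ)
    (hv : ∀ i, i ∉ (P.part j).verts → v i = 0) :
    P.innerQuiver.eulerForm v w = (P.part j).eulerZ v w := by
  rw [eulerForm_innerQuiver]
  refine Finset.sum_eq_single j (fun j' _ hne => ?_) (by simp)
  exact Subquiver.eulerZ_eq_zero_left _ w fun i hi =>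
    hv i fun hi' => hne ((P.cover i).unique hi hi')

lemma euler_eq_eulerForm_innerQuiver {j : Fin ℓ} (hfull : (P.part j).Full) {α β : Fin n → ℕ}
    (hα : ∀ i, i ∉ (P.part j).verts → α i = 0) (hβ : ∀ i, i ∉ (P.part j).verts → β i = 0) :
    Q.euler α β = P.innerQuiver.eulerForm (fun i => (α i : ℤ)) (fun i => (β i : ℤ)) := by
  rw [FinQuiver.euler, FinQuiver.eulerForm_apply]
  congr 1
  refine Eq.trans ?_ (P.sum_innerQuiver fun a => (α (Q.tl a) : ℤ) * β (Q.hd a)).symm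
  refine (Finset.sum_subset (Finset.subset_univ _) fun a _ ha => ?_).symm
  by_contra hne
  have tl_mem : Q.tl a ∈ (P.part j).verts := of_not_not fun h => hne (by simp [hα _ h])
  have hd_mem : Q.hd a ∈ (P.part j).verts := of_not_not fun h => hne (by simp [hβ _ h])
  exact ha (Finset.mem_biUnion.2 ⟨j, Finset.mem_univ _, hfull a hd_mem tl_mem⟩)

lemma Dynkin.eulerForm_pos (hDyn : P.Dynkin) {v : Fin n → ℤ} (hv : v ≠ 0) :
    0 < P.innerQuiver.eulerForm v v := by
  rw [eulerForm_innerQuiver]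
  obtain ⟨i, hi⟩ := Function.ne_iff.1 hv
  obtain ⟨j, hj, -⟩ := P.cover i
  exact Finset.sum_pos' (fun j _ => (hDyn j).2.2.eulerZ_nonneg v)
    ⟨j, Finset.mem_univ _, (hDyn j).2.2.eulerZ_pos hj hi⟩

lemma Dynkin.exists_support_of_eulerForm_eq_one (hDyn : P.Dynkin) {v : Fin n → ℤ}
    (hv : P.innerQuiver.eulerForm v v = 1) : ∃ j, ∀ i, i ∉ (P.part j).verts → v i = 0 := by
  have hne : v ≠ 0 := by rintro rfl; simp at hv
  obtain ⟨i, hi⟩ := Function.ne_iff.1 hne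
  obtain ⟨j, hj, -⟩ := P.cover i
  refine ⟨j, fun k hk => of_not_not fun hvk => ?_⟩
  obtain ⟨j', hj', -⟩ := P.cover k
  have pos_at_j := (hDyn j).2.2.eulerZ_pos hj hi
  have pos_at_j' := (hDyn j').2.2.eulerZ_pos hj' hvk
  have pair_le : ∑ l ∈ {j, j'}, (P.part l).eulerZ v v ≤ ∑ l, (P.part l).eulerZ v v :=
    Finset.sum_le_sum_of_subset_of_nonneg (Finset.subset_univ _)
      fun l _ _ => (hDyn l).2.2.eulerZ_nonneg v
  rw [Finset.sum_pair (by rintro rfl; exact hk hj'), ← eulerForm_innerQuiver, hv] at pair_le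
  omega

-- Positivity of the Tits form at `x + y` and `x - y` leaves `χ(x, y) + χ(y, x) ∈ {-1, 0, 1}`.
lemma Dynkin.eulerForm_nonpos_nonneg (hDyn : P.Dynkin) {x y : Fin n → ℤ} (hadd : x + y ≠ 0)
    (hsub : x - y ≠ 0) (hx : P.innerQuiver.eulerForm x x = 1)
    (hy : P.innerQuiver.eulerForm y y = 1)
    (hle : P.innerQuiver.eulerForm x y ≤ P.innerQuiver.eulerForm y x) :
    P.innerQuiver.eulerForm x y ≤ 0 ∧ 0 ≤ P.innerQuiver.eulerForm y x := by
  have pos_add := hDyn.eulerForm_pos hadd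
  have pos_sub := hDyn.eulerForm_pos hsub
  simp only [map_add, map_sub, LinearMap.add_apply, LinearMap.sub_apply, hx, hy]
    at pos_add pos_sub
  omega

end DynkinParts

end SubqPartition

namespace IsReinekeOrder

section RootList

variable {Q : FinQuiver n} {ℓ r : ℕ} {P : SubqPartition Q ℓ} {β : Fin r → Fin n → ℕ}
  {blk : Fin r → Fin ℓ} (hR : IsReinekeOrder P β blk)
include hR

lemma eulerForm_self (u : Fin r) :
    P.innerQuiver.eulerForm (fun i => (β u i : ℤ)) (fun i => (β u i : ℤ)) = 1 := by
  obtain ⟨-, hroot, -⟩ := hR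
  rw [SubqPartition.eulerForm_innerQuiver_of_support _ fun i hi => by
    rw [(hroot u).1 i hi, Nat.cast_zero]]
  exact (hroot u).2.2

lemma eulerForm_eq_zero_of_blk_ne {u v : Fin r} (hne : blk u ≠ blk v) :
    P.innerQuiver.eulerForm (fun i => (β u i : ℤ)) (fun i => (β v i : ℤ)) = 0 := by
  obtain ⟨-, hroot, -⟩ := hR
  rw [SubqPartition.eulerForm_innerQuiver_of_support _ fun i hi => by
    rw [(hroot u).1 i hi, Nat.cast_zero]]
  refine Subquiver.eulerZ_eq_zero_right _ _ fun i hi => ?_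
  rw [(hroot v).1 i fun hi' => hne ((P.cover i).unique hi hi'), Nat.cast_zero]

variable (hDyn : P.Dynkin)
include hDyn

lemma eulerForm_nonpos_nonneg {u v : Fin r} (huv : u < v) :
    P.innerQuiver.eulerForm (fun i => (β u i : ℤ)) (fun i => (β v i : ℤ)) ≤ 0 ∧
      0 ≤ P.innerQuiver.eulerForm (fun i => (β v i : ℤ)) (fun i => (β u i : ℤ)) := by
  rcases ne_or_eq (blk u) (blk v) with hne | hblk
  · rw [hR.eulerForm_eq_zero_of_blk_ne hne, hR.eulerForm_eq_zero_of_blk_ne hne.symm]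
    exact ⟨le_rfl, le_rfl⟩
  obtain ⟨-, hroot, hinj, -, hlam⟩ := id hR
  have supp_v := hblk ▸ (hroot v).1
  have hfull := (hDyn (blk u)).2.1
  refine hDyn.eulerForm_nonpos_nonneg (fun hzero => (hroot u).2.1 ?_)
    (fun hzero => huv.ne (hinj ?_)) (hR.eulerForm_self u) (hR.eulerForm_self v) ?_
  · ext i
    have := congrFun hzero i
    simp only [Pi.add_apply, Pi.zero_apply] at this ⊢
    omega
  · ext i
    exact Int.natCast_inj.1 (sub_eq_zero.1 (congrFun hzero i))
  · rw [← sub_nonneg, ← SubqPartition.euler_eq_eulerForm_innerQuiver hfull supp_v (hroot u).1,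
      ← SubqPartition.euler_eq_eulerForm_innerQuiver hfull (hroot u).1 supp_v]
    exact hlam u v huv hblk

lemma exists_eq_of_eulerForm_eq_one {v : Fin n → ℤ} (v_nonneg : ∀ i, 0 ≤ v i)
    (hv : P.innerQuiver.eulerForm v v = 1) : ∃ u, (fun i => (β u i : ℤ)) = v := by
  obtain ⟨j, hsupp⟩ := hDyn.exists_support_of_eulerForm_eq_one hv
  lift v to Fin n → ℕ using v_nonneg
  have v_ne : v ≠ 0 := by
    rintro rfl
    simp [FinQuiver.eulerForm_apply] at hv
  obtain ⟨u, rfl⟩ := hR.2.2.2.1 j v ⟨fun i hi => Int.natCast_eq_zero.1 (hsupp i hi), v_ne, by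
    rwa [← SubqPartition.eulerForm_innerQuiver_of_support _ hsupp]⟩
  exact ⟨u, rfl⟩

theorem isRootList : P.innerQuiver.IsRootList (List.ofFn fun u i => (β u i : ℤ)) where
  pos v hv := hDyn.eulerForm_pos hv
  nodup := List.nodup_ofFn.2 fun u v huv =>
    hR.2.2.1 (funext fun i => by exact_mod_cast congrFun huv i)
  pairwise := List.pairwise_ofFn.2 fun _ _ huv => hR.eulerForm_nonpos_nonneg hDyn huv
  mem_iff v := by
    rw [List.mem_ofFn]
    constructor
    · rintro ⟨u, rfl⟩
      exact ⟨fun i => Int.natCast_nonneg _, hR.eulerForm_self u⟩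
    · rintro ⟨v_nonneg, hv⟩
      exact hR.exists_eq_of_eulerForm_eq_one hDyn v_nonneg hv

theorem eulerClassVanishes {u k : Fin r} {K δ : Fin n → ℕ} (hKδ : ∀ j, K j + δ j = β u j)
    (huk : u < k ∨ u = k ∧ K ≠ 0)
    (hpos : 0 < P.innerQuiver.eulerForm (fun j => (δ j : ℤ)) (fun j => (β k j : ℤ))) :
    P.innerQuiver.EulerClassVanishes.{u} K δ := by
  have hL := hR.isRootList hDyn
  set L := List.ofFn fun u i => (β u i : ℤ) with L_def
  have hk : (k : ℕ) < L.length := by simp [L_def]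
  have split : L = L.take k ++ (fun i => (β k i : ℤ)) :: L.drop (k + 1) := by
    conv_lhs => rw [← List.take_append_drop k L, List.drop_eq_getElem_cons hk]
    simp [L_def]
  rw [split] at hL
  refine FinQuiver.IsRootList.eulerClassVanishes _ _ _ _ K δ (fun i => (β u i : ℤ)) hL ?_
    (fun j => by exact_mod_cast hKδ j) hpos
  rcases huk with hlt | ⟨rfl, hK⟩
  · exact Or.inl (List.mem_take_iff_getElem.2
      ⟨u, lt_min hlt (by simp [L_def]), by simp [L_def]⟩)
  · exact Or.inr ⟨rfl, hK⟩

end RootList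

end IsReinekeOrder

/-! ### Evaluating symmetric polynomials -/

section SymmetricEvaluation

lemma coeff_nodal_univ {σ A : Type*} [Fintype σ] [CommRing A] (x : σ → A) {k : ℕ}
    (hk : k ≤ Fintype.card σ) : (nodal Finset.univ x).coeff (Fintype.card σ - k) =
      (-1) ^ k * (Finset.univ.val.map x).esymm k := by
  have := Multiset.prod_X_sub_C_coeff (Finset.univ.val.map x) (k := Fintype.card σ - k) (by simp)
  rw [Multiset.map_map, Multiset.card_map, Finset.card_val, Finset.card_univ,
    Nat.sub_sub_self hk] at this
  exact this

lemma aeval_eq_of_nodal_univ_eq {σ A : Type*} [Fintype σ] [CommRing A] {F : MvPolynomial σ A}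
    (hF : F.IsSymmetric) {x y : σ → A} (h : nodal Finset.univ x = nodal Finset.univ y) :
    aeval x F = aeval y F := by
  obtain ⟨G, hG⟩ := esymmAlgHom_surjective (R := A) le_rfl ⟨F, hF⟩
  obtain rfl : aeval (fun i : Fin (Fintype.card σ) => esymm σ A (i + 1)) G = F := by
    rw [← esymmAlgHom_apply, hG]
  have esymm_eq : ∀ i : Fin (Fintype.card σ),
      aeval x (esymm σ A (i + 1)) = aeval y (esymm σ A (i + 1)) := fun i => by
    rw [aeval_esymm_eq_multiset_esymm, aeval_esymm_eq_multiset_esymm]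
    have coeff_eq := congrArg (Polynomial.coeff · (Fintype.card σ - (i + 1))) h
    simp only [coeff_nodal_univ _ (Nat.succ_le_of_lt i.2)] at coeff_eq
    exact (isUnit_neg_one.pow _).mul_left_cancel coeff_eq
  rw [← AlgHom.comp_apply, ← AlgHom.comp_apply, comp_aeval, comp_aeval]
  simp only [esymm_eq]

section OneVertex

variable {A : Type*} [CommRing A] [Algebra ℚ A] {γ : Fin n → ℕ} {f : PolyQ n}

/-- Evaluation at `g` of all variables other than `ω_{i,0}, …, ω_{i,γ i - 1}`. -/
noncomputable def evalOutside (γ : Fin n → ℕ) (i : Fin n) (g : Fin n × ℕ → A) :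
    PolyQ n →ₐ[ℚ] MvPolynomial (Fin (γ i)) A :=
  aeval fun p => if hp : p.1 = i ∧ p.2 < γ i then X ⟨p.2, hp.2⟩ else C (g p)

lemma aeval_eq_aeval_evalOutside {i : Fin n} {g g' : Fin n × ℕ → A}
    (h : ∀ p : Fin n × ℕ, p.1 ≠ i ∨ γ i ≤ p.2 → g p = g' p) (f : PolyQ n) :
    aeval g' f = aeval (fun k : Fin (γ i) => g' (i, k)) (evalOutside γ i g f) := by
  have hom_eq : aeval g' = ((aeval fun k : Fin (γ i) => g' (i, k) :
      MvPolynomial (Fin (γ i)) A →ₐ[A] A).restrictScalars ℚ).comp (evalOutside γ i g) := by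
    refine MvPolynomial.algHom_ext fun ⟨j, k⟩ => ?_
    simp only [AlgHom.comp_apply, evalOutside, aeval_X, AlgHom.restrictScalars_apply]
    split_ifs with hjk
    · rw [aeval_X]
      exact congrArg (fun j => g' (j, k)) hjk.1
    · rw [aeval_C, Algebra.algebraMap_self_apply, h]
      by_contra! hlt
      exact hjk hlt
  exact DFunLike.congr_fun hom_eq f

lemma extendDomain_fin_apply {N : ℕ} (σ : Equiv.Perm (Fin N)) {k : ℕ} (hk : k < N) :
    σ.extendDomain (p := (· < N)) Fin.equivSubtype k = σ ⟨k, hk⟩ := by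
  simpa using σ.extendDomain_apply_image (p := (· < N)) Fin.equivSubtype ⟨k, hk⟩

lemma extendDomain_fin_of_le {N : ℕ} (σ : Equiv.Perm (Fin N)) {k : ℕ} (hk : N ≤ k) :
    σ.extendDomain (p := (· < N)) Fin.equivSubtype k = k :=
  Equiv.Perm.extendDomain_apply_not_subtype _ _ (not_lt.2 hk)

lemma evalOutside_rename_vertexPerm (i : Fin n) (g : Fin n × ℕ → A) (σ : Equiv.Perm (Fin (γ i)))
    (f : PolyQ n) : evalOutside γ i g
      (rename (vertexPerm i (σ.extendDomain (p := (· < γ i)) Fin.equivSubtype)) f) =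
        rename σ (evalOutside γ i g f) := by
  have hom_eq : (evalOutside γ i g).comp
        (rename (vertexPerm i (σ.extendDomain (p := (· < γ i)) Fin.equivSubtype))) =
      ((rename σ : MvPolynomial (Fin (γ i)) A →ₐ[A] _).restrictScalars ℚ).comp
        (evalOutside γ i g) := by
    refine MvPolynomial.algHom_ext fun ⟨j, k⟩ => ?_
    simp only [AlgHom.comp_apply, evalOutside, aeval_X, rename_X, AlgHom.restrictScalars_apply,
      vertexPerm]
    rcases eq_or_ne j i with rfl | hj
    · rcases lt_or_ge k (γ j) with hk | hk
      · simp [hk, extendDomain_fin_apply σ hk]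
      · simp [extendDomain_fin_of_le σ hk, hk.not_gt]
    · simp [hj]
  exact DFunLike.congr_fun hom_eq f

lemma SymmIn.evalOutside_isSymmetric (hf : SymmIn γ f) (i : Fin n) (g : Fin n × ℕ → A) :
    (evalOutside γ i g f).IsSymmetric := fun σ => by
  rw [← evalOutside_rename_vertexPerm, hf]
  exact fun j hj => not_le.1 fun hle => hj (extendDomain_fin_of_le σ hle)

lemma SymmIn.aeval_eq_of_nodal_eq (hf : SymmIn γ f) {i : Fin n} {g g' : Fin n × ℕ → A}
    (hne : ∀ p : Fin n × ℕ, p.1 ≠ i ∨ γ i ≤ p.2 → g p = g' p)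
    (h : nodal (Finset.range (γ i)) (fun k => g (i, k)) =
      nodal (Finset.range (γ i)) fun k => g' (i, k)) : aeval g f = aeval g' f := by
  rw [aeval_eq_aeval_evalOutside (fun _ _ => rfl) f, aeval_eq_aeval_evalOutside hne f]
  refine aeval_eq_of_nodal_univ_eq (hf.evalOutside_isSymmetric i g) ?_
  unfold nodal at h ⊢
  rwa [Finset.prod_range, Finset.prod_range] at h

end OneVertex

section Hspace

variable {A : Type*} [CommRing A] [Algebra ℚ A] {γ : Fin n → ℕ} {f : PolyQ n}

theorem aeval_eq_of_mem_Hspace (hf : f ∈ Hspace γ) {g g' : Fin n × ℕ → A}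
    (h : ∀ i, nodal (Finset.range (γ i)) (fun k => g (i, k)) =
      nodal (Finset.range (γ i)) fun k => g' (i, k)) : aeval g f = aeval g' f := by
  let mixed (s : Finset (Fin n)) (p : Fin n × ℕ) : A :=
    if p.1 ∈ s ∧ p.2 < γ p.1 then g' p else g p
  have eval_mixed : ∀ s, aeval g f = aeval (mixed s) f := fun s => by
    induction s using Finset.induction_on with
    | empty => simp [mixed]
    | insert i s hi ih =>
      rw [ih]
      refine hf.2.aeval_eq_of_nodal_eq (i := i) (fun ⟨j, k⟩ hp => ?_) ?_
      · rcases eq_or_ne j i with rfl | hj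
        · simp [mixed, (hp.resolve_left (not_not.2 rfl)).not_gt]
        · simp [mixed, hj]
      · rw [nodal_congr (y := fun k => g (i, k)) (fun k _ => by simp [mixed, hi]), h i]
        exact nodal_congr fun k hk => by simp [mixed, Finset.mem_range.1 hk]
  rw [eval_mixed Finset.univ]
  exact eval₂Hom_congr' rfl (fun p hp _ => by simp [mixed, hf.1 p hp]) rfl

lemma prod_range_sort_getD {M : Type*} [CommMonoid M] (T : Finset ℕ) (F : ℕ → M) :
    ∏ k ∈ Finset.range T.card, F ((T.sort (· ≤ ·)).getD k 0) = ∏ j ∈ T, F j := by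
  rw [← Finset.length_sort (· ≤ ·), Finset.prod_range]
  conv_rhs => rw [← Finset.sort_toFinset T (· ≤ ·), List.prod_toFinset _ (Finset.sort_nodup _ _),
    ← Fin.prod_univ_fun_getElem]
  exact Finset.prod_congr rfl fun k _ => by rw [List.getD_eq_getElem _ _ k.2]

lemma aeval_substAlong (T : Fin n → Finset ℕ) (f : PolyQ n) (g : Fin n × ℕ → A) :
    aeval g (substAlong T f) =
      aeval (fun p : Fin n × ℕ => g (p.1, ((T p.1).sort (· ≤ ·)).getD p.2 0)) f := by
  rw [substAlong, ← AlgHom.comp_apply, comp_aeval]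
  simp only [aeval_X]

lemma nodal_range_sort {R : Type*} [CommRing R] {N : ℕ} {T : Finset ℕ} (hT : T.card = N)
    (x : ℕ → R) :
    nodal (Finset.range N) (fun k => x ((T.sort (· ≤ ·)).getD k 0)) = nodal T x := by
  rw [← hT]
  exact prod_range_sort_getD T fun k => Polynomial.X - Polynomial.C (x k)

theorem aeval_substAlong_eq_of_nodal_eq (hf : f ∈ Hspace γ) {g g' : Fin n × ℕ → A}
    {T T' : Fin n → Finset ℕ} (hT : ∀ i, (T i).card = γ i) (hT' : ∀ i, (T' i).card = γ i)
    (h : ∀ i, nodal (T i) (fun k => g (i, k)) = nodal (T' i) fun k => g' (i, k)) :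
    aeval g (substAlong T f) = aeval g' (substAlong T' f) := by
  rw [aeval_substAlong, aeval_substAlong]
  refine aeval_eq_of_mem_Hspace hf fun i => ?_
  rw [nodal_range_sort (hT i) fun k => g (i, k), nodal_range_sort (hT' i) fun k => g' (i, k), h i]

end Hspace

end SymmetricEvaluation

/-! ### Antisymmetric polynomials and the Vandermonde product -/

section Antisymmetric

variable {σ R : Type*} [CommRing R] {p q : σ}

lemma X_sub_X_dvd_iff [DecidableEq σ] {f : MvPolynomial σ R} :
    X q - X p ∣ f ↔ rename (Function.update id q p) f = 0 := by
  constructor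
  · rintro ⟨g, rfl⟩
    have update_eq : Function.update id q p q = Function.update id q p p := by
      rcases eq_or_ne p q with rfl | hpq
      · rfl
      · rw [Function.update_self, Function.update_of_ne hpq, id]
    rw [map_mul, map_sub, rename_X, rename_X, update_eq, sub_self, zero_mul]
  · intro hf
    let I : Ideal (MvPolynomial σ R) := Ideal.span {X q - X p}
    have mk_comp : (Ideal.Quotient.mkₐ R I).comp (rename (Function.update id q p)) =
        Ideal.Quotient.mkₐ R I := by
      refine MvPolynomial.algHom_ext fun k => ?_
      rw [AlgHom.comp_apply, rename_X, Ideal.Quotient.mkₐ_eq_mk]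
      rcases eq_or_ne k q with rfl | hk
      · rw [Function.update_self, eq_comm, Ideal.Quotient.mk_eq_mk_iff_sub_mem]
        exact Ideal.mem_span_singleton_self _
      · rw [Function.update_of_ne hk, id]
    rw [← Ideal.mem_span_singleton, ← Ideal.Quotient.eq_zero_iff_mem]
    simpa [hf] using (DFunLike.congr_fun mk_comp f).symm

variable [IsDomain R]

lemma prime_X_sub_X (hpq : p ≠ q) : Prime (X q - X p : MvPolynomial σ R) := by
  refine ⟨sub_ne_zero.2 fun h => hpq (X_injective h).symm, fun hu => ?_, fun f g hfg => ?_⟩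
  · simpa using X_sub_X_dvd_iff.1 (hu.dvd (a := 1))
  · simpa only [X_sub_X_dvd_iff, map_mul, mul_eq_zero] using hfg

lemma isRelPrime_X_sub_X {p' q' : σ} (hpq : p ≠ q) (hpq' : p' ≠ q') (hne : s(p, q) ≠ s(p', q')) :
    IsRelPrime (X q - X p : MvPolynomial σ R) (X q' - X p') := by
  rw [(prime_X_sub_X hpq).irreducible.isRelPrime_iff_not_dvd, X_sub_X_dvd_iff, map_sub, sub_eq_zero,
    rename_X, rename_X, (X_injective (R := R)).eq_iff]
  simp only [Function.update_apply, id]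
  grind [Sym2.eq_iff]

lemma prod_X_sub_X_dvd [UniqueFactorizationMonoid R] {ι : Type*} {s : Finset ι} {p q : ι → σ}
    (hpq : ∀ i ∈ s, p i ≠ q i)
    (hpair : (s : Set ι).Pairwise fun i j => s(p i, q i) ≠ s(p j, q j)) {f : MvPolynomial σ R}
    (hf : ∀ i ∈ s, X (q i) - X (p i) ∣ f) : ∏ i ∈ s, (X (q i) - X (p i)) ∣ f :=
  Finset.prod_dvd_of_isRelPrime (fun i hi j hj hij =>
    isRelPrime_X_sub_X (hpq i hi) (hpq j hj) (hpair hi hj hij)) hf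

lemma X_sub_X_dvd_of_rename_swap_eq_neg [DecidableEq σ] [CharZero R] {f : MvPolynomial σ R}
    (hf : rename (Equiv.swap p q) f = -f) : X q - X p ∣ f := by
  have update_comp_swap : Function.update id q p ∘ Equiv.swap p q = Function.update id q p := by
    funext k
    simp only [Function.comp_apply, Function.update_apply, Equiv.swap_apply_def, id]
    grind
  have rename_eq_neg := congrArg (rename (Function.update id q p)) hf
  rw [rename_rename, update_comp_swap, map_neg] at rename_eq_neg
  exact X_sub_X_dvd_iff.2 (self_eq_neg.1 rename_eq_neg)

end Antisymmetric

section Vandermonde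

variable {ι A : Type*} [LinearOrder ι] [CommRing A]

lemma vandermondeProd_eq_prod_ite (s : Finset ι) (x : ι → A) :
    vandermondeProd s x = ∏ k ∈ s, ∏ l ∈ s, if k < l then x l - x k else 1 := by
  simp only [vandermondeProd, Finset.prod_filter]

lemma vandermondeProd_ne_zero [IsDomain A] {x : ι → A} (hx : Function.Injective x) (s : Finset ι) :
    vandermondeProd s x ≠ 0 :=
  Finset.prod_ne_zero_iff.2 fun _ _ => Finset.prod_ne_zero_iff.2 fun _ hl =>
    sub_ne_zero.2 (hx.ne (Finset.mem_filter.1 hl).2.ne')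

lemma prod_prod_sub_dvd_vandermondeProd_union {s t : Finset ι} (hst : Disjoint s t) (x : ι → A) :
    ∏ l ∈ t, ∏ k ∈ s, (x l - x k) ∣ vandermondeProd (s ∪ t) x := by
  have crossing_pairs : ∏ l ∈ t, ∏ k ∈ s, (x l - x k) ∣
      (∏ k ∈ s, ∏ l ∈ t, if k < l then x l - x k else 1) *
        ∏ k ∈ t, ∏ l ∈ s, if k < l then x l - x k else 1 := by
    rw [Finset.prod_comm (s := s), ← Finset.prod_mul_distrib]
    simp only [← Finset.prod_mul_distrib]
    refine Finset.prod_dvd_prod_of_dvd _ _ fun l hl =>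
      Finset.prod_dvd_prod_of_dvd _ _ fun k hk => ?_
    rcases lt_trichotomy k l with hkl | rfl | hkl
    · simp [hkl, hkl.not_gt]
    · exact absurd hl (Finset.disjoint_left.1 hst hk)
    · simpa [hkl, hkl.not_gt] using dvd_sub_comm.1 (dvd_refl (x l - x k))
  rw [vandermondeProd_eq_prod_ite, Finset.prod_union hst]
  simp only [Finset.prod_union hst, Finset.prod_mul_distrib]
  refine crossing_pairs.trans (Dvd.intro_left
    ((∏ k ∈ s, ∏ l ∈ s, if k < l then x l - x k else 1) *
      ∏ k ∈ t, ∏ l ∈ t, if k < l then x l - x k else 1) ?_)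
  ring

lemma vandermondeProd_range (N : ℕ) (x : ℕ → A) :
    vandermondeProd (Finset.range N) x = (Matrix.vandermonde fun k : Fin N => x k).det := by
  rw [Matrix.det_vandermonde, vandermondeProd_eq_prod_ite, Finset.prod_range]
  refine Finset.prod_congr rfl fun k _ => ?_
  rw [Finset.prod_range, ← Finset.filter_lt_eq_Ioi, Finset.prod_filter]
  simp only [Fin.val_fin_lt]

lemma vandermondeProd_range_comp_swap {N a b : ℕ} (ha : a < N) (hb : b < N) (hab : a ≠ b)
    (x : ℕ → A) : vandermondeProd (Finset.range N) (x ∘ Equiv.swap a b) =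
      -vandermondeProd (Finset.range N) x := by
  let τ : Equiv.Perm (Fin N) := Equiv.swap ⟨a, ha⟩ ⟨b, hb⟩
  have sign_τ : Equiv.Perm.sign τ = -1 := Equiv.Perm.sign_swap (by simpa using hab)
  have det_eq := Matrix.det_permute τ (Matrix.vandermonde fun k : Fin N => x k)
  rw [sign_τ] at det_eq
  rw [vandermondeProd_range, vandermondeProd_range]
  refine Eq.trans (congrArg Matrix.det ?_) (det_eq.trans (by simp))
  ext k l
  simp [Matrix.vandermonde_apply, τ, Fin.val_injective.map_swap]

end Vandermonde

/-! ### The localization sum is a polynomial -/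

section Shuffles

variable {γ₁ γ₂ : Fin n → ℕ} {S : Fin n → Finset ℕ}

lemma mem_shuffles :
    S ∈ shuffles γ₁ γ₂ ↔ ∀ i, S i ⊆ Finset.range (γ₁ i + γ₂ i) ∧ (S i).card = γ₁ i := by
  simp [shuffles, Fintype.mem_piFinset]

lemma card_shuffleCompl (hS : S ∈ shuffles γ₁ γ₂) (i : Fin n) :
    (shuffleCompl γ₁ γ₂ S i).card = γ₂ i := by
  obtain ⟨hsub, hcard⟩ := mem_shuffles.1 hS i
  rw [shuffleCompl, Finset.card_sdiff_of_subset hsub, hcard, Finset.card_range,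
    Nat.add_sub_cancel_left]

lemma disjoint_shuffleCompl (γ₁ γ₂ : Fin n → ℕ) (S : Fin n → Finset ℕ) (i : Fin n) :
    Disjoint (S i) (shuffleCompl γ₁ γ₂ S i) :=
  Finset.disjoint_sdiff

lemma union_shuffleCompl (hS : S ∈ shuffles γ₁ γ₂) (i : Fin n) :
    S i ∪ shuffleCompl γ₁ γ₂ S i = Finset.range (γ₁ i + γ₂ i) :=
  Finset.union_sdiff_of_subset (mem_shuffles.1 hS i).1

end Shuffles

section VertexVandermonde

/-- The product over all vertices `i` of the Vandermonde products in `ω_{i,0}, …, ω_{i,Γ i - 1}`,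
a common denominator of the localization sum. -/
noncomputable def vertexVandermonde (Γ : Fin n → ℕ) : PolyQ n :=
  ∏ i, vandermondeProd (Finset.range (Γ i)) fun k => X (i, k)

lemma vertexVandermonde_ne_zero (Γ : Fin n → ℕ) : vertexVandermonde Γ ≠ 0 :=
  Finset.prod_ne_zero_iff.2 fun _ _ =>
    vandermondeProd_ne_zero (fun _ _ h => (Prod.mk.inj (X_injective h)).2) _

lemma interactionDen_dvd_vertexVandermonde {γ₁ γ₂ : Fin n → ℕ} {S : Fin n → Finset ℕ}
    (hS : S ∈ shuffles γ₁ γ₂) : interactionDen γ₁ γ₂ S ∣ vertexVandermonde (γ₁ + γ₂) :=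
  Finset.prod_dvd_prod_of_dvd _ _ fun i _ => by
    rw [Pi.add_apply, ← union_shuffleCompl hS i]
    exact prod_prod_sub_dvd_vandermondeProd_union (disjoint_shuffleCompl γ₁ γ₂ S i) _

lemma vertexVandermonde_dvd {Γ : Fin n → ℕ} {f : PolyQ n}
    (hf : ∀ i, ∀ a b, a < b → b < Γ i → X (i, b) - X (i, a) ∣ f) : vertexVandermonde Γ ∣ f := by
  let pairs : Finset ((_ : (_ : Fin n) × ℕ) × ℕ) :=
    (Finset.univ.sigma fun i => Finset.range (Γ i)).sigma fun c =>
      {l ∈ Finset.range (Γ c.1) | c.2 < l}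
  have mem_pairs : ∀ c ∈ pairs, c.1.2 < c.2 ∧ c.2 < Γ c.1.1 := fun c hc => by
    simp only [pairs, Finset.mem_sigma, Finset.mem_filter, Finset.mem_range] at hc
    exact ⟨hc.2.2, hc.2.1⟩
  have eq_prod : vertexVandermonde Γ = ∏ c ∈ pairs, (X (c.1.1, c.2) - X (c.1.1, c.1.2)) := by
    rw [Finset.prod_sigma, Finset.prod_sigma]
    rfl
  rw [eq_prod]
  refine prod_X_sub_X_dvd (fun c hc => ?_) (fun c hc d hd hcd heq => hcd ?_)
    fun c hc => hf _ _ _ (mem_pairs c hc).1 (mem_pairs c hc).2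
  · simpa using (mem_pairs c hc).1.ne
  · have hc := (mem_pairs c hc).1
    have hd := (mem_pairs d hd).1
    obtain ⟨⟨i, k⟩, l⟩ := c
    obtain ⟨⟨j, k'⟩, l'⟩ := d
    simp only [Sym2.eq_iff, Prod.mk.injEq] at heq
    grind

lemma rename_swap_vertexVandermonde {Γ : Fin n → ℕ} {i : Fin n} {a b : ℕ} (ha : a < Γ i)
    (hb : b < Γ i) (hab : a ≠ b) :
    rename (Equiv.swap (i, a) (i, b)) (vertexVandermonde Γ) = -vertexVandermonde Γ := by
  simp only [vertexVandermonde, ← AlgHom.coe_toRingHom, map_prod, map_vandermondeProd]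
  rw [← Finset.mul_prod_erase _ _ (Finset.mem_univ i),
    ← Finset.mul_prod_erase _ _ (Finset.mem_univ i), ← neg_mul]
  refine congrArg₂ (· * ·) ?_ (Finset.prod_congr rfl fun j hj => ?_)
  · rw [← vandermondeProd_range_comp_swap ha hb hab]
    refine vandermondeProd_congr fun k _ => ?_
    simp [← (Prod.mk_right_injective i).map_swap]
  · refine vandermondeProd_congr fun k _ => ?_
    have hji : j ≠ i := (Finset.mem_erase.1 hj).1
    simp [Equiv.swap_apply_of_ne_of_ne, hji]

end VertexVandermonde

section VertexPermutations

variable {γ₁ γ₂ : Fin n → ℕ}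

/-- The action on sets of variables of a family `π` of permutations, one for each vertex. -/
def permuteSets (π : Fin n → Equiv.Perm ℕ) : Equiv.Perm (Fin n → Finset ℕ) :=
  Equiv.piCongrRight fun i => (π i).finsetCongr

/-- The action on polynomials of a family `π` of permutations, one for each vertex. -/
noncomputable def permuteVars (π : Fin n → Equiv.Perm ℕ) : PolyQ n ≃ₐ[ℚ] PolyQ n :=
  renameEquiv ℚ (Equiv.prodShear (Equiv.refl (Fin n)) π)

lemma permuteSets_apply (π : Fin n → Equiv.Perm ℕ) (S : Fin n → Finset ℕ) (i : Fin n) :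
    permuteSets π S i = (S i).map (π i).toEmbedding := rfl

lemma permuteVars_X (π : Fin n → Equiv.Perm ℕ) (i : Fin n) (k : ℕ) :
    permuteVars π (X (i, k)) = X (i, π i k) :=
  rename_X _ _

lemma permuteVars_mulSingle (i : Fin n) (σ : Equiv.Perm ℕ) (f : PolyQ n) :
    permuteVars (Pi.mulSingle i σ) f = rename (vertexPerm i σ) f := by
  refine congrArg (fun e => rename e f) (funext fun ⟨j, k⟩ => ?_)
  rcases eq_or_ne j i with rfl | hj
  · simp [vertexPerm]
  · simp [vertexPerm, hj]

lemma permuteVars_substAlong {γ : Fin n → ℕ} {f : PolyQ n} (hf : f ∈ Hspace γ)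
    (π : Fin n → Equiv.Perm ℕ) {T : Fin n → Finset ℕ} (hT : ∀ i, (T i).card = γ i) :
    permuteVars π (substAlong T f) = substAlong (permuteSets π T) f := by
  rw [← aeval_X_left_apply (permuteVars π _), ← aeval_X_left_apply (substAlong (permuteSets π T) f)]
  refine (aeval_rename _ _ _).trans
    (aeval_substAlong_eq_of_nodal_eq hf hT (fun i => ?_) fun i => ?_)
  · rw [permuteSets_apply, Finset.card_map, hT]
  · rw [permuteSets_apply, nodal, nodal, Finset.prod_map]
    rfl

variable {π : Fin n → Equiv.Perm ℕ}
  (hπ : ∀ i, (Finset.range (γ₁ i + γ₂ i)).map (π i).toEmbedding = Finset.range (γ₁ i + γ₂ i))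
include hπ

lemma permuteSets_mem_shuffles_iff {S : Fin n → Finset ℕ} :
    S ∈ shuffles γ₁ γ₂ ↔ permuteSets π S ∈ shuffles γ₁ γ₂ := by
  simp only [mem_shuffles, permuteSets_apply, Finset.card_map]
  refine forall_congr' fun i => and_congr_left fun _ => ?_
  conv_rhs => rw [← hπ i, Finset.map_subset_map]

lemma shuffleCompl_permuteSets (S : Fin n → Finset ℕ) :
    shuffleCompl γ₁ γ₂ (permuteSets π S) = permuteSets π (shuffleCompl γ₁ γ₂ S) := by
  funext i
  rw [permuteSets_apply, shuffleCompl, shuffleCompl, permuteSets_apply, Finset.map_sdiff, hπ i]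

lemma permuteVars_interactionNum (Q : FinQuiver n) (S : Fin n → Finset ℕ) :
    permuteVars π (interactionNum Q γ₁ γ₂ S) = interactionNum Q γ₁ γ₂ (permuteSets π S) := by
  simp only [interactionNum, arrowFactor, shuffleCompl_permuteSets hπ, permuteSets_apply,
    Finset.prod_map, map_prod, map_sub, permuteVars_X, Equiv.coe_toEmbedding]

lemma permuteVars_interactionDen (S : Fin n → Finset ℕ) :
    permuteVars π (interactionDen γ₁ γ₂ S) = interactionDen γ₁ γ₂ (permuteSets π S) := by
  simp only [interactionDen, shuffleCompl_permuteSets hπ, permuteSets_apply,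
    Finset.prod_map, map_prod, map_sub, permuteVars_X, Equiv.coe_toEmbedding]

lemma ringEquiv_cohaMulRat (Q : FinQuiver n) {F f : PolyQ n} (hF : F ∈ Hspace γ₁)
    (hf : f ∈ Hspace γ₂) :
    IsFractionRing.ringEquivOfRingEquiv (K := FractionRing (PolyQ n)) (L := FractionRing (PolyQ n))
      (permuteVars π).toRingEquiv (cohaMulRat Q γ₁ γ₂ F f) = cohaMulRat Q γ₁ γ₂ F f := by
  rw [cohaMulRat, map_sum]
  refine Finset.sum_equiv (permuteSets π) (fun S => permuteSets_mem_shuffles_iff hπ) fun S hS => ?_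
  rw [map_div₀, IsFractionRing.ringEquivOfRingEquiv_algebraMap,
    IsFractionRing.ringEquivOfRingEquiv_algebraMap]
  simp only [AlgEquiv.coe_ringEquiv, map_mul]
  rw [permuteVars_interactionNum hπ, permuteVars_interactionDen hπ,
    permuteVars_substAlong hF π fun i => (mem_shuffles.1 hS i).2,
    permuteVars_substAlong hf π (card_shuffleCompl hS), shuffleCompl_permuteSets hπ]

end VertexPermutations

section Polynomiality

variable {γ₁ γ₂ : Fin n → ℕ} {Q : FinQuiver n} {F f : PolyQ n}

lemma map_range_mulSingle {Γ : Fin n → ℕ} {i : Fin n} {σ : Equiv.Perm ℕ}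
    (hσ : ∀ k, σ k ≠ k → k < Γ i) (j : Fin n) :
    (Finset.range (Γ j)).map (Pi.mulSingle (M := fun _ => Equiv.Perm ℕ) i σ j).toEmbedding =
      Finset.range (Γ j) := by
  refine Finset.map_perm fun k hk => ?_
  rcases eq_or_ne j i with rfl | hj
  · simpa using hσ k (by simpa using hk)
  · simp [hj] at hk

lemma vertexPerm_swap (i : Fin n) (a b : ℕ) :
    vertexPerm i (Equiv.swap a b) = Equiv.swap (i, a) (i, b) := by
  funext ⟨j, k⟩
  rcases eq_or_ne j i with rfl | hj
  · simp [vertexPerm, (Prod.mk_right_injective j).map_swap]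
  · simp [vertexPerm, hj, Equiv.swap_apply_of_ne_of_ne]

lemma exists_ringEquiv_fractionRing (hF : F ∈ Hspace γ₁) (hf : f ∈ Hspace γ₂) {i : Fin n}
    {σ : Equiv.Perm ℕ} (hσ : ∀ k, σ k ≠ k → k < γ₁ i + γ₂ i) :
    ∃ E : FractionRing (PolyQ n) ≃+* FractionRing (PolyQ n),
      (∀ P : PolyQ n, E (algebraMap _ _ P) = algebraMap _ _ (rename (vertexPerm i σ) P)) ∧
        E (cohaMulRat Q γ₁ γ₂ F f) = cohaMulRat Q γ₁ γ₂ F f :=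
  ⟨_, fun P => by
    rw [← permuteVars_mulSingle]
    exact IsFractionRing.ringEquivOfRingEquiv_algebraMap _ _,
    ringEquiv_cohaMulRat (map_range_mulSingle (Γ := γ₁ + γ₂) hσ) Q hF hf⟩

lemma exists_mul_interactionDen_eq (γ₁ γ₂ : Fin n → ℕ) : ∃ c : (Fin n → Finset ℕ) → PolyQ n,
    ∀ S ∈ shuffles γ₁ γ₂, interactionDen γ₁ γ₂ S * c S = vertexVandermonde (γ₁ + γ₂) := by
  choose! c hc using fun S (hS : S ∈ shuffles γ₁ γ₂) => interactionDen_dvd_vertexVandermonde hS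
  exact ⟨c, fun S hS => (hc S hS).symm⟩

lemma cohaMulRat_mul_vertexVandermonde {c : (Fin n → Finset ℕ) → PolyQ n}
    (hc : ∀ S ∈ shuffles γ₁ γ₂, interactionDen γ₁ γ₂ S * c S = vertexVandermonde (γ₁ + γ₂)) :
    cohaMulRat Q γ₁ γ₂ F f * algebraMap _ _ (vertexVandermonde (γ₁ + γ₂)) =
      algebraMap (PolyQ n) (FractionRing (PolyQ n)) (∑ S ∈ shuffles γ₁ γ₂,
        substAlong S F * substAlong (shuffleCompl γ₁ γ₂ S) f * interactionNum Q γ₁ γ₂ S * c S) := by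
  rw [cohaMulRat, Finset.sum_mul, map_sum]
  refine Finset.sum_congr rfl fun S hS => ?_
  have den_ne_zero : algebraMap (PolyQ n) (FractionRing (PolyQ n)) (interactionDen γ₁ γ₂ S) ≠ 0 :=
    (map_ne_zero_iff _ (IsFractionRing.injective _ _)).2
      (left_ne_zero_of_mul ((hc S hS).trans_ne (vertexVandermonde_ne_zero _)))
  rw [← hc S hS, map_mul _ (interactionDen γ₁ γ₂ S), ← mul_assoc, div_mul_cancel₀ _ den_ne_zero,
    ← map_mul]

lemma exists_algebraMap_eq_cohaMulRat (hF : F ∈ Hspace γ₁) (hf : f ∈ Hspace γ₂) :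
    ∃ P, algebraMap (PolyQ n) (FractionRing (PolyQ n)) P = cohaMulRat Q γ₁ γ₂ F f := by
  obtain ⟨c, hc⟩ := exists_mul_interactionDen_eq γ₁ γ₂
  have cleared := cohaMulRat_mul_vertexVandermonde (Q := Q) (F := F) (f := f) hc
  set N : PolyQ n := ∑ S ∈ shuffles γ₁ γ₂, _
  have N_antisymm : ∀ i a b, a < b → b < (γ₁ + γ₂) i →
      rename (Equiv.swap (i, a) (i, b)) N = -N := fun i a b hab hb => by
    have swap_lt : ∀ k, Equiv.swap a b k ≠ k → k < γ₁ i + γ₂ i := fun k hk => by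
      rcases Equiv.eq_or_eq_of_swap_apply_ne_self hk with rfl | rfl
      exacts [hab.trans hb, hb]
    obtain ⟨E, E_algebraMap, E_cohaMulRat⟩ :=
      exists_ringEquiv_fractionRing (Q := Q) hF hf swap_lt
    rw [vertexPerm_swap] at E_algebraMap
    refine IsFractionRing.injective (PolyQ n) (FractionRing (PolyQ n)) ?_
    rw [← E_algebraMap, map_neg, ← cleared, map_mul, E_cohaMulRat, E_algebraMap,
      rename_swap_vertexVandermonde (hab.trans hb) hb hab.ne, map_neg, mul_neg]
  obtain ⟨P, hP⟩ : vertexVandermonde (γ₁ + γ₂) ∣ N := vertexVandermonde_dvd fun i a b hab hb =>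
    X_sub_X_dvd_of_rename_swap_eq_neg (N_antisymm i a b hab hb)
  refine ⟨P, mul_left_cancel₀ (a := algebraMap _ _ (vertexVandermonde (γ₁ + γ₂))) ?_ ?_⟩
  · exact (map_ne_zero_iff _ (IsFractionRing.injective _ _)).2 (vertexVandermonde_ne_zero _)
  · rw [← map_mul, ← hP, ← cleared, mul_comm]

lemma algebraMap_cohaMul (hF : F ∈ Hspace γ₁) (hf : f ∈ Hspace γ₂) :
    algebraMap (PolyQ n) (FractionRing (PolyQ n)) (cohaMul Q γ₁ γ₂ F f) =
      cohaMulRat Q γ₁ γ₂ F f := by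
  have hex := exists_algebraMap_eq_cohaMulRat (Q := Q) hF hf
  rw [cohaMul, dif_pos hex]
  exact hex.choose_spec

theorem cohaMul_mul_vertexVandermonde (hF : F ∈ Hspace γ₁) (hf : f ∈ Hspace γ₂)
    {c : (Fin n → Finset ℕ) → PolyQ n}
    (hc : ∀ S ∈ shuffles γ₁ γ₂, interactionDen γ₁ γ₂ S * c S = vertexVandermonde (γ₁ + γ₂)) :
    cohaMul Q γ₁ γ₂ F f * vertexVandermonde (γ₁ + γ₂) = ∑ S ∈ shuffles γ₁ γ₂,
      substAlong S F * substAlong (shuffleCompl γ₁ γ₂ S) f * interactionNum Q γ₁ γ₂ S * c S :=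
  IsFractionRing.injective (PolyQ n) (FractionRing (PolyQ n)) <| by
    rw [map_mul, algebraMap_cohaMul hF hf, cohaMulRat_mul_vertexVandermonde hc]

lemma cohaMul_symmIn (hF : F ∈ Hspace γ₁) (hf : f ∈ Hspace γ₂) :
    SymmIn (γ₁ + γ₂) (cohaMul Q γ₁ γ₂ F f) := fun i σ hσ => by
  obtain ⟨E, E_algebraMap, E_cohaMulRat⟩ := exists_ringEquiv_fractionRing (Q := Q) hF hf hσ
  refine IsFractionRing.injective (PolyQ n) (FractionRing (PolyQ n)) ?_
  rw [← E_algebraMap, algebraMap_cohaMul hF hf, E_cohaMulRat]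

end Polynomiality

section Variables

lemma vars_subset_of_dvd {σ R : Type*} [CommRing R] [IsDomain R] {p q : MvPolynomial σ R}
    (hpq : p ∣ q) (hq : q ≠ 0) : p.vars ⊆ q.vars := fun i hi => by
  obtain ⟨g, rfl⟩ := hpq
  rw [mem_vars_iff_degreeOf_ne_zero] at hi ⊢
  rw [degreeOf_mul_eq (left_ne_zero_of_mul hq) (right_ne_zero_of_mul hq)]
  omega

lemma mem_supported_of_dvd {σ R : Type*} [CommRing R] [IsDomain R] {p q : MvPolynomial σ R}
    {s : Set σ} (hpq : p ∣ q) (hq₀ : q ≠ 0) (hq : q ∈ supported R s) : p ∈ supported R s :=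
  mem_supported.2 ((Finset.coe_subset.2 (vars_subset_of_dvd hpq hq₀)).trans (mem_supported.1 hq))

variable {γ Γ : Fin n → ℕ} {T : Fin n → Finset ℕ}

/-- The polynomials in the variables `ω_{i,k}` with `k < Γ i`. -/
noncomputable abbrev polysBelow (Γ : Fin n → ℕ) : Subalgebra ℚ (PolyQ n) :=
  supported ℚ {p | p.2 < Γ p.1}

lemma X_mem_polysBelow (hT : ∀ i, T i ⊆ Finset.range (Γ i)) {i : Fin n} {k : ℕ} (hk : k ∈ T i) :
    X (i, k) ∈ polysBelow Γ :=
  X_mem_supported.2 (Finset.mem_range.1 (hT i hk))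

lemma substAlong_mem_polysBelow {f : PolyQ n} (hf : f ∈ Hspace γ) (hcard : ∀ i, (T i).card = γ i)
    (hT : ∀ i, T i ⊆ Finset.range (Γ i)) : substAlong T f ∈ polysBelow Γ := by
  rw [mem_supported]
  intro q hq
  obtain ⟨p, hp, hqp⟩ := mem_vars_bind₁ _ _ hq
  have index_lt : p.2 < ((T p.1).sort (· ≤ ·)).length := by
    rw [Finset.length_sort, hcard]
    exact hf.1 p hp
  rw [vars_X, Finset.mem_singleton, List.getD_eq_getElem _ _ index_lt] at hqp
  rw [hqp]
  exact Finset.mem_range.1 (hT _ ((Finset.mem_sort _).1 (List.getElem_mem index_lt)))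

lemma vertexVandermonde_mem_polysBelow (Γ : Fin n → ℕ) : vertexVandermonde Γ ∈ polysBelow Γ :=
  prod_mem fun _ _ => prod_mem fun _ hk => prod_mem fun _ hl =>
    sub_mem (X_mem_polysBelow (fun _ => subset_rfl) (Finset.mem_filter.1 hl).1)
      (X_mem_polysBelow (fun _ => subset_rfl) hk)

variable {γ₁ γ₂ : Fin n → ℕ}

lemma interactionNum_mem_polysBelow (Q : FinQuiver n) {S : Fin n → Finset ℕ}
    (hS : S ∈ shuffles γ₁ γ₂) : interactionNum Q γ₁ γ₂ S ∈ polysBelow (γ₁ + γ₂) :=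
  prod_mem fun _ _ => prod_mem fun _ hl => prod_mem fun _ hk =>
    sub_mem (X_mem_polysBelow (fun _ => Finset.sdiff_subset) hl)
      (X_mem_polysBelow (fun i => (mem_shuffles.1 hS i).1) hk)

theorem cohaMul_mem_Hspace {Q : FinQuiver n} {F f : PolyQ n} (hF : F ∈ Hspace γ₁)
    (hf : f ∈ Hspace γ₂) : cohaMul Q γ₁ γ₂ F f ∈ Hspace (γ₁ + γ₂) := by
  refine ⟨fun p hp => ?_, cohaMul_symmIn hF hf⟩
  obtain ⟨c, hc⟩ := exists_mul_interactionDen_eq γ₁ γ₂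
  have ne_zero : cohaMul Q γ₁ γ₂ F f * vertexVandermonde (γ₁ + γ₂) ≠ 0 :=
    mul_ne_zero (fun h => by simp [h] at hp) (vertexVandermonde_ne_zero _)
  suffices h : cohaMul Q γ₁ γ₂ F f * vertexVandermonde (γ₁ + γ₂) ∈ polysBelow (γ₁ + γ₂) from
    mem_supported.1 (mem_supported_of_dvd (Dvd.intro _ rfl) ne_zero h) hp
  rw [cohaMul_mul_vertexVandermonde hF hf hc]
  refine sum_mem fun S hS => mul_mem (mul_mem (mul_mem ?_ ?_) ?_) ?_
  · exact substAlong_mem_polysBelow hF (fun i => (mem_shuffles.1 hS i).2)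
      fun i => (mem_shuffles.1 hS i).1
  · exact substAlong_mem_polysBelow hf (card_shuffleCompl hS) fun i => Finset.sdiff_subset
  · exact interactionNum_mem_polysBelow Q hS
  · exact mem_supported_of_dvd (Dvd.intro_left _ (hc S hS)) (vertexVandermonde_ne_zero _)
      (vertexVandermonde_mem_polysBelow _)

end Variables

/-! ### Nilpotent thickenings -/

section NilpotentRoots

variable {ι : Type*} {A : Type u} [CommRing A]

lemma nodal_const_add {s : Finset ι} {ξ : ι → A} (h : nodal s ξ = Polynomial.X ^ s.card) (a : A) :
    nodal s (fun k => a + ξ k) = nodal s fun _ => a := by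
  have comp_eq := congrArg (Polynomial.comp · (Polynomial.X - Polynomial.C a)) h
  simp only [nodal, Polynomial.prod_comp, Polynomial.sub_comp, Polynomial.X_comp,
    Polynomial.C_comp, Polynomial.pow_comp] at comp_eq
  simp only [nodal, Finset.prod_const, map_add, ← comp_eq, sub_sub]

lemma isNilpotent_of_nodal_eq_X_pow {s : Finset ι} {ξ : ι → A} {N : ℕ}
    (h : nodal s ξ = Polynomial.X ^ N) {k : ι} (hk : k ∈ s) : IsNilpotent (ξ k) :=
  ⟨N, by simpa only [Lagrange.eval_nodal_at_node hk, Polynomial.eval_pow, Polynomial.eval_X,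
    eq_comm] using congrArg (Polynomial.eval (ξ k)) h⟩

lemma prod_prod_sub_eq_of_nodal_eq {κ : Type*} {s : Finset ι} {t : Finset κ} {y y' : ι → A}
    {x x' : κ → A} (hs : nodal s y = nodal s y') (ht : nodal t x = nodal t x') :
    ∏ k ∈ s, ∏ l ∈ t, (y k - x l) = ∏ k ∈ s, ∏ l ∈ t, (y' k - x' l) :=
  calc ∏ k ∈ s, ∏ l ∈ t, (y k - x l) = ∏ k ∈ s, ∏ l ∈ t, (y k - x' l) := by
        simp only [← Lagrange.eval_nodal, ht]
    _ = ∏ k ∈ s, ∏ l ∈ t, (y' k - x' l) := by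
        rw [Finset.prod_comm, Finset.prod_comm (s := s)]
        simp only [prod_sub_eq_neg_one_pow_mul_eval_nodal, hs]

lemma vandermondeProd_const_add [LinearOrder ι] (s : Finset ι) (a : A) (ξ : ι → A) :
    vandermondeProd s (fun k => a + ξ k) = vandermondeProd s ξ := by
  simp only [vandermondeProd, add_sub_add_left_eq_sub]

lemma vandermondeProd_eq_prod_fibers_mul [LinearOrder ι] {C : Type*} [DecidableEq C] (s : Finset ι)
    (label : ι → C) (x : ι → A) :
    vandermondeProd s x =
      (∏ c ∈ s.image label, vandermondeProd {k ∈ s | label k = c} x) *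
        ∏ k ∈ s, ∏ l ∈ s with k < l ∧ label l ≠ label k, (x l - x k) := by
  have prod_fibers : ∏ c ∈ s.image label, vandermondeProd {k ∈ s | label k = c} x =
      ∏ k ∈ s, ∏ l ∈ s with k < l ∧ label l = label k, (x l - x k) := by
    rw [← Finset.prod_fiberwise_of_maps_to fun k => Finset.mem_image_of_mem label]
    refine Finset.prod_congr rfl fun c _ => Finset.prod_congr rfl fun k hk => ?_
    rw [Finset.filter_filter, (Finset.mem_filter.1 hk).2]
    simp only [and_comm]
  rw [prod_fibers, ← Finset.prod_mul_distrib]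
  refine Finset.prod_congr rfl fun k _ => ?_
  rw [← Finset.filter_filter, ← Finset.filter_filter, Finset.prod_filter_mul_prod_filter_not]

theorem exists_extension_nodal_eq_X_pow {J κ : Type*} [LinearOrder κ] (Y : J → Finset κ)
    (s : Finset J) (A : Type u) [CommRing A] [Algebra ℚ A] :
    ∃ (B : Type u) (_ : CommRing B) (_ : Algebra A B) (ξ : J → κ → B),
      (∀ q ∈ s, nodal (Y q) (ξ q) = Polynomial.X ^ (Y q).card) ∧
      ∀ a : A, algebraMap A B a * ∏ q ∈ s, vandermondeProd (Y q) (ξ q) = 0 → a = 0 := by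
  induction s using Finset.induction_on generalizing A with
  | empty => exact ⟨A, inferInstance, inferInstance, fun _ _ => 0, by simp, fun a ha => by
      simpa using ha⟩
  | insert q s hq ih =>
    rcases subsingleton_or_nontrivial A with _ | _
    · exact ⟨A, inferInstance, inferInstance, fun _ _ => 0, fun _ _ => Subsingleton.elim _ _,
        fun _ _ => Subsingleton.elim _ _⟩
    obtain ⟨A', _, _, x, hx, -, htors⟩ := exists_extension_map_eq_nodal (Y q) A
      (Polynomial.X ^ (Y q).card) (Polynomial.monic_X_pow _) (Polynomial.natDegree_X_pow _)
    let _ : Algebra ℚ A' := Algebra.compHom A' (algebraMap ℚ A)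
    obtain ⟨B, _, _, ξ, hξ, hξtors⟩ := ih A'
    let _ : Algebra A B := Algebra.compHom B (algebraMap A A')
    let x' : J → κ → B := Function.update ξ q fun k => algebraMap A' B (x k)
    have x'_of_mem : ∀ q' ∈ s, x' q' = ξ q' := fun q' hq' =>
      Function.update_of_ne (ne_of_mem_of_not_mem hq' hq) _ _
    have x'_self : x' q = fun k => algebraMap A' B (x k) := Function.update_self ..
    refine ⟨B, inferInstance, inferInstance, x', fun q' hq' => ?_, fun a ha => ?_⟩
    · rcases Finset.mem_insert.1 hq' with rfl | hq'
      · rw [x'_self, ← map_nodal, hx, Polynomial.map_pow, Polynomial.map_X, Polynomial.map_pow,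
          Polynomial.map_X]
      · rw [x'_of_mem q' hq', hξ q' hq']
    · rw [Finset.prod_insert hq, x'_self, ← map_vandermondeProd, ← mul_assoc,
        Finset.prod_congr rfl fun q' hq' => by rw [x'_of_mem q' hq']] at ha
      have factorial_mul_eq_zero : ((Y q).card.factorial : A) * a = 0 :=
        htors a (hξtors _ (by rw [map_mul]; exact ha))
      have : ((Y q).card.factorial : ℚ) • a = 0 := by
        rw [Algebra.smul_def, map_natCast, factorial_mul_eq_zero]
      exact (smul_eq_zero_iff_right (Nat.cast_ne_zero.2 (Nat.factorial_ne_zero _))).1 this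

end NilpotentRoots

section DividesNonzero

variable (T : Type*) {R : Type*} [CommRing T] [IsDomain T] [CommRing R] [Algebra T R]

/-- The elements of a `T`-algebra dividing the image of a nonzero element of the domain `T`. -/
def dividesNonzero (R : Type*) [CommRing R] [Algebra T R] : Submonoid R where
  carrier := {y | ∃ a : T, a ≠ 0 ∧ y ∣ algebraMap T R a}
  one_mem' := ⟨1, one_ne_zero, one_dvd _⟩
  mul_mem' := by
    rintro x y ⟨a, ha, hxa⟩ ⟨b, hb, hyb⟩
    exact ⟨a * b, mul_ne_zero ha hb, by rw [map_mul]; exact mul_dvd_mul hxa hyb⟩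

variable {T}

lemma add_mem_dividesNonzero {a : T} (ha : a ≠ 0) {η : R} (hη : IsNilpotent η) :
    algebraMap T R a + η ∈ dividesNonzero T R := by
  obtain ⟨N, hN⟩ := hη
  have dvd := sub_dvd_pow_sub_pow (algebraMap T R a) (-η) N
  rw [neg_pow, hN, mul_zero, sub_zero, sub_neg_eq_add, ← map_pow] at dvd
  exact ⟨a ^ N, pow_ne_zero _ ha, dvd⟩

lemma eq_zero_of_algebraMap_mul_mul_eq_zero {x y : R} (hy : y ∈ dividesNonzero T R)
    (hx : ∀ a : T, algebraMap T R a * x = 0 → a = 0) {a : T}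
    (ha : algebraMap T R a * (x * y) = 0) : a = 0 := by
  obtain ⟨b, hb, z, hz⟩ := hy
  have : a * b = 0 := hx _ (by rw [map_mul, hz]; linear_combination z * ha)
  exact (mul_eq_zero.1 this).resolve_right hb

end DividesNonzero

/-! ### Localization at the initial shuffle -/

section ShuffleTraces

variable {γ₁ γ₂ : Fin n → ℕ} {S : Fin n → Finset ℕ} {i : Fin n} {Y : Finset ℕ}

lemma disjoint_inter_shuffleCompl_inter :
    Disjoint (S i ∩ Y) (shuffleCompl γ₁ γ₂ S i ∩ Y) :=
  (disjoint_shuffleCompl γ₁ γ₂ S i).mono Finset.inter_subset_left Finset.inter_subset_left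

lemma inter_union_shuffleCompl_inter (hS : S ∈ shuffles γ₁ γ₂)
    (hY : Y ⊆ Finset.range (γ₁ i + γ₂ i)) : S i ∩ Y ∪ shuffleCompl γ₁ γ₂ S i ∩ Y = Y := by
  rw [← Finset.union_inter_distrib_right, union_shuffleCompl hS, Finset.inter_eq_right.2 hY]

lemma nodal_inter_mul_nodal_shuffleCompl_inter {A : Type*} [CommRing A]
    (hS : S ∈ shuffles γ₁ γ₂) (hY : Y ⊆ Finset.range (γ₁ i + γ₂ i)) (x : ℕ → A) :
    nodal (S i ∩ Y) x * nodal (shuffleCompl γ₁ γ₂ S i ∩ Y) x = nodal Y x := by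
  rw [nodal_mul_nodal disjoint_inter_shuffleCompl_inter, inter_union_shuffleCompl_inter hS hY]

/-- The shuffle selecting the first `γ₁ i` positions at each vertex `i`. -/
def initialShuffle (γ₁ : Fin n → ℕ) : Fin n → Finset ℕ := fun i => Finset.range (γ₁ i)

lemma initialShuffle_mem_shuffles (γ₁ γ₂ : Fin n → ℕ) :
    initialShuffle γ₁ ∈ shuffles γ₁ γ₂ :=
  mem_shuffles.2 fun i => by simp [initialShuffle]

lemma shuffleCompl_initialShuffle (γ₁ γ₂ : Fin n → ℕ) (i : Fin n) :
    shuffleCompl γ₁ γ₂ (initialShuffle γ₁) i = Finset.Ico (γ₁ i) (γ₁ i + γ₂ i) := by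
  ext k
  simp only [shuffleCompl, initialShuffle, Finset.mem_sdiff, Finset.mem_range, Finset.mem_Ico]
  omega

end ShuffleTraces

section Thickening

variable {C : Type u}

/-- The positions below `Γ i` at the vertex `i` whose variables are identified with the variable
labelled `c` by the labelling `cl`. -/
noncomputable def cluster (Γ : Fin n → ℕ) (cl : Fin n × ℕ → C) (i : Fin n) (c : C) : Finset ℕ :=
  {k ∈ Finset.range (Γ i) | cl (i, k) = c}

lemma mem_cluster {Γ : Fin n → ℕ} {cl : Fin n × ℕ → C} {i : Fin n} {c : C} {k : ℕ} :
    k ∈ cluster Γ cl i c ↔ k < Γ i ∧ cl (i, k) = c := by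
  simp [cluster]

lemma cluster_subset_range (Γ : Fin n → ℕ) (cl : Fin n × ℕ → C) (i : Fin n) (c : C) :
    cluster Γ cl i c ⊆ Finset.range (Γ i) :=
  Finset.filter_subset _ _

/-- The dimension vector counting the positions of `T` in the cluster `c`. -/
noncomputable def clusterDim (Γ : Fin n → ℕ) (cl : Fin n × ℕ → C) (T : Fin n → Finset ℕ) (c : C)
    (i : Fin n) : ℕ :=
  (T i ∩ cluster Γ cl i c).card

lemma clusterDim_add_clusterDim_shuffleCompl {γ₁ γ₂ : Fin n → ℕ} {S : Fin n → Finset ℕ}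
    (hS : S ∈ shuffles γ₁ γ₂) (cl : Fin n × ℕ → C) (c : C) (i : Fin n) :
    clusterDim (γ₁ + γ₂) cl S c i + clusterDim (γ₁ + γ₂) cl (shuffleCompl γ₁ γ₂ S) c i =
      (cluster (γ₁ + γ₂) cl i c).card := by
  rw [clusterDim, clusterDim, ← Finset.card_union_of_disjoint disjoint_inter_shuffleCompl_inter,
    inter_union_shuffleCompl_inter hS (cluster_subset_range _ cl i c)]

lemma sum_clusterDim {Γ : Fin n → ℕ} {cl : Fin n × ℕ → C} {T : Fin n → Finset ℕ} {i : Fin n}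
    (hT : T i ⊆ Finset.range (Γ i)) {J : Finset C} (hJ : ∀ k ∈ T i, cl (i, k) ∈ J) :
    ∑ c ∈ J, clusterDim Γ cl T c i = (T i).card := by
  rw [Finset.card_eq_sum_card_fiberwise hJ]
  refine Finset.sum_congr rfl fun c _ => ?_
  rw [clusterDim, cluster, Finset.inter_filter, Finset.inter_eq_left.2 hT]

/-- A nilpotent thickening of the diagonal point `ω_{i,k} ↦ t_{cl (i,k)}`: a ring over the
polynomials in the `t_c`, with a family of roots of `X ^ d` for each cluster of size `d`. As in the
cohomology of a product of flag varieties, the product of the Vandermonde products of all clusters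
is the class of a point, which is not torsion. -/
structure Thickening (Γ : Fin n → ℕ) (cl : Fin n × ℕ → C) (R : Type u) [CommRing R]
    [Algebra (MvPolynomial C ℚ) R] where
  root : Fin n → C → ℕ → R
  nodal_root : ∀ i c,
    nodal (cluster Γ cl i c) (root i c) = Polynomial.X ^ (cluster Γ cl i c).card
  eq_zero_of_mul_prod_vandermondeProd : ∀ a : MvPolynomial C ℚ,
    algebraMap _ R a * ∏ i, ∏ c ∈ (Finset.range (Γ i)).image fun k => cl (i, k),
      vandermondeProd (cluster Γ cl i c) (root i c) = 0 → a = 0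

theorem exists_thickening (Γ : Fin n → ℕ) (cl : Fin n × ℕ → C) :
    ∃ (R : Type u) (_ : CommRing R) (_ : Algebra ℚ R) (_ : Algebra (MvPolynomial C ℚ) R)
      (_ : IsScalarTower ℚ (MvPolynomial C ℚ) R), Nonempty (Thickening Γ cl R) := by
  let labels (i : Fin n) : Finset C := (Finset.range (Γ i)).image fun k => cl (i, k)
  obtain ⟨R, _, _, ξ, hξ, htors⟩ := exists_extension_nodal_eq_X_pow
    (fun q : (_ : Fin n) × C => cluster Γ cl q.1 q.2) (Finset.univ.sigma labels)
    (MvPolynomial C ℚ)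
  let _ : Algebra ℚ R := Algebra.compHom R (algebraMap ℚ (MvPolynomial C ℚ))
  refine ⟨R, inferInstance, inferInstance, inferInstance,
    IsScalarTower.of_algebraMap_eq fun _ => rfl,
    ⟨fun i c => ξ ⟨i, c⟩, fun i c => ?_, fun a ha => htors a ?_⟩⟩
  · by_cases hc : c ∈ labels i
    · exact hξ ⟨i, c⟩ (by simp [hc])
    · have : cluster Γ cl i c = ∅ := Finset.filter_eq_empty_iff.2 fun k hk hkc =>
        hc (Finset.mem_image.2 ⟨k, hk, hkc⟩)
      simp [this]
  · rw [Finset.prod_sigma]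
    exact ha

namespace Thickening

variable {Γ : Fin n → ℕ} {cl : Fin n × ℕ → C} {R : Type u} [CommRing R]
  [Algebra (MvPolynomial C ℚ) R] (t : Thickening Γ cl R)

/-- The thickened point: the root attached to a position is added to the variable of its label. -/
noncomputable def point (p : Fin n × ℕ) : R :=
  algebraMap _ R (X (cl p) : MvPolynomial C ℚ) + t.root p.1 (cl p) p.2

lemma point_eq_of_mem_cluster {i : Fin n} {c : C} {k : ℕ} (hk : k ∈ cluster Γ cl i c) :
    t.point (i, k) = algebraMap _ R (X c : MvPolynomial C ℚ) + t.root i c k := by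
  rw [point, (mem_cluster.1 hk).2]

lemma nodal_point_cluster (i : Fin n) (c : C) :
    nodal (cluster Γ cl i c) (fun k => t.point (i, k)) =
      nodal (cluster Γ cl i c) fun k => algebraMap _ R (X (cl (i, k)) : MvPolynomial C ℚ) :=
  calc nodal (cluster Γ cl i c) (fun k => t.point (i, k))
      = nodal (cluster Γ cl i c) fun k => algebraMap _ R (X c : MvPolynomial C ℚ) + t.root i c k :=
        nodal_congr fun _ hk => t.point_eq_of_mem_cluster hk
    _ = nodal (cluster Γ cl i c) fun _ => algebraMap _ R (X c : MvPolynomial C ℚ) :=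
        nodal_const_add (t.nodal_root i c) _
    _ = nodal (cluster Γ cl i c) fun k => algebraMap _ R (X (cl (i, k)) : MvPolynomial C ℚ) :=
        nodal_congr fun _ hk => by rw [(mem_cluster.1 hk).2]

lemma nodal_point_of_saturated {i : Fin n} {Z : Finset ℕ} (hZ : Z ⊆ Finset.range (Γ i))
    (hsat : ∀ k ∈ Z, cluster Γ cl i (cl (i, k)) ⊆ Z) :
    nodal Z (fun k => t.point (i, k)) =
      nodal Z fun k => algebraMap _ R (X (cl (i, k)) : MvPolynomial C ℚ) := by
  have maps_to : ∀ k ∈ Z, cl (i, k) ∈ Z.image fun k => cl (i, k) := fun k hk =>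
    Finset.mem_image_of_mem _ hk
  rw [nodal, nodal, ← Finset.prod_fiberwise_of_maps_to maps_to,
    ← Finset.prod_fiberwise_of_maps_to maps_to]
  refine Finset.prod_congr rfl fun c hc => ?_
  obtain ⟨k₀, hk₀, rfl⟩ := Finset.mem_image.1 hc
  have fiber_eq : {k ∈ Z | cl (i, k) = cl (i, k₀)} = cluster Γ cl i (cl (i, k₀)) := by
    ext k
    rw [mem_cluster, Finset.mem_filter]
    exact ⟨fun h => ⟨Finset.mem_range.1 (hZ h.1), h.2⟩,
      fun h => ⟨hsat k₀ hk₀ (mem_cluster.2 h), h.2⟩⟩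
  rw [fiber_eq]
  exact t.nodal_point_cluster i _

lemma point_sub_point_mem_dividesNonzero {i : Fin n} {k l : ℕ} (hk : k < Γ i) (hl : l < Γ i)
    (hkl : cl (i, l) ≠ cl (i, k)) :
    t.point (i, l) - t.point (i, k) ∈ dividesNonzero (MvPolynomial C ℚ) R := by
  have root_nilpotent : ∀ k < Γ i, IsNilpotent (t.root i (cl (i, k)) k) := fun k hk =>
    isNilpotent_of_nodal_eq_X_pow (t.nodal_root i _) (mem_cluster.2 ⟨hk, rfl⟩)
  have mem := add_mem_dividesNonzero (R := R)
    (sub_ne_zero.2 fun h => hkl (X_injective (R := ℚ) h))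
    ((Commute.all _ _).isNilpotent_sub (root_nilpotent l hl) (root_nilpotent k hk))
  rwa [map_sub, ← add_sub_add_comm] at mem

lemma prod_vandermondeProd_point_cluster (i : Fin n) (s : Finset C) :
    ∏ c ∈ s, vandermondeProd (cluster Γ cl i c) (fun k => t.point (i, k)) =
      ∏ c ∈ s, vandermondeProd (cluster Γ cl i c) (t.root i c) :=
  Finset.prod_congr rfl fun _ _ =>
    (vandermondeProd_congr fun _ hk => t.point_eq_of_mem_cluster hk).trans
      (vandermondeProd_const_add _ _ _)

variable [Algebra ℚ R]

theorem eq_zero_of_mul_aeval_vertexVandermonde {a : MvPolynomial C ℚ}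
    (ha : algebraMap _ R a * aeval t.point (vertexVandermonde Γ) = 0) : a = 0 := by
  let crossing (i : Fin n) : R := ∏ k ∈ Finset.range (Γ i),
    ∏ l ∈ Finset.range (Γ i) with k < l ∧ cl (i, l) ≠ cl (i, k), (t.point (i, l) - t.point (i, k))
  have crossing_mem : ∏ i, crossing i ∈ dividesNonzero (MvPolynomial C ℚ) R :=
    prod_mem fun i _ => prod_mem fun k hk => prod_mem fun l hl => by
      obtain ⟨hl, -, hne⟩ := Finset.mem_filter.1 hl
      exact t.point_sub_point_mem_dividesNonzero (Finset.mem_range.1 hk) (Finset.mem_range.1 hl) hne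
  refine eq_zero_of_algebraMap_mul_mul_eq_zero crossing_mem
    t.eq_zero_of_mul_prod_vandermondeProd ?_
  rw [← ha, vertexVandermonde, map_prod, ← Finset.prod_mul_distrib]
  refine congrArg _ (Finset.prod_congr rfl fun i _ => ?_)
  rw [← t.prod_vandermondeProd_point_cluster i]
  refine (vandermondeProd_eq_prod_fibers_mul _ (fun k => cl (i, k)) _).symm.trans ?_
  refine (vandermondeProd_congr fun k _ => ?_).trans (map_vandermondeProd
    (aeval t.point : PolyQ n →ₐ[ℚ] R).toRingHom _ _).symm
  exact (aeval_X t.point (i, k)).symm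

end Thickening

lemma algebraMap_rename {σ R : Type*} [CommRing R] [Algebra ℚ R] [Algebra (MvPolynomial C ℚ) R]
    [IsScalarTower ℚ (MvPolynomial C ℚ) R] (cl : σ → C) (f : MvPolynomial σ ℚ) :
    algebraMap _ R (rename cl f) =
      aeval (fun p => algebraMap _ R (X (cl p) : MvPolynomial C ℚ)) f := by
  rw [rename_eq_aeval]
  exact (aeval_algebraMap_apply R (fun p => (X (cl p) : MvPolynomial C ℚ)) f).symm

end Thickening

lemma aeval_interactionNum {R : Type*} [CommRing R] [Algebra ℚ R] (Q : FinQuiver n)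
    (γ₁ γ₂ : Fin n → ℕ) (S : Fin n → Finset ℕ) (g : Fin n × ℕ → R) :
    aeval g (interactionNum Q γ₁ γ₂ S) = ∏ a, ∏ k ∈ shuffleCompl γ₁ γ₂ S (Q.hd a),
      ∏ l ∈ S (Q.tl a), (g (Q.hd a, k) - g (Q.tl a, l)) := by
  simp only [interactionNum, arrowFactor, map_prod, map_sub, aeval_X]

namespace Thickening

variable {C : Type u} {γ₁ γ₂ : Fin n → ℕ} {cl : Fin n × ℕ → C} {R : Type u} [CommRing R]
  [Algebra (MvPolynomial C ℚ) R] (t : Thickening (γ₁ + γ₂) cl R) {S : Fin n → Finset ℕ}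

lemma prod_point_sub_point_eq_zero {Q' : FinQuiver n} (hS : S ∈ shuffles γ₁ γ₂) {c : C}
    (h : Q'.EulerClassVanishes.{u} (clusterDim (γ₁ + γ₂) cl S c)
      (clusterDim (γ₁ + γ₂) cl (shuffleCompl γ₁ γ₂ S) c)) :
    ∏ a : Q'.Arr, ∏ k ∈ shuffleCompl γ₁ γ₂ S (Q'.hd a) ∩ cluster (γ₁ + γ₂) cl (Q'.hd a) c,
      ∏ l ∈ S (Q'.tl a) ∩ cluster (γ₁ + γ₂) cl (Q'.tl a) c,
        (t.point (Q'.hd a, k) - t.point (Q'.tl a, l)) = 0 := by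
  let Y (j : Fin n) : Finset ℕ := cluster (γ₁ + γ₂) cl j c
  have hY : ∀ j, Y j ⊆ Finset.range (γ₁ j + γ₂ j) := fun j => cluster_subset_range _ cl j c
  have vanishing := h R (fun j => nodal (S j ∩ Y j) (t.root j c))
    (fun j l => t.root j c (((shuffleCompl γ₁ γ₂ S j ∩ Y j).sort (· ≤ ·)).getD l 0)) fun j => by
      rw [clusterDim_add_clusterDim_shuffleCompl hS, clusterDim, nodal_range_sort rfl,
        nodal_inter_mul_nodal_shuffleCompl_inter hS (hY j), t.nodal_root]
  refine Eq.trans (Finset.prod_congr rfl fun a _ => ?_) vanishing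
  refine Eq.trans (Finset.prod_congr rfl fun k hk => ?_) (prod_range_sort_getD _ fun k =>
    (nodal (S (Q'.tl a) ∩ Y (Q'.tl a)) (t.root (Q'.tl a) c)).eval (t.root (Q'.hd a) c k)).symm
  rw [Lagrange.eval_nodal]
  refine Finset.prod_congr rfl fun l hl => ?_
  rw [t.point_eq_of_mem_cluster (Finset.mem_inter.1 hk).2,
    t.point_eq_of_mem_cluster (Finset.mem_inter.1 hl).2, add_sub_add_left_eq_sub]

theorem aeval_point_interactionNum_eq_zero [Algebra ℚ R] {Q : FinQuiver n} {ℓ : ℕ}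
    {P : SubqPartition Q ℓ} (hS : S ∈ shuffles γ₁ γ₂) {c : C}
    (h : P.innerQuiver.EulerClassVanishes.{u} (clusterDim (γ₁ + γ₂) cl S c)
      (clusterDim (γ₁ + γ₂) cl (shuffleCompl γ₁ γ₂ S) c)) :
    aeval t.point (interactionNum Q γ₁ γ₂ S) = 0 := by
  rw [← zero_dvd_iff, ← t.prod_point_sub_point_eq_zero hS h, aeval_interactionNum]
  refine (Finset.prod_dvd_prod_of_dvd _ (fun a : P.innerQuiver.Arr =>
    ∏ k ∈ shuffleCompl γ₁ γ₂ S (Q.hd a.1), ∏ l ∈ S (Q.tl a.1),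
      (t.point (Q.hd a.1, k) - t.point (Q.tl a.1, l))) fun a _ => ?_).trans ?_
  · exact (Finset.prod_dvd_prod_of_dvd _ _ fun k _ =>
      Finset.prod_dvd_prod_of_subset _ _ _ Finset.inter_subset_left).trans
        (Finset.prod_dvd_prod_of_subset _ _ _ Finset.inter_subset_left)
  · rw [P.prod_innerQuiver fun a => ∏ k ∈ shuffleCompl γ₁ γ₂ S (Q.hd a), ∏ l ∈ S (Q.tl a),
      (t.point (Q.hd a, k) - t.point (Q.tl a, l))]
    exact Finset.prod_dvd_prod_of_subset _ _ _ (Finset.subset_univ _)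

lemma aeval_point_eq_of_mem_Hspace [Algebra ℚ R] [IsScalarTower ℚ (MvPolynomial C ℚ) R]
    {f : PolyQ n} (hf : f ∈ Hspace (γ₁ + γ₂)) :
    aeval t.point f = algebraMap _ R (rename cl f) := by
  rw [algebraMap_rename]
  exact aeval_eq_of_mem_Hspace hf fun i => t.nodal_point_of_saturated subset_rfl fun _ _ =>
    cluster_subset_range _ cl i _

section InitialShuffle

variable (hcl : ∀ i k l, k < γ₁ i → γ₁ i ≤ l → l < γ₁ i + γ₂ i → cl (i, k) ≠ cl (i, l))
include hcl

lemma nodal_point_initialShuffle (i : Fin n) :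
    nodal (initialShuffle γ₁ i) (fun k => t.point (i, k)) =
      nodal (initialShuffle γ₁ i) fun k => algebraMap _ R (X (cl (i, k)) : MvPolynomial C ℚ) := by
  refine t.nodal_point_of_saturated
    (mem_shuffles.1 (initialShuffle_mem_shuffles γ₁ γ₂) i).1 fun k hk l hl => ?_
  obtain ⟨hlt, hlk⟩ := mem_cluster.1 hl
  rw [initialShuffle, Finset.mem_range] at hk ⊢
  by_contra! hle
  exact hcl i k l hk hle hlt hlk.symm

lemma nodal_point_shuffleCompl_initialShuffle (i : Fin n) :
    nodal (shuffleCompl γ₁ γ₂ (initialShuffle γ₁) i) (fun k => t.point (i, k)) =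
      nodal (shuffleCompl γ₁ γ₂ (initialShuffle γ₁) i) fun k =>
        algebraMap _ R (X (cl (i, k)) : MvPolynomial C ℚ) := by
  refine t.nodal_point_of_saturated Finset.sdiff_subset fun k hk l hl => ?_
  obtain ⟨hlt, hlk⟩ := mem_cluster.1 hl
  rw [shuffleCompl_initialShuffle, Finset.mem_Ico] at hk ⊢
  refine ⟨?_, hlt⟩
  by_contra! hle
  exact hcl i l k hle hk.1 hk.2 hlk

variable [Algebra ℚ R] [IsScalarTower ℚ (MvPolynomial C ℚ) R]

lemma aeval_point_substAlong_initialShuffle {f : PolyQ n} (hf : f ∈ Hspace γ₁) :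
    aeval t.point (substAlong (initialShuffle γ₁) f) =
      algebraMap _ R (rename cl (substAlong (initialShuffle γ₁) f)) := by
  have card_eq := fun i => (mem_shuffles.1 (initialShuffle_mem_shuffles γ₁ γ₂) i).2
  rw [algebraMap_rename]
  exact aeval_substAlong_eq_of_nodal_eq hf card_eq card_eq (t.nodal_point_initialShuffle hcl)

lemma aeval_point_substAlong_shuffleCompl {f : PolyQ n} (hf : f ∈ Hspace γ₂) :
    aeval t.point (substAlong (shuffleCompl γ₁ γ₂ (initialShuffle γ₁)) f) =
      algebraMap _ R (rename cl (substAlong (shuffleCompl γ₁ γ₂ (initialShuffle γ₁)) f)) := by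
  have card_eq := card_shuffleCompl (initialShuffle_mem_shuffles γ₁ γ₂)
  rw [algebraMap_rename]
  exact aeval_substAlong_eq_of_nodal_eq hf card_eq card_eq
    (t.nodal_point_shuffleCompl_initialShuffle hcl)

lemma aeval_point_interactionNum_initialShuffle (Q : FinQuiver n) :
    aeval t.point (interactionNum Q γ₁ γ₂ (initialShuffle γ₁)) =
      algebraMap _ R (rename cl (interactionNum Q γ₁ γ₂ (initialShuffle γ₁))) := by
  rw [algebraMap_rename, aeval_interactionNum, aeval_interactionNum]
  exact Finset.prod_congr rfl fun a _ => prod_prod_sub_eq_of_nodal_eq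
    (t.nodal_point_shuffleCompl_initialShuffle hcl _) (t.nodal_point_initialShuffle hcl _)

lemma aeval_point_interactionDen_initialShuffle :
    aeval t.point (interactionDen γ₁ γ₂ (initialShuffle γ₁)) =
      algebraMap _ R (rename cl (interactionDen γ₁ γ₂ (initialShuffle γ₁))) := by
  rw [algebraMap_rename]
  simp only [interactionDen, map_prod, map_sub, aeval_X]
  exact Finset.prod_congr rfl fun a _ => prod_prod_sub_eq_of_nodal_eq
    (t.nodal_point_shuffleCompl_initialShuffle hcl _) (t.nodal_point_initialShuffle hcl _)

end InitialShuffle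

end Thickening

-- At a thickened point every term of the localization sum but the one of the initial shuffle
-- vanishes, and all remaining factors take the same value as at the diagonal point.
theorem rename_cohaMul_mul_interactionDen {C : Type u} {Q : FinQuiver n} {ℓ : ℕ}
    {P : SubqPartition Q ℓ} {γ₁ γ₂ : Fin n → ℕ} {cl : Fin n × ℕ → C} {F f : PolyQ n}
    (hF : F ∈ Hspace γ₁) (hf : f ∈ Hspace γ₂)
    (hcl : ∀ i k l, k < γ₁ i → γ₁ i ≤ l → l < γ₁ i + γ₂ i → cl (i, k) ≠ cl (i, l))
    (hvanish : ∀ S ∈ shuffles γ₁ γ₂, S ≠ initialShuffle γ₁ → ∃ c,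
      P.innerQuiver.EulerClassVanishes.{u} (clusterDim (γ₁ + γ₂) cl S c)
        (clusterDim (γ₁ + γ₂) cl (shuffleCompl γ₁ γ₂ S) c)) :
    rename cl (cohaMul Q γ₁ γ₂ F f) * rename cl (interactionDen γ₁ γ₂ (initialShuffle γ₁)) =
      rename cl (substAlong (initialShuffle γ₁) F) *
        rename cl (substAlong (shuffleCompl γ₁ γ₂ (initialShuffle γ₁)) f) *
        rename cl (interactionNum Q γ₁ γ₂ (initialShuffle γ₁)) := by
  obtain ⟨R, _, _, _, _, ⟨t⟩⟩ := exists_thickening (γ₁ + γ₂) cl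
  obtain ⟨c, hc⟩ := exists_mul_interactionDen_eq γ₁ γ₂
  have initial_mem := initialShuffle_mem_shuffles γ₁ γ₂
  have localized := congrArg (aeval t.point) (cohaMul_mul_vertexVandermonde (Q := Q) hF hf hc)
  rw [map_sum, Finset.sum_eq_single_of_mem _ initial_mem fun S hS hne => by
    obtain ⟨_, hvan⟩ := hvanish S hS hne
    rw [map_mul, map_mul, t.aeval_point_interactionNum_eq_zero hS hvan, mul_zero,
      zero_mul]] at localized
  simp only [map_mul, t.aeval_point_eq_of_mem_Hspace (cohaMul_mem_Hspace hF hf),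
    t.aeval_point_substAlong_initialShuffle hcl hF, t.aeval_point_substAlong_shuffleCompl hcl hf,
    t.aeval_point_interactionNum_initialShuffle hcl] at localized
  have den_mul := congrArg (aeval t.point) (hc _ initial_mem)
  rw [map_mul, t.aeval_point_interactionDen_initialShuffle hcl] at den_mul
  refine sub_eq_zero.1 (t.eq_zero_of_mul_aeval_vertexVandermonde ?_)
  simp only [map_sub, map_mul]
  linear_combination algebraMap _ R (rename cl (interactionDen γ₁ γ₂ (initialShuffle γ₁))) *
    localized + algebraMap _ R (rename cl (substAlong (initialShuffle γ₁) F)) *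
    algebraMap _ R (rename cl (substAlong (shuffleCompl γ₁ γ₂ (initialShuffle γ₁)) f)) *
    algebraMap _ R (rename cl (interactionNum Q γ₁ γ₂ (initialShuffle γ₁))) * den_mul

/-! ### Interval labellings -/

section Intervals

variable {r : ℕ} (m : Fin r → ℕ) (β : Fin r → Fin n → ℕ)

/-- The dimension vector `∑ u < N, m_u β_u` of the first `N` factors of the product. -/
def prefixDim (N : ℕ) (i : Fin n) : ℕ := ∑ u : Fin r with u.val < N, m u * β u i

/-- The interval `Y_{i,u,v}` of positions at the vertex `i`. -/
def blockInterval (i : Fin n) (u : Fin r) (v : ℕ) : Finset ℕ :=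
  Finset.Ico (prefixDim m β u i + v * β u i) (prefixDim m β u i + v * β u i + β u i)

/-- The pairs `(u, v)` indexing the variables `t_{u,v}` of the first `N` factors. -/
def labels (N : ℕ) : Finset (Fin r × ℕ) :=
  (Finset.univ.filter fun u : Fin r => u.val < N).biUnion fun u => {u} ×ˢ Finset.range (m u)

/-- The labelling `vmap` sends all positions of `Y_{i,u,v}` to `(u, v)`, so that `rename vmap` is
the restriction `ι*_m`. -/
def IsIntervalLabelling (vmap : Fin n × ℕ → Fin r × ℕ) : Prop :=
  ∀ (i : Fin n) (u : Fin r) (v : ℕ), v < m u → ∀ k ∈ blockInterval m β i u v, vmap (i, k) = (u, v)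

variable {m β}

lemma mem_labels {N : ℕ} {c : Fin r × ℕ} : c ∈ labels m N ↔ c.1.val < N ∧ c.2 < m c.1 := by
  obtain ⟨u, v⟩ := c
  simp [labels]

lemma filter_val_lt_succ (k : Fin r) :
    (Finset.univ.filter fun u : Fin r => u.val < k.val + 1) =
      insert k (Finset.univ.filter fun u : Fin r => u.val < k.val) := by
  ext u
  simp only [Finset.mem_filter, Finset.mem_univ, true_and, Finset.mem_insert, Fin.ext_iff]
  omega

lemma prefixDim_zero : prefixDim m β 0 = 0 := by
  ext
  simp [prefixDim]

lemma prefixDim_succ (k : Fin r) :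
    prefixDim m β (k.val + 1) = prefixDim m β k + fun i => m k * β k i := by
  ext i
  rw [Pi.add_apply, prefixDim, filter_val_lt_succ, Finset.sum_insert (by simp), add_comm]
  rfl

lemma prefixDim_mono (i : Fin n) : Monotone fun N => prefixDim m β N i := fun N M h =>
  Finset.sum_le_sum_of_subset fun u => by
    simp only [Finset.mem_filter, Finset.mem_univ, true_and]
    omega

lemma card_blockInterval (i : Fin n) (u : Fin r) (v : ℕ) :
    (blockInterval m β i u v).card = β u i := by
  simp [blockInterval]

lemma blockInterval_subset_range {N : ℕ} {c : Fin r × ℕ} (hc : c ∈ labels m N) (i : Fin n) :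
    blockInterval m β i c.1 c.2 ⊆ Finset.range (prefixDim m β N i) := fun p hp => by
  obtain ⟨hu, hv⟩ := mem_labels.1 hc
  have succ_le : prefixDim m β (c.1.val + 1) i ≤ prefixDim m β N i := prefixDim_mono i hu
  have mul_le : (c.2 + 1) * β c.1 i ≤ m c.1 * β c.1 i := Nat.mul_le_mul_right _ hv
  rw [prefixDim_succ, Pi.add_apply] at succ_le
  rw [add_one_mul] at mul_le
  exact Finset.mem_range.2 (by linarith [(Finset.mem_Ico.1 hp).2])

lemma exists_mem_blockInterval {i : Fin n} {p N : ℕ} (hN : N ≤ r) (hp : p < prefixDim m β N i) :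
    ∃ c ∈ labels m N, p ∈ blockInterval m β i c.1 c.2 := by
  induction N with
  | zero => simp [prefixDim_zero] at hp
  | succ N ih =>
    by_cases hlt : p < prefixDim m β N i
    · obtain ⟨c, hc, hpc⟩ := ih (by omega) hlt
      obtain ⟨hu, hv⟩ := mem_labels.1 hc
      exact ⟨c, mem_labels.2 ⟨by omega, hv⟩, hpc⟩
    · obtain ⟨k, rfl⟩ : ∃ k : Fin r, k.val = N := ⟨⟨N, hN⟩, rfl⟩
      have offset_lt : p - prefixDim m β k i < m k * β k i := by
        have succ : prefixDim m β (k.val + 1) i = prefixDim m β k i + m k * β k i :=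
          congrFun (prefixDim_succ k) i
        omega
      have pos : 0 < β k i := Nat.pos_of_mul_pos_left (Nat.zero_lt_of_lt offset_lt)
      refine ⟨(k, (p - prefixDim m β k i) / β k i), mem_labels.2 ⟨Nat.lt_succ_self _,
        (Nat.div_lt_iff_lt_mul pos).2 offset_lt⟩, Finset.mem_Ico.2 ?_⟩
      have := Nat.div_mul_le_self (p - prefixDim m β k i) (β k i)
      have := Nat.lt_div_mul_add (a := p - prefixDim m β k i) pos
      dsimp only
      omega

namespace IsIntervalLabelling

variable {vmap : Fin n × ℕ → Fin r × ℕ} (h : IsIntervalLabelling m β vmap)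
include h

lemma vmap_eq {i : Fin n} {N p : ℕ} {c : Fin r × ℕ} (hc : c ∈ labels m N)
    (hp : p ∈ blockInterval m β i c.1 c.2) : vmap (i, p) = c :=
  h i c.1 c.2 (mem_labels.1 hc).2 p hp

lemma vmap_mem_labels {i : Fin n} {p N : ℕ} (hN : N ≤ r) (hp : p < prefixDim m β N i) :
    vmap (i, p) ∈ labels m N := by
  obtain ⟨c, hc, hpc⟩ := exists_mem_blockInterval hN hp
  rwa [h.vmap_eq hc hpc]

lemma cluster_eq {N : ℕ} (hN : N ≤ r) {c : Fin r × ℕ} (hc : c ∈ labels m N) (i : Fin n) :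
    cluster (prefixDim m β N) vmap i c = blockInterval m β i c.1 c.2 := by
  ext p
  rw [mem_cluster]
  refine ⟨fun ⟨hp, hpc⟩ => ?_, fun hp =>
    ⟨Finset.mem_range.1 (blockInterval_subset_range hc i hp), h.vmap_eq hc hp⟩⟩
  obtain ⟨c', hc', hpc'⟩ := exists_mem_blockInterval hN hp
  rwa [← hpc, h.vmap_eq hc' hpc']

lemma fst_vmap_lt {i : Fin n} {p : ℕ} {k : Fin r} (hp : p < prefixDim m β k i) :
    (vmap (i, p)).1 < k :=
  (mem_labels.1 (h.vmap_mem_labels k.2.le hp)).1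

lemma fst_vmap_eq {i : Fin n} {p : ℕ} {k : Fin r} (hle : prefixDim m β k i ≤ p)
    (hlt : p < prefixDim m β (k.val + 1) i) : (vmap (i, p)).1 = k := by
  obtain ⟨c, hc, hpc⟩ := exists_mem_blockInterval k.2 hlt
  obtain ⟨hu, hv⟩ := mem_labels.1 hc
  rw [h.vmap_eq hc hpc]
  by_contra hne
  have hcN : c ∈ labels m k.val := mem_labels.2 ⟨by have := Fin.val_ne_of_ne hne; omega, hv⟩
  exact hle.not_gt (Finset.mem_range.1 (blockInterval_subset_range hcN i hpc))

end IsIntervalLabelling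

end Intervals

/-! ### Counting the moved positions -/

namespace IsReinekeOrder

variable {ℓ r : ℕ} {Q : FinQuiver n} {P : SubqPartition Q ℓ} {β : Fin r → Fin n → ℕ}
  {blk : Fin r → Fin ℓ} {k : Fin r} (hR : IsReinekeOrder P β blk) (hDyn : P.Dynkin)
include hR hDyn

lemma eulerForm_le_of_not_eulerClassVanishes {u : Fin r} {K δ : Fin n → ℕ} (huk : u ≤ k)
    (hKδ : ∀ j, K j + δ j = β u j) (hnot : ¬P.innerQuiver.EulerClassVanishes.{u} K δ) :
    P.innerQuiver.eulerForm (fun j => (δ j : ℤ)) (fun j => (β k j : ℤ)) ≤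
      if u = k ∧ K = 0 then 1 else 0 := by
  split_ifs with heq
  · obtain ⟨rfl, rfl⟩ := heq
    have δ_eq : δ = β u := funext fun j => by simpa using hKδ j
    rw [δ_eq, hR.eulerForm_self]
  · by_contra! hpos
    refine hnot (hR.eulerClassVanishes hDyn hKδ ?_ hpos)
    exact huk.lt_or_eq.imp_right fun huk' => ⟨huk', fun hK => heq ⟨huk', hK⟩⟩

-- Pairing the total of the `δ c` with `β k` gives the number of `c ∈ J` with `u c = k`, while
-- each single pairing is at most `1`, and at most `0` unless `u c = k` and `K c = 0`.
theorem eq_zero_of_forall_not_eulerClassVanishes {ι : Type*} {J : Finset ι} {u : ι → Fin r}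
    {K δ : ι → Fin n → ℕ} (huk : ∀ c ∈ J, u c ≤ k)
    (hKδ : ∀ c ∈ J, ∀ j, K c j + δ c j = β (u c) j)
    (hsum : ∀ j, ∑ c ∈ J, δ c j = (J.filter (u · = k)).card * β k j)
    (hnot : ∀ c ∈ J, ¬P.innerQuiver.EulerClassVanishes.{u} (K c) (δ c)) :
    ∀ c ∈ J, u c = k → K c = 0 := by
  have total : ∑ c ∈ J, P.innerQuiver.eulerForm (fun j => (δ c j : ℤ)) (fun j => (β k j : ℤ)) =
      (J.filter (u · = k)).card := by
    have vector_sum : ∑ c ∈ J, (fun j => (δ c j : ℤ)) =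
        ((J.filter (u · = k)).card : ℤ) • fun j => (β k j : ℤ) := by
      ext j
      simpa using congrArg (Nat.cast (R := ℤ)) (hsum j)
    rw [← LinearMap.sum_apply, ← map_sum, vector_sum, map_smul, LinearMap.smul_apply,
      hR.eulerForm_self, smul_eq_mul, mul_one]
  have card_le : (J.filter (u · = k)).card ≤ (J.filter fun c => u c = k ∧ K c = 0).card := by
    have := total.symm.trans_le (Finset.sum_le_sum fun c hc =>
      hR.eulerForm_le_of_not_eulerClassVanishes hDyn (huk c hc) (hKδ c hc) (hnot c hc))
    rw [Finset.sum_boole] at this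
    exact_mod_cast this
  have filter_eq := Finset.eq_of_subset_of_card_le
    (Finset.monotone_filter_right J fun _ _ => And.left) card_le
  intro c hc hck
  have hmem : c ∈ J.filter fun c => u c = k ∧ K c = 0 :=
    filter_eq.symm ▸ Finset.mem_filter.2 ⟨hc, hck⟩
  exact (Finset.mem_filter.1 hmem).2.2

end IsReinekeOrder

section ShuffleOfLabelling

variable {r : ℕ} {β : Fin r → Fin n → ℕ} {m : Fin r → ℕ} {vmap : Fin n × ℕ → Fin r × ℕ}
  {k : Fin r} {S : Fin n → Finset ℕ}

lemma card_filter_labels (m : Fin r → ℕ) (k : Fin r) :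
    ((labels m (k.val + 1)).filter (·.1 = k)).card = m k := by
  have filter_eq : (labels m (k.val + 1)).filter (·.1 = k) = {k} ×ˢ Finset.range (m k) := by
    ext ⟨u, v⟩
    simp only [Finset.mem_filter, mem_labels, Finset.mem_product, Finset.mem_singleton,
      Finset.mem_range]
    constructor
    · rintro ⟨⟨-, hv⟩, rfl⟩
      exact ⟨rfl, hv⟩
    · rintro ⟨rfl, hv⟩
      exact ⟨⟨Nat.lt_succ_self _, hv⟩, rfl⟩
  rw [filter_eq, Finset.card_product, Finset.card_singleton, Finset.card_range, one_mul]

namespace IsIntervalLabelling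

variable (h : IsIntervalLabelling m β vmap)
  (hS : S ∈ shuffles (prefixDim m β k) fun i => m k * β k i)
include h hS

lemma clusterDim_add_clusterDim {c : Fin r × ℕ} (hc : c ∈ labels m (k.val + 1)) (i : Fin n) :
    clusterDim (prefixDim m β k + fun i => m k * β k i) vmap S c i +
      clusterDim (prefixDim m β k + fun i => m k * β k i) vmap
        (shuffleCompl (prefixDim m β k) (fun i => m k * β k i) S) c i = β c.1 i := by
  rw [clusterDim_add_clusterDim_shuffleCompl hS, ← prefixDim_succ, h.cluster_eq k.2 hc,
    card_blockInterval]

lemma sum_clusterDim_shuffleCompl (i : Fin n) :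
    ∑ c ∈ labels m (k.val + 1), clusterDim (prefixDim m β k + fun i => m k * β k i) vmap
      (shuffleCompl (prefixDim m β k) (fun i => m k * β k i) S) c i = m k * β k i := by
  rw [sum_clusterDim Finset.sdiff_subset fun p hp => ?_, card_shuffleCompl hS]
  refine h.vmap_mem_labels k.2 (Finset.mem_range.1 ?_)
  rw [prefixDim_succ]
  exact Finset.sdiff_subset hp

lemma eq_initialShuffle
    (hzero : ∀ c ∈ labels m (k.val + 1), c.1 = k →
      clusterDim (prefixDim m β k + fun i => m k * β k i) vmap S c = 0) :
    S = initialShuffle (prefixDim m β k) := by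
  refine funext fun i => Finset.eq_of_subset_of_card_le (fun p hp => ?_)
    (by rw [(mem_shuffles.1 hS i).2, initialShuffle, Finset.card_range])
  have p_lt : p < (prefixDim m β k + fun i => m k * β k i) i :=
    Finset.mem_range.1 ((mem_shuffles.1 hS i).1 hp)
  have p_lt_succ : p < prefixDim m β (k.val + 1) i := by rwa [prefixDim_succ]
  rw [initialShuffle, Finset.mem_range]
  by_contra! hle
  have card_zero := congrFun (hzero _ (h.vmap_mem_labels k.2 p_lt_succ)
    (h.fst_vmap_eq hle p_lt_succ)) i
  exact Finset.notMem_empty p (Finset.card_eq_zero.1 card_zero ▸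
    Finset.mem_inter.2 ⟨hp, mem_cluster.2 ⟨p_lt, rfl⟩⟩)

end IsIntervalLabelling

theorem IsReinekeOrder.exists_eulerClassVanishes_clusterDim {ℓ : ℕ} {Q : FinQuiver n}
    {P : SubqPartition Q ℓ} {blk : Fin r → Fin ℓ} (hR : IsReinekeOrder P β blk)
    (hDyn : P.Dynkin) (h : IsIntervalLabelling m β vmap)
    (hS : S ∈ shuffles (prefixDim m β k) fun i => m k * β k i)
    (hne : S ≠ initialShuffle (prefixDim m β k)) :
    ∃ c, P.innerQuiver.EulerClassVanishes.{u}
      (clusterDim (prefixDim m β k + fun i => m k * β k i) vmap S c)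
      (clusterDim (prefixDim m β k + fun i => m k * β k i) vmap
        (shuffleCompl (prefixDim m β k) (fun i => m k * β k i) S) c) := by
  by_contra! hnot
  refine hne (h.eq_initialShuffle hS (hR.eq_zero_of_forall_not_eulerClassVanishes hDyn
    (fun c hc => Fin.le_def.2 (Nat.lt_succ_iff.1 (mem_labels.1 hc).1))
    (fun c hc => h.clusterDim_add_clusterDim hS hc) (fun i => ?_) fun c _ => hnot c))
  rw [h.sum_clusterDim_shuffleCompl hS, card_filter_labels]

end ShuffleOfLabelling

/-! ### Restriction of iterated products -/

lemma rename_congr_vars {σ τ R : Type*} [CommSemiring R] {g g' : σ → τ} {f : MvPolynomial σ R}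
    (h : ∀ p ∈ f.vars, g p = g' p) : rename g f = rename g' f := by
  rw [rename_eq_aeval, rename_eq_aeval]
  exact eval₂Hom_congr' rfl (fun p hp _ => congrArg X (h p hp)) rfl

section Substitution

variable {C : Type*} {γ₁ γ₂ : Fin n → ℕ} {f : PolyQ n}

lemma rename_substAlong_of_nodal_eq {γ : Fin n → ℕ} (hf : f ∈ Hspace γ) {g g' : Fin n × ℕ → C}
    {T : Fin n → Finset ℕ} (hT : ∀ i, (T i).card = γ i)
    (h : ∀ i, nodal (T i) (fun k => (X (g (i, k)) : MvPolynomial C ℚ)) =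
      nodal (Finset.range (γ i)) fun k => X (g' (i, k))) :
    rename g (substAlong T f) = rename g' f := by
  rw [rename_eq_aeval, rename_eq_aeval, aeval_substAlong]
  exact aeval_eq_of_mem_Hspace hf fun i =>
    (nodal_range_sort (hT i) fun k => X (g (i, k))).trans (h i)

lemma rename_substAlong_initialShuffle (hf : f ∈ Hspace γ₁) (g : Fin n × ℕ → C) :
    rename g (substAlong (initialShuffle γ₁) f) = rename g f :=
  rename_substAlong_of_nodal_eq hf (fun _ => Finset.card_range _) fun _ => rfl

lemma rename_substAlong_shuffleCompl_initialShuffle (hf : f ∈ Hspace γ₂) (g : Fin n × ℕ → C) :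
    rename g (substAlong (shuffleCompl γ₁ γ₂ (initialShuffle γ₁)) f) =
      rename (fun p => g (p.1, γ₁ p.1 + p.2)) f := by
  refine rename_substAlong_of_nodal_eq hf
    (card_shuffleCompl (initialShuffle_mem_shuffles γ₁ γ₂)) fun i => ?_
  rw [shuffleCompl_initialShuffle, nodal, Finset.prod_Ico_eq_prod_range, add_tsub_cancel_left]
  rfl

lemma rename_prod_X_sub_X_ne_zero {ι σ κ : Type*} {s : Finset ι} {A B : ι → Finset κ}
    {x y : ι → κ → σ} (g : σ → C) (h : ∀ a ∈ s, ∀ k ∈ A a, ∀ l ∈ B a, g (x a k) ≠ g (y a l)) :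
    rename g (∏ a ∈ s, ∏ k ∈ A a, ∏ l ∈ B a, (X (x a k) - X (y a l) : MvPolynomial σ ℚ)) ≠ 0 := by
  simp only [map_prod, map_sub, rename_X, Finset.prod_ne_zero_iff, sub_ne_zero]
  exact fun a ha k hk l hl hX => h a ha k hk l hl (X_injective hX)

variable {g : Fin n × ℕ → C}
  (hg : ∀ i j k l, k < γ₁ i → γ₁ j ≤ l → l < γ₁ j + γ₂ j → g (j, l) ≠ g (i, k))
include hg

lemma rename_interactionNum_initialShuffle_ne_zero (Q : FinQuiver n) :
    rename g (interactionNum Q γ₁ γ₂ (initialShuffle γ₁)) ≠ 0 := by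
  refine rename_prod_X_sub_X_ne_zero g fun a _ k hk l hl => ?_
  rw [shuffleCompl_initialShuffle, Finset.mem_Ico] at hk
  exact hg _ _ _ _ (Finset.mem_range.1 hl) hk.1 hk.2

lemma rename_interactionDen_initialShuffle_ne_zero :
    rename g (interactionDen γ₁ γ₂ (initialShuffle γ₁)) ≠ 0 := by
  refine rename_prod_X_sub_X_ne_zero g fun i _ k hk l hl => ?_
  rw [shuffleCompl_initialShuffle, Finset.mem_Ico] at hk
  exact hg _ _ _ _ (Finset.mem_range.1 hl) hk.1 hk.2

end Substitution

section PrefixProduct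

variable {r : ℕ} (Q : FinQuiver n) (γ : Fin r → Fin n → ℕ) (f : Fin r → PolyQ n)

/-- The CoHA product of the first `N` factors `f u ∈ ℋ_{γ u}`, paired with its dimension vector. -/
noncomputable def prefixProd (N : ℕ) : (Fin n → ℕ) × PolyQ n :=
  cohaProd Q ((List.ofFn fun u => (γ u, f u)).take N)

lemma cohaProd_append_singleton {L : List ((Fin n → ℕ) × PolyQ n)} (hL : L ≠ [])
    (y : (Fin n → ℕ) × PolyQ n) : cohaProd Q (L ++ [y]) =
      ((cohaProd Q L).1 + y.1, cohaMul Q (cohaProd Q L).1 y.1 (cohaProd Q L).2 y.2) := by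
  cases L with
  | nil => exact absurd rfl hL
  | cons x xs => simp [cohaProd, List.foldl_append]

lemma take_succ_ofFn {α : Type*} (x : Fin r → α) (k : Fin r) :
    (List.ofFn x).take (k.val + 1) = (List.ofFn x).take k ++ [x k] := by
  rw [List.take_succ_eq_append_getElem (by simp), List.getElem_ofFn]

lemma prefixProd_one (h : 0 < r) : prefixProd Q γ f 1 = (γ ⟨0, h⟩, f ⟨0, h⟩) := by
  rw [prefixProd, take_succ_ofFn _ (⟨0, h⟩ : Fin r)]
  rfl

lemma prefixProd_succ {k : Fin r} (hk : k.val ≠ 0) : prefixProd Q γ f (k.val + 1) =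
    ((prefixProd Q γ f k).1 + γ k,
      cohaMul Q (prefixProd Q γ f k).1 (γ k) (prefixProd Q γ f k).2 (f k)) := by
  rw [prefixProd, take_succ_ofFn, cohaProd_append_singleton]
  · rfl
  · exact fun hnil => hk (by simpa [k.2.ne_zero, k.pos.ne'] using hnil)

lemma prefixProd_eq_cohaProdFin : (prefixProd Q γ f r).2 = cohaProdFin Q γ f := by
  rw [prefixProd, List.take_of_length_le (by simp), cohaProdFin]

lemma prefixProd_fst (m : Fin r → ℕ) (β : Fin r → Fin n → ℕ) {N : ℕ} (hN : N ≠ 0)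
    (hNr : N ≤ r) : (prefixProd Q (fun u v => m u * β u v) f N).1 = prefixDim m β N := by
  induction N, Nat.one_le_iff_ne_zero.2 hN using Nat.le_induction with
  | base =>
    rw [prefixProd_one _ _ _ hNr, prefixDim_succ (⟨0, hNr⟩ : Fin r), prefixDim_zero, zero_add]
  | succ N hpos ih =>
    have hN : N ≠ 0 := Nat.one_le_iff_ne_zero.1 hpos
    rw [prefixProd_succ Q _ f (k := ⟨N, hNr⟩) hN, prefixDim_succ ⟨N, hNr⟩, ih hN (by omega)]

variable {f} {m : Fin r → ℕ} {β : Fin r → Fin n → ℕ}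

lemma prefixProd_snd_mem_Hspace (hf : ∀ u, f u ∈ Hspace fun i => m u * β u i) {N : ℕ} (hN : N ≠ 0)
    (hNr : N ≤ r) : (prefixProd Q (fun u v => m u * β u v) f N).2 ∈ Hspace (prefixDim m β N) := by
  induction N, Nat.one_le_iff_ne_zero.2 hN using Nat.le_induction with
  | base =>
    rw [prefixProd_one _ _ _ hNr, prefixDim_succ (⟨0, hNr⟩ : Fin r), prefixDim_zero, zero_add]
    exact hf _
  | succ N hpos ih =>
    have hN : N ≠ 0 := Nat.one_le_iff_ne_zero.1 hpos
    rw [prefixProd_succ Q _ f (k := ⟨N, hNr⟩) hN, prefixDim_succ ⟨N, hNr⟩,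
      prefixProd_fst Q f m β hN (by omega)]
    exact cohaMul_mem_Hspace (ih hN (by omega)) (hf _)

end PrefixProduct

lemma one_mem_Aspace (β : Fin n → ℕ) (i : Fin n) (m : ℕ) : (1 : PolyQ n) ∈ Aspace β i m := by
  have no_vars (p : Fin n × ℕ) : p ∉ (1 : PolyQ n).vars := by simp
  exact ⟨⟨fun p hp => absurd hp (no_vars p), fun _ _ _ => map_one _⟩,
    fun p hp => absurd hp (no_vars p)⟩

section Restriction

variable {r : ℕ} {β : Fin r → Fin n → ℕ} {m : Fin r → ℕ} {vmap : Fin n × ℕ → Fin r × ℕ}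
  {k : Fin r}

namespace IsIntervalLabelling

variable (h : IsIntervalLabelling m β vmap)
include h

lemma rename_shift_of_mem_Aspace {i : Fin n} (hi : β k i = 1) {f : PolyQ n}
    (hf : f ∈ Aspace (β k) i (m k)) :
    rename (fun p => vmap (p.1, prefixDim m β k p.1 + p.2)) f = rename (fun p => (k, p.2)) f := by
  refine rename_congr_vars fun ⟨j, v⟩ hp => ?_
  obtain rfl : j = i := hf.2 _ hp
  have hv : v < m k * β k j := hf.1.1 _ hp
  rw [hi, mul_one] at hv
  exact h j k v hv _ (by simp [blockInterval, hi])

lemma vmap_ne (i j : Fin n) (p q : ℕ) (hp : p < prefixDim m β k i)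
    (hle : prefixDim m β k j ≤ q) (hlt : q < prefixDim m β k j + m k * β k j) :
    vmap (j, q) ≠ vmap (i, p) := fun heq => by
  have hlt' : q < prefixDim m β (k.val + 1) j := by rwa [prefixDim_succ]
  have := h.fst_vmap_lt hp
  rw [← heq, h.fst_vmap_eq hle hlt'] at this
  exact lt_irrefl k this

lemma rename_prefixProd_one (Q : FinQuiver n) {i : Fin n} (hr : 0 < r)
    (hi : β ⟨0, hr⟩ i = 1) {f : Fin r → PolyQ n}
    (hf : f ⟨0, hr⟩ ∈ Aspace (β ⟨0, hr⟩) i (m ⟨0, hr⟩)) :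
    rename vmap (prefixProd Q (fun u v => m u * β u v) f 1).2 =
      rename (fun p => (⟨0, hr⟩, p.2)) (f ⟨0, hr⟩) := by
  have shift := h.rename_shift_of_mem_Aspace hi hf
  simp only [prefixDim_zero, Pi.zero_apply, zero_add, Prod.mk.eta] at shift
  rw [← shift, prefixProd_one]

end IsIntervalLabelling

variable {ℓ : ℕ} {Q : FinQuiver n} {P : SubqPartition Q ℓ} {blk : Fin r → Fin ℓ}
  (hR : IsReinekeOrder P β blk) (hDyn : P.Dynkin) (h : IsIntervalLabelling m β vmap)
include hR hDyn h

theorem rename_cohaMul_mul_rename_interactionDen {i : Fin n} (hi : β k i = 1) {F f : PolyQ n}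
    (hF : F ∈ Hspace (prefixDim m β k)) (hf : f ∈ Aspace (β k) i (m k)) :
    rename vmap (cohaMul Q (prefixDim m β k) (fun i => m k * β k i) F f) *
        rename vmap (interactionDen (prefixDim m β k) (fun i => m k * β k i)
          (initialShuffle (prefixDim m β k))) =
      rename vmap F * rename (fun p => (k, p.2)) f *
        rename vmap (interactionNum Q (prefixDim m β k) (fun i => m k * β k i)
          (initialShuffle (prefixDim m β k))) := by
  rw [rename_cohaMul_mul_interactionDen hF hf.1 (fun i p q hp hle hlt =>
      (h.vmap_ne i i p q hp hle hlt).symm)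
      fun S hS hne => hR.exists_eulerClassVanishes_clusterDim hDyn h hS hne,
    rename_substAlong_initialShuffle hF, rename_substAlong_shuffleCompl_initialShuffle hf.1,
    h.rename_shift_of_mem_Aspace hi hf]

theorem exists_rename_prefixProd_mul_eq {iv : Fin r → Fin n} (hiv : ∀ u, β u (iv u) = 1) {N : ℕ}
    (hN : N ≠ 0) (hNr : N ≤ r) : ∃ D E : MvPolynomial (Fin r × ℕ) ℚ, D ≠ 0 ∧ E ≠ 0 ∧
      ∀ f : Fin r → PolyQ n, (∀ u, f u ∈ Aspace (β u) (iv u) (m u)) →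
        rename vmap (prefixProd Q (fun u v => m u * β u v) f N).2 * D =
          (∏ u : Fin r with u.val < N, rename (fun p => (u, p.2)) (f u)) * E := by
  induction N, Nat.one_le_iff_ne_zero.2 hN using Nat.le_induction with
  | base =>
    refine ⟨1, 1, one_ne_zero, one_ne_zero, fun f hf => ?_⟩
    rw [h.rename_prefixProd_one Q hNr (hiv _) (hf _), filter_val_lt_succ (⟨0, hNr⟩ : Fin r)]
    simp
  | succ N hpos ih =>
    have hN : N ≠ 0 := Nat.one_le_iff_ne_zero.1 hpos
    obtain ⟨k, rfl⟩ : ∃ k : Fin r, k.val = N := ⟨⟨N, hNr⟩, rfl⟩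
    obtain ⟨D, E, hD, hE, ih⟩ := ih hN k.2.le
    refine ⟨D * _, E * _,
      mul_ne_zero hD (rename_interactionDen_initialShuffle_ne_zero (h.vmap_ne (k := k))),
      mul_ne_zero hE (rename_interactionNum_initialShuffle_ne_zero (h.vmap_ne (k := k)) Q),
      fun f hf => ?_⟩
    have step := rename_cohaMul_mul_rename_interactionDen hR hDyn h (hiv k)
      (prefixProd_snd_mem_Hspace Q (fun u => (hf u).1) hN k.2.le) (hf k)
    rw [prefixProd_succ Q _ f hN, prefixProd_fst Q f m β hN k.2.le, filter_val_lt_succ k,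
      Finset.prod_insert (by simp)]
    linear_combination D * step + rename (fun p => (k, p.2)) (f k) *
      rename vmap (interactionNum Q (prefixDim m β k) (fun i => m k * β k i)
        (initialShuffle (prefixDim m β k))) * ih f hf

end Restriction

theorem restriction_of_coha_product_general {ℓ r : ℕ} {Q : FinQuiver n} {P : SubqPartition Q ℓ}
    (hDyn : P.Dynkin) {β : Fin r → Fin n → ℕ} {blk : Fin r → Fin ℓ} (hR : IsReinekeOrder P β blk)
    {iv : Fin r → Fin n} (hiv : ∀ u, β u (iv u) = 1) {m : Fin r → ℕ}
    {vmap : Fin n × ℕ → Fin r × ℕ} (hvmap : IsIntervalLabelling m β vmap) :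
    rename vmap (cohaProdFin Q (fun u v => m u * β u v) (fun _ => 1)) ≠ 0 ∧
    ∀ f : Fin r → PolyQ n, (∀ u, f u ∈ Aspace (β u) (iv u) (m u)) →
      rename vmap (cohaProdFin Q (fun u v => m u * β u v) f) =
        (∏ u : Fin r, rename (fun p : Fin n × ℕ => (u, p.2)) (f u)) *
          rename vmap (cohaProdFin Q (fun u v => m u * β u v) (fun _ => 1)) := by
  obtain _ | N := r
  · simp [cohaProdFin, cohaProd]
  obtain ⟨D, E, hD, hE, hprod⟩ :=
    exists_rename_prefixProd_mul_eq hR hDyn hvmap hiv N.succ_ne_zero le_rfl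
  simp only [prefixProd_eq_cohaProdFin, Fin.is_lt, Finset.filter_true] at hprod
  have unit_mul : rename vmap (cohaProdFin Q (fun u v => m u * β u v) fun _ => 1) * D = E := by
    simpa using hprod (fun _ => 1) fun u => one_mem_Aspace _ _ _
  refine ⟨left_ne_zero_of_mul (unit_mul ▸ hE), fun f hf => mul_right_cancel₀ hD ?_⟩
  rw [hprod f hf, mul_assoc, unit_mul]

/-- With `𝒬•` an admissible, ordered, Dynkin subquiver partition of
the acyclic quiver `Q`, `β` a Reineke order with chosen vertices `iv u`
(`β u (iv u) = 1`), and `m` a `𝒬•`-partition of `γ`, let `ι*_m` be the substitution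
`ω_{i,k} ↦ t_{u,v}` for `k ∈ Y_{i,u,v}`, where the `Y_{i,u,v}` are the consecutive
intervals of sizes `β_u(i)` listed in lexicographic `(u,v)` order.  Then
`g_m := ι*_m(1 * ⋯ * 1)` is a nonzero polynomial in the `t_{u,v}`, independent of the
`f_u`, and for all `f_u ∈ 𝒜_{β_u,m_u}`,
`ι*_m(f₁ * ⋯ * f_r) = f₁(t_{1,•}) ⋯ f_r(t_{r,•}) · g_m`. -/
theorem restriction_of_coha_product {n ℓ r : ℕ} (Q : FinQuiver n) (hQ : Q.Acyclic)
    (P : SubqPartition Q ℓ) (hord : P.Ordered) (hDyn : P.Dynkin)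
    (β : Fin r → Fin n → ℕ) (blk : Fin r → Fin ℓ) (hR : IsReinekeOrder P β blk)
    (iv : Fin r → Fin n) (hiv : ∀ u, β u (iv u) = 1)
    (γ : Fin n → ℕ) (m : Fin r → ℕ) (hm : (fun v => ∑ u, m u * β u v) = γ)
    (vmap : Fin n × ℕ → Fin r × ℕ)
    (hvmap : ∀ (i : Fin n) (u : Fin r) (v : ℕ), v < m u →
      ∀ k ∈ Finset.Ico ((∑ u' ∈ Finset.univ.filter (· < u), m u' * β u' i) + v * β u i)
          ((∑ u' ∈ Finset.univ.filter (· < u), m u' * β u' i) + v * β u i + β u i),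
        vmap (i, k) = (u, v)) :
    rename vmap (cohaProdFin Q (fun u v => m u * β u v) (fun _ => 1)) ≠ 0 ∧
    ∀ f : Fin r → PolyQ n, (∀ u, f u ∈ Aspace (β u) (iv u) (m u)) →
      rename vmap (cohaProdFin Q (fun u v => m u * β u v) f) =
        (∏ u : Fin r, rename (fun p : Fin n × ℕ => (u, p.2)) (f u)) *
          rename vmap (cohaProdFin Q (fun u v => m u * β u v) (fun _ => 1)) :=
  restriction_of_coha_product_general hDyn hR hiv hvmap
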